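/- Fix d ∈ ℕ and m_1, …, m_d ∈ ℕ. Let (F⃗_n) be a sequence of random vectors F⃗_n = (P_{n,1}(N^{(n)}), …, P_{n,d}(N^{(n)})), N^{(n)} ~ γ_{K_n}, where each P_{n,i} has total degree at most m_i. For each i write P_{n,i} = Q_{n,i} + R_{n,i} with Q_{n,i} in the degree-m_i Hermite span and deg R_{n,i} ≤ m_i − 1, and set J_{m_i} F_{n,i} := Q_{n,i}(N^{(n)}). Assume: (i) the laws of (J_{m_1} F_{n,1}, …, J_{m_d} F_{n,d}) converge weakly to N(0, I_d); (ii) sup_n E[‖F⃗_n‖²] < ∞. Then for every q ≥ 1 there exist N ∈ ℕ and C > 0 such that E[ (det Γ(F⃗_n))^{−q} ] ≤ C for all n ≥ N, where Γ(F⃗_n)_{ij} := Σ_{k=1}^{K_n} ∂_k P_{n,i}(N^{(n)}) ∂_k P_{n,j}(N^{(n)}). -/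

import Mathlib

open MeasureTheory ProbabilityTheory MvPolynomial Filter Topology

noncomputable def gaussPi (ι : Type) [Fintype ι] : Measure (ι → ℝ) :=
  Measure.pi fun _ => gaussianReal 0 1

noncomputable def hermiteProd {K : ℕ} (k : Fin K → ℕ) : MvPolynomial (Fin K) ℝ :=
  ∏ i, Polynomial.aeval (MvPolynomial.X i) (Polynomial.hermite (k i))

noncomputable def chaos (K m : ℕ) : Submodule ℝ (MvPolynomial (Fin K) ℝ) :=
  Submodule.span ℝ {P | ∃ k : Fin K → ℕ, ∑ i, k i = m ∧ P = hermiteProd k}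

noncomputable def sqField {ι : Type} [Fintype ι] (P : MvPolynomial ι ℝ) (x : ι → ℝ) : ℝ :=
  ∑ i, (eval x (pderiv i P)) ^ 2

def TendstoInLaw {E : Type} [MeasurableSpace E] [TopologicalSpace E]
    (μs : ℕ → Measure E) (μ : Measure E) : Prop :=
  ∀ f : BoundedContinuousFunction E ℝ,
    Tendsto (fun n => ∫ x, f x ∂μs n) atTop (𝓝 (∫ x, f x ∂μ))

/-- The Malliavin matrix of a vector of polynomial functionals. -/
noncomputable def malMatrix {K d : ℕ} (P : Fin d → MvPolynomial (Fin K) ℝ) (x : Fin K → ℝ) :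
    Matrix (Fin d) (Fin d) ℝ :=
  Matrix.of fun i j => ∑ k, eval x (pderiv k (P i)) * eval x (pderiv k (P j))

set_option linter.all false



section part1
variable {σ : Type} [Fintype σ]

instance gaussPi_isProb : IsProbabilityMeasure (gaussPi σ) := by
  unfold gaussPi; infer_instance

lemma integrable_pow_gauss (n : ℕ) : Integrable (fun x : ℝ => x ^ n) (gaussianReal 0 1) := by
  have h := memLp_id_gaussianReal (μ := 0) (v := 1) (n : NNReal)
  have := h.integrable_norm_pow' 
  simp only [id] at this
  have h2 : Integrable (fun x : ℝ => ‖x ^ n‖) (gaussianReal 0 1) := by simpa [norm_pow] using this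
  exact (integrable_norm_iff (by fun_prop)).1 h2

lemma hasDerivAt_gaussPDF (x : ℝ) :
    HasDerivAt (gaussianPDFReal 0 1) (-x * gaussianPDFReal 0 1 x) x := by
  have : gaussianPDFReal 0 1 = fun x : ℝ => (√(2 * Real.pi * (1:NNReal)))⁻¹ * Real.exp (-(x - 0) ^ 2 / (2 * (1:NNReal))) := rfl
  rw [this]
  have h : HasDerivAt (fun x : ℝ => -(x - 0) ^ 2 / (2 * ((1:NNReal):ℝ))) (-x) x := by
    have := (((hasDerivAt_id x).sub_const 0).pow 2).neg.div_const (2 * ((1:NNReal):ℝ))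
    refine this.congr_deriv ?_
    simp; ring
  have h2 := (h.exp).const_mul ((√(2 * Real.pi * (1:NNReal)))⁻¹)
  refine h2.congr_deriv ?_
  ring

lemma integrable_pow_mul_pdf (n : ℕ) : Integrable (fun x : ℝ => x ^ n * gaussianPDFReal 0 1 x) := by
  have h := integrable_pow_gauss n
  rw [gaussianReal_of_var_ne_zero 0 one_ne_zero] at h
  rw [integrable_withDensity_iff_integrable_smul' (by fun_prop) (by simp [gaussianPDF])] at h
  refine h.congr (ae_of_all _ fun x => ?_)
  simp [gaussianPDF, ENNReal.toReal_ofReal (gaussianPDFReal_nonneg 0 1 x), mul_comm]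

noncomputable def mom (n : ℕ) : ℝ := ∫ x, x ^ n ∂gaussianReal 0 1

lemma mom_eq (n : ℕ) : mom n = ∫ x : ℝ, x ^ n * gaussianPDFReal 0 1 x := by
  unfold mom
  rw [integral_gaussianReal_eq_integral_smul one_ne_zero]
  simp [mul_comm]

lemma mom_succ (n : ℕ) : mom (n + 1) = n * mom (n - 1) := by
  rw [mom_eq, mom_eq]
  have h := integral_mul_deriv_eq_deriv_mul_of_integrable
    (u := fun x : ℝ => x ^ n) (u' := fun x => n * x ^ (n - 1))
    (v := gaussianPDFReal 0 1) (v' := fun x => -x * gaussianPDFReal 0 1 x)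
    (fun x _ => hasDerivAt_pow n x) (fun x _ => hasDerivAt_gaussPDF x)
    (by
      refine (integrable_pow_mul_pdf (n + 1)).neg.congr (ae_of_all _ fun x => ?_)
      simp; ring)
    (by
      refine ((integrable_pow_mul_pdf (n - 1)).const_mul (n:ℝ)).congr (ae_of_all _ fun x => ?_)
      simp; ring)
    (integrable_pow_mul_pdf n)
  rw [← integral_const_mul]
  have e1 : (fun x : ℝ => x ^ n * (-x * gaussianPDFReal 0 1 x)) = fun x => -(x ^ (n + 1) * gaussianPDFReal 0 1 x) := by
    ext x; ring
  rw [e1, integral_neg, neg_inj] at h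
  rw [h]
  congr 1; ext x; ring

lemma mom_zero : mom 0 = 1 := by simp [mom]

lemma eval_monomial' (s : σ →₀ ℕ) (a : ℝ) (x : σ → ℝ) :
    eval x (monomial s a) = a * ∏ i, x i ^ s i := by
  rw [eval_monomial, Finsupp.prod_fintype]; simp

lemma integrable_mono (s : σ →₀ ℕ) (a : ℝ) :
    Integrable (fun x => eval x (monomial s a)) (gaussPi σ) := by
  simp_rw [eval_monomial']
  exact (Integrable.fintype_prod (fun i => integrable_pow_gauss (s i))).const_mul a

lemma integrable_poly (p : MvPolynomial σ ℝ) : Integrable (fun x => eval x p) (gaussPi σ) := by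
  induction p using MvPolynomial.induction_on' with
  | monomial s a => exact integrable_mono s a
  | add p q hp hq =>
    have := hp.add hq
    refine this.congr (ae_of_all _ fun x => ?_)
    simp

noncomputable def gE (p : MvPolynomial σ ℝ) : ℝ := ∫ x, eval x p ∂gaussPi σ

lemma gE_add (p q : MvPolynomial σ ℝ) : gE (p + q) = gE p + gE q := by
  simp only [gE, map_add]; exact integral_add (integrable_poly p) (integrable_poly q)

lemma gE_smul (a : ℝ) (p : MvPolynomial σ ℝ) : gE (C a * p) = a * gE p := by
  simp only [gE, map_mul, eval_C]; exact integral_const_mul _ _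

lemma gE_C (a : ℝ) : gE (C a : MvPolynomial σ ℝ) = a := by simp [gE]
lemma gE_zero : gE (0 : MvPolynomial σ ℝ) = 0 := by simp [gE]
lemma gE_one : gE (1 : MvPolynomial σ ℝ) = 1 := by simp [gE]

lemma gE_neg (p : MvPolynomial σ ℝ) : gE (-p) = - gE p := by
  simp only [gE, map_neg]; exact integral_neg _

lemma gE_sub (p q : MvPolynomial σ ℝ) : gE (p - q) = gE p - gE q := by
  rw [sub_eq_add_neg, gE_add, gE_neg]; ring

lemma gE_sum {α : Type*} (s : Finset α) (f : α → MvPolynomial σ ℝ) :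
    gE (∑ a ∈ s, f a) = ∑ a ∈ s, gE (f a) := by
  classical
  induction s using Finset.induction_on with
  | empty => simp [gE_zero]
  | insert a s h ih => simp [Finset.sum_insert h, gE_add, ih]

lemma gE_mono {p q : MvPolynomial σ ℝ} (h : ∀ x, eval x p ≤ eval x q) : gE p ≤ gE q :=
  integral_mono (integrable_poly p) (integrable_poly q) h

lemma gE_nonneg {p : MvPolynomial σ ℝ} (h : ∀ x, 0 ≤ eval x p) : 0 ≤ gE p :=
  integral_nonneg h

lemma gE_sq_nonneg (p : MvPolynomial σ ℝ) : 0 ≤ gE (p ^ 2) :=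
  gE_nonneg fun x => by simp; positivity

lemma gE_monomial (s : σ →₀ ℕ) (a : ℝ) : gE (monomial s a) = a * ∏ i, mom (s i) := by
  simp only [gE, eval_monomial']
  rw [integral_const_mul]
  unfold gaussPi
  rw [integral_fintype_prod_eq_prod (f := fun i (x:ℝ) => x ^ s i)]
  rfl

lemma gE_ibp (k : σ) (p : MvPolynomial σ ℝ) : gE (X k * p) = gE (pderiv k p) := by
  classical
  induction p using MvPolynomial.induction_on' with
  | add p q hp hq => rw [mul_add, gE_add, hp, hq, map_add, gE_add]
  | monomial s a =>
    have hX : (X k : MvPolynomial σ ℝ) * monomial s a = monomial (Finsupp.single k 1 + s) a := by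
      rw [X, monomial_mul, one_mul]
    rw [hX, pderiv_monomial, gE_monomial, gE_monomial]
    rw [← Finset.mul_prod_erase _ _ (Finset.mem_univ k), ← Finset.mul_prod_erase _ _ (Finset.mem_univ k)]
    have e : ∏ x ∈ Finset.univ.erase k, mom ((Finsupp.single k 1 + s : σ →₀ ℕ) x) = ∏ x ∈ Finset.univ.erase k, mom ((s - Finsupp.single k 1 : σ →₀ ℕ) x) := by
      refine Finset.prod_congr rfl fun x hx => ?_
      have : x ≠ k := Finset.ne_of_mem_erase hx
      simp [Finsupp.single_apply, this.symm]
    rw [e]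
    have : mom ((Finsupp.single k 1 + s : σ →₀ ℕ) k) = s k * mom ((s - Finsupp.single k 1 : σ →₀ ℕ) k) := by
      simp [add_comm 1, mom_succ]
    rw [this]; ring

noncomputable def gam (p q : MvPolynomial σ ℝ) : MvPolynomial σ ℝ := ∑ k, pderiv k p * pderiv k q
noncomputable def Lop (p : MvPolynomial σ ℝ) : MvPolynomial σ ℝ :=
  ∑ k, (pderiv k (pderiv k p) - X k * pderiv k p)

lemma gam_comm (p q : MvPolynomial σ ℝ) : gam p q = gam q p := by simp [gam, mul_comm]

lemma gE_mul_Lop (p q : MvPolynomial σ ℝ) : gE (p * Lop q) = - gE (gam p q) := by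
  simp only [Lop, gam, Finset.mul_sum, gE_sum, ← Finset.sum_neg_distrib]
  refine Finset.sum_congr rfl fun k _ => ?_
  have : p * (pderiv k (pderiv k q) - X k * pderiv k q)
    = (pderiv k (p * pderiv k q) - X k * (p * pderiv k q)) - pderiv k p * pderiv k q := by
    rw [Derivation.leibniz]; simp only [smul_eq_mul]; ring
  rw [this, gE_sub, gE_sub, gE_ibp]; ring

lemma Lop_mul (p q : MvPolynomial σ ℝ) : Lop (p * q) = p * Lop q + q * Lop p + 2 * gam p q := by
  simp only [Lop, gam, Finset.mul_sum, ← Finset.sum_add_distrib]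
  refine Finset.sum_congr rfl fun k _ => ?_
  simp only [Derivation.leibniz, smul_eq_mul, map_add]; ring

lemma Lop_add (p q : MvPolynomial σ ℝ) : Lop (p + q) = Lop p + Lop q := by
  simp only [Lop, ← Finset.sum_add_distrib]
  refine Finset.sum_congr rfl fun k _ => ?_
  simp only [map_add]; ring

lemma Lop_smul (a : ℝ) (p : MvPolynomial σ ℝ) : Lop (C a * p) = C a * Lop p := by
  simp only [Lop, Finset.mul_sum]
  refine Finset.sum_congr rfl fun k _ => ?_
  simp only [Derivation.leibniz, smul_eq_mul, pderiv_C, mul_zero, add_zero]; ring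

lemma Lop_C (a : ℝ) : Lop (C a : MvPolynomial σ ℝ) = 0 := by simp [Lop]
lemma Lop_zero : Lop (0 : MvPolynomial σ ℝ) = 0 := by simp [Lop]

lemma Lop_neg (p : MvPolynomial σ ℝ) : Lop (-p) = - Lop p := by
  have := Lop_smul (-1) p; simpa using this

lemma Lop_sub (p q : MvPolynomial σ ℝ) : Lop (p - q) = Lop p - Lop q := by
  rw [sub_eq_add_neg, Lop_add, Lop_neg]; ring

lemma Lop_sum {α : Type*} (s : Finset α) (f : α → MvPolynomial σ ℝ) :
    Lop (∑ a ∈ s, f a) = ∑ a ∈ s, Lop (f a) := by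
  classical
  induction s using Finset.induction_on with
  | empty => simp [Lop_zero]
  | insert a s h ih => simp [Finset.sum_insert h, Lop_add, ih]

lemma pderiv_comm' (k l : σ) (p : MvPolynomial σ ℝ) :
    pderiv k (pderiv l p) = pderiv l (pderiv k p) := by
  induction p using MvPolynomial.induction_on with
  | C a => simp
  | add p q hp hq => simp [hp, hq]
  | mul_X p i hp =>
    classical
    simp only [Derivation.leibniz, smul_eq_mul, map_add, pderiv_X, Pi.single_apply, hp]
    split_ifs <;> simp <;> ring

lemma pderiv_Lop (k : σ) (p : MvPolynomial σ ℝ) :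
    pderiv k (Lop p) = Lop (pderiv k p) - pderiv k p := by
  classical
  have : pderiv k p = ∑ l, if l = k then pderiv l p else 0 := by simp
  rw [eq_sub_iff_add_eq]
  have e : pderiv k (Lop p) + pderiv k p = pderiv k (Lop p) + ∑ l, if l = k then pderiv l p else 0 := by
    rw [← this]
  rw [e]
  simp only [Lop, map_sum]
  rw [← Finset.sum_add_distrib]
  refine Finset.sum_congr rfl fun l _ => ?_
  simp only [map_sub, Derivation.leibniz, smul_eq_mul, pderiv_X, Pi.single_apply]
  rw [pderiv_comm' k l (pderiv l p), pderiv_comm' k l p]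
  split_ifs with h <;> simp <;> ring
  

lemma gam_add_left (p q r : MvPolynomial σ ℝ) : gam (p + q) r = gam p r + gam q r := by
  simp [gam, add_mul, Finset.sum_add_distrib]
lemma gam_smul_left (a : ℝ) (p r : MvPolynomial σ ℝ) : gam (C a * p) r = C a * gam p r := by
  simp [gam, Finset.mul_sum, Derivation.leibniz, mul_assoc]
lemma gam_sum_left {α : Type*} (s : Finset α) (f : α → MvPolynomial σ ℝ) (r : MvPolynomial σ ℝ) :
    gam (∑ a ∈ s, f a) r = ∑ a ∈ s, gam (f a) r := by
  simp only [gam, map_sum, Finset.sum_mul]; rw [Finset.sum_comm]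
lemma gam_sum_right {α : Type*} (s : Finset α) (f : α → MvPolynomial σ ℝ) (r : MvPolynomial σ ℝ) :
    gam r (∑ a ∈ s, f a) = ∑ a ∈ s, gam r (f a) := by
  rw [gam_comm, gam_sum_left]; simp [gam_comm]
lemma gam_sub_C (p : MvPolynomial σ ℝ) (a : ℝ) (r) : gam (p - C a) r = gam p r := by
  simp [gam]
lemma gam_mul_left (p q r : MvPolynomial σ ℝ) : gam (p * q) r = p * gam q r + q * gam p r := by
  simp only [gam, Finset.mul_sum, ← Finset.sum_add_distrib]
  refine Finset.sum_congr rfl fun k _ => ?_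
  simp only [Derivation.leibniz, smul_eq_mul]; ring

end part1


section part2
variable {σ : Type} [Fintype σ]

lemma deg_ind {τ : Type} {m : ℕ} {P : MvPolynomial τ ℝ → Prop} (h0 : P 0)
    (hadd : ∀ p q, P p → P q → P (p + q))
    (hmon : ∀ (s : τ →₀ ℕ) (a : ℝ), (s.sum fun _ e => e) ≤ m → P (monomial s a))
    (p : MvPolynomial τ ℝ) (hp : p.totalDegree ≤ m) : P p := by
  classical
  rw [p.as_sum]
  have : ∀ t : Finset (τ →₀ ℕ), t ⊆ p.support → P (∑ v ∈ t, monomial v (coeff v p)) := by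
    intro t
    induction t using Finset.induction_on with
    | empty => intro _; simpa using h0
    | insert a t h ih =>
      intro hs
      rw [Finset.sum_insert h]
      refine hadd _ _ (hmon _ _ ?_) (ih fun x hx => hs (Finset.mem_insert_of_mem hx))
      exact (le_totalDegree (hs (Finset.mem_insert_self a t))).trans hp
  exact this _ (Finset.Subset.refl _)

lemma td_add {τ : Type} {m : ℕ} {p q : MvPolynomial τ ℝ} (hp : p.totalDegree ≤ m) (hq : q.totalDegree ≤ m) :
    (p + q).totalDegree ≤ m := (totalDegree_add p q).trans (max_le hp hq)
lemma td_neg {τ : Type} {m : ℕ} {p : MvPolynomial τ ℝ} (hp : p.totalDegree ≤ m) :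
    (-p).totalDegree ≤ m := by rwa [totalDegree_neg]
lemma td_sub {τ : Type} {m : ℕ} {p q : MvPolynomial τ ℝ} (hp : p.totalDegree ≤ m) (hq : q.totalDegree ≤ m) :
    (p - q).totalDegree ≤ m := by rw [sub_eq_add_neg]; exact td_add hp (td_neg hq)
lemma td_smul {τ : Type} {m : ℕ} {p : MvPolynomial τ ℝ} (a : ℝ) (hp : p.totalDegree ≤ m) :
    (C a * p).totalDegree ≤ m := by
  rw [← smul_eq_C_mul]; exact (totalDegree_smul_le a p).trans hp
lemma td_mul {τ : Type} {m n : ℕ} {p q : MvPolynomial τ ℝ} (hp : p.totalDegree ≤ m) (hq : q.totalDegree ≤ n) :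
    (p * q).totalDegree ≤ m + n := (totalDegree_mul p q).trans (add_le_add hp hq)
lemma td_sum {τ α : Type} {m : ℕ} (s : Finset α) {f : α → MvPolynomial τ ℝ} (h : ∀ a ∈ s, (f a).totalDegree ≤ m) :
    (∑ a ∈ s, f a).totalDegree ≤ m := totalDegree_finsetSum_le h
lemma td_C {τ : Type} {m : ℕ} (a : ℝ) : (C a : MvPolynomial τ ℝ).totalDegree ≤ m := by simp

lemma td_mono {τ : Type} (s : τ →₀ ℕ) (c : ℝ) :
    (monomial s c : MvPolynomial τ ℝ).totalDegree ≤ s.sum fun _ e => e := totalDegree_monomial_le s c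

lemma sum_sub_single {τ : Type} (s : τ →₀ ℕ) (k : τ) (hk : s k ≠ 0) :
    ((s - Finsupp.single k 1).sum fun _ e => e) + 1 = s.sum fun _ e => e := by
  have h : s = (s - Finsupp.single k 1) + Finsupp.single k 1 := by
    rw [tsub_add_cancel_of_le]
    rw [Finsupp.single_le_iff]; omega
  conv_rhs => rw [h]
  rw [Finsupp.sum_add_index' (by simp) (by simp)]
  simp

lemma td_pderiv {τ : Type} {m : ℕ} {p : MvPolynomial τ ℝ} (k : τ) (hp : p.totalDegree ≤ m) :
    (pderiv k p).totalDegree ≤ m - 1 := by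
  refine deg_ind (m := m) (P := fun p => (pderiv k p).totalDegree ≤ m - 1) (by simp) ?_ ?_ p hp
  · intro p q hp hq; rw [map_add]; exact td_add hp hq
  · intro s a hs
    rw [pderiv_monomial]
    by_cases hk : s k = 0
    · simp [hk]
    · refine (td_mono _ _).trans ?_
      have := sum_sub_single s k hk
      omega

lemma X_mul_pderiv_monomial {τ : Type} (s : τ →₀ ℕ) (a : ℝ) (k : τ) :
    X k * pderiv k (monomial s a) = C (s k : ℝ) * monomial s a := by
  rw [pderiv_monomial]
  by_cases hk : s k = 0
  · simp [hk]
  · rw [X, monomial_mul, C_mul_monomial]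
    congr 1
    · rw [add_tsub_cancel_of_le]; rw [Finsupp.single_le_iff]; omega
    · ring_nf

lemma td_Lop_add {D : ℕ} (p : MvPolynomial σ ℝ) (hp : p.totalDegree ≤ D) :
    (Lop p + C (D:ℝ) * p).totalDegree ≤ D - 1 := by
  refine deg_ind (m := D) (P := fun p => (Lop p + C (D:ℝ) * p).totalDegree ≤ D - 1) (by simp [Lop_zero]) ?_ ?_ p hp
  · intro p q hp hq
    rw [Lop_add]
    convert td_add hp hq using 2; ring
  · intro s a hs
    have e : Lop (monomial s a) + C (D:ℝ) * monomial s a = (∑ k, pderiv k (pderiv k (monomial s a))) +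
        C (((D:ℝ) - (s.sum fun _ e => e : ℕ))) * monomial s a := by
      rw [Lop, Finset.sum_sub_distrib]
      simp_rw [X_mul_pderiv_monomial]
      rw [← Finset.sum_mul, ← map_sum]
      rw [Finsupp.sum_fintype _ _ (by simp)]
      push_cast
      rw [map_sub]; ring
    rw [e]
    have hmd : (monomial s a : MvPolynomial σ ℝ).totalDegree ≤ D := (td_mono _ _).trans hs
    refine td_add (td_sum _ fun k _ => ?_) ?_
    · exact (td_pderiv k (td_pderiv k hmd)).trans (by omega)
    · rcases Nat.eq_or_lt_of_le hs with h | h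
      · simp [h]
      · refine td_smul _ ((td_mono _ _).trans (by omega))

lemma td_Lop {D : ℕ} (p : MvPolynomial σ ℝ) (hp : p.totalDegree ≤ D) : (Lop p).totalDegree ≤ D := by
  have := td_sub ((td_Lop_add p hp).trans (Nat.sub_le D 1)) (td_smul (D:ℝ) hp)
  simpa using this

lemma td_gam {a b : ℕ} {p q : MvPolynomial σ ℝ} (hp : p.totalDegree ≤ a) (hq : q.totalDegree ≤ b) :
    (gam p q).totalDegree ≤ (a - 1) + (b - 1) :=
  td_sum _ fun k _ => td_mul (td_pderiv k hp) (td_pderiv k hq)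

lemma decomp (D : ℕ) : ∀ p : MvPolynomial σ ℝ, p.totalDegree ≤ D →
    ∃ c : ℕ → MvPolynomial σ ℝ, p = ∑ j ∈ Finset.range (D + 1), c j ∧ (∀ j, Lop (c j) = - (C (j:ℝ) * c j)) ∧
      (∃ a, c 0 = C a) ∧ ∀ j, (c j).totalDegree ≤ j := by
  induction D with
  | zero =>
    intro p hp
    have hp0 : p.totalDegree = 0 := by omega
    rw [totalDegree_eq_zero_iff_eq_C] at hp0
    refine ⟨fun j => if j = 0 then p else 0, by simp, ?_, ⟨_, by simpa using hp0⟩, ?_⟩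
    · intro j
      by_cases hj : j = 0
      · subst hj; rw [hp0]; simp [Lop_C]
      · simp [hj, Lop_zero]
    · intro j
      by_cases hj : j = 0
      · simp only [hj, if_true]; exact hp
      · simp [hj]
  | succ D ih =>
    intro p hp
    obtain ⟨c, hc, hL, ⟨a, ha⟩, hd⟩ := ih _ (td_Lop_add p hp)
    set b : ℕ → MvPolynomial σ ℝ := fun j => C ((((D + 1 : ℕ) : ℝ) - j)⁻¹) * c j with hb
    have hbL : ∀ j, Lop (b j) = - (C (j:ℝ) * b j) := by
      intro j; rw [hb]; simp only [Lop_smul, hL]; ring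
    have hsum : Lop (p - ∑ j ∈ Finset.range (D + 1), b j) = - (C ((D+1:ℕ):ℝ) * (p - ∑ j ∈ Finset.range (D + 1), b j)) := by
      have h1 : Lop p = (∑ j ∈ Finset.range (D + 1), c j) - C ((D+1:ℕ):ℝ) * p := by
        rw [← hc]; ring
      rw [Lop_sub, Lop_sum, h1]
      have h2 : ∑ j ∈ Finset.range (D + 1), c j = ∑ j ∈ Finset.range (D + 1), (Lop (b j) + C ((D+1:ℕ):ℝ) * b j) := by
        refine Finset.sum_congr rfl fun j hj => ?_
        rw [hbL]
        have hj' : (((D + 1 : ℕ) : ℝ) - j) ≠ 0 := by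
          have : j < D + 1 := Finset.mem_range.1 hj
          have : (j:ℝ) < ((D+1:ℕ):ℝ) := by exact_mod_cast this
          linarith
        have : c j = C (((D + 1 : ℕ) : ℝ) - j) * b j := by
          rw [hb]; simp only
          rw [← mul_assoc, ← C_mul, mul_inv_cancel₀ hj']; simp
        rw [this, map_sub]; ring
      rw [h2, Finset.sum_add_distrib, ← Finset.mul_sum]; ring
    refine ⟨fun j => if j < D + 1 then b j else if j = D + 1 then p - ∑ j ∈ Finset.range (D + 1), b j else 0, ?_, ?_, ?_, ?_⟩
    · rw [Finset.sum_range_succ]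
      simp only [lt_irrefl, if_true, if_false]
      rw [Finset.sum_congr rfl (g := b)]
      · ring
      · intro j hj; rw [if_pos (Finset.mem_range.1 hj)]
    · intro j
      dsimp only
      split_ifs with h1 h2
      · exact hbL j
      · rw [h2]; exact hsum
      · simp [Lop_zero]
    · refine ⟨((((D + 1 : ℕ) : ℝ) - (0:ℕ))⁻¹) * a, ?_⟩
      simp only [Nat.succ_pos, if_true, hb, ha, C_mul]
    · intro j
      dsimp only
      split_ifs with h1 h2
      · exact td_smul _ (hd j)
      · rw [h2]; refine td_sub hp (td_sum _ fun i hi => td_smul _ ((hd i).trans ?_))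
        have := Finset.mem_range.1 hi; omega
      · simp

lemma eig_orth {p q : MvPolynomial σ ℝ} {a b : ℝ} (hp : Lop p = -(C a * p)) (hq : Lop q = -(C b * q)) (hab : a ≠ b) :
    gE (p * q) = 0 := by
  have h1 := gE_mul_Lop p q
  have h2 := gE_mul_Lop q p
  rw [gam_comm, ← h1, hp, hq] at h2
  have e1 : q * -(C a * p) = - (C a * (p * q)) := by ring
  have e2 : p * -(C b * q) = - (C b * (p * q)) := by ring
  rw [e1, e2, gE_neg, gE_neg, gE_smul, gE_smul] at h2
  have : (a - b) * gE (p * q) = 0 := by linarith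
  rcases mul_eq_zero.1 this with h | h
  · exact absurd (by linarith) hab
  · exact h

lemma decomp_bilin {D : ℕ} {c : ℕ → MvPolynomial σ ℝ} (hL : ∀ j, Lop (c j) = - (C (j:ℝ) * c j)) (f g : ℕ → ℝ) :
    gE ((∑ j ∈ Finset.range (D + 1), C (f j) * c j) * (∑ j ∈ Finset.range (D + 1), C (g j) * c j))
      = ∑ j ∈ Finset.range (D + 1), f j * g j * gE (c j ^ 2) := by
  rw [Finset.sum_mul_sum, gE_sum]
  refine Finset.sum_congr rfl fun i hi => ?_
  rw [gE_sum, Finset.sum_eq_single i]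
  · have : C (f i) * c i * (C (g i) * c i) = C (f i * g i) * c i ^ 2 := by rw [C_mul]; ring
    rw [this, gE_smul]
  · intro j _ hj
    have : C (f i) * c i * (C (g j) * c j) = C (f i * g j) * (c i * c j) := by rw [C_mul]; ring
    rw [this, gE_smul, eig_orth (hL i) (hL j) (by exact_mod_cast hj.symm), mul_zero]
  · intro h; exact absurd hi h

lemma decomp_bilin' {D : ℕ} {c : ℕ → MvPolynomial σ ℝ} (hL : ∀ j, Lop (c j) = - (C (j:ℝ) * c j)) {f g : ℕ → ℝ}
    {p q : MvPolynomial σ ℝ} (hp : p = ∑ j ∈ Finset.range (D + 1), C (f j) * c j)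
    (hq : q = ∑ j ∈ Finset.range (D + 1), C (g j) * c j) :
    gE (p * q) = ∑ j ∈ Finset.range (D + 1), f j * g j * gE (c j ^ 2) := by
  rw [hp, hq]; exact decomp_bilin hL f g

lemma decomp_Lop {D : ℕ} {c : ℕ → MvPolynomial σ ℝ} (hL : ∀ j, Lop (c j) = - (C (j:ℝ) * c j)) :
    Lop (∑ j ∈ Finset.range (D + 1), c j) = ∑ j ∈ Finset.range (D + 1), C (-(j:ℝ)) * c j := by
  rw [Lop_sum]; refine Finset.sum_congr rfl fun i hi => ?_; rw [hL]; simp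

/-- S1 -/
lemma gam_le {D : ℕ} {p : MvPolynomial σ ℝ} (hp : p.totalDegree ≤ D) : gE (gam p p) ≤ D * gE (p ^ 2) := by
  obtain ⟨c, hc, hL, -, -⟩ := decomp D p hp
  have h := gE_mul_Lop p p
  have e1 : p = ∑ j ∈ Finset.range (D + 1), C (1:ℝ) * c j := by simpa using hc
  have e2 : Lop p = ∑ j ∈ Finset.range (D + 1), C (-(j:ℝ)) * c j := by rw [hc, decomp_Lop hL]
  have h1 := decomp_bilin' hL e1 e2
  have h2 := decomp_bilin' hL e1 e1
  rw [← pow_two] at h2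
  rw [h2, Finset.mul_sum]
  have : gE (gam p p) = - gE (p * Lop p) := by linarith
  rw [this, h1, ← Finset.sum_neg_distrib]
  refine Finset.sum_le_sum fun j hj => ?_
  have h0 := gE_sq_nonneg (c j)
  have : (j:ℝ) ≤ D := by have := Finset.mem_range.1 hj; exact_mod_cast (by omega : j ≤ D)
  nlinarith

/-- S2 Poincare -/
lemma poincare (p : MvPolynomial σ ℝ) : gE (p ^ 2) - gE p ^ 2 ≤ gE (gam p p) := by
  set D := p.totalDegree
  obtain ⟨c, hc, hL, ⟨a, ha⟩, -⟩ := decomp D p le_rfl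
  have h := gE_mul_Lop p p
  have e1 : p = ∑ j ∈ Finset.range (D + 1), C (1:ℝ) * c j := by simpa using hc
  have e2 : Lop p = ∑ j ∈ Finset.range (D + 1), C (-(j:ℝ)) * c j := by rw [hc, decomp_Lop hL]
  have h1 := decomp_bilin' hL e1 e2
  have h2 := decomp_bilin' hL e1 e1
  rw [← pow_two] at h2
  have hmean : gE p = a := by
    rw [hc, gE_sum, Finset.sum_eq_single 0]
    · rw [ha, gE_C]
    · intro j _ hj
      have h3 := gE_mul_Lop 1 (c j)
      rw [hL] at h3
      have : gam 1 (c j) = 0 := by simp [gam]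
      rw [this, gE_zero, one_mul, gE_neg, gE_smul] at h3
      have hj' : (j:ℝ) ≠ 0 := by exact_mod_cast hj
      have : (j:ℝ) * gE (c j) = 0 := by linarith
      exact (mul_eq_zero.1 this).resolve_left hj'
    · simp
  have : gE (gam p p) = - gE (p * Lop p) := by linarith
  rw [this, h1, h2, hmean, Finset.sum_range_succ', Finset.sum_range_succ', ha, ← C_pow, gE_C]
  simp only [Nat.cast_zero, neg_zero, mul_zero, zero_mul, add_zero, one_mul]
  have : a ^ 2 - a ^ 2 = 0 := by ring
  rw [add_sub_assoc, this, add_zero, ← Finset.sum_neg_distrib]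
  refine Finset.sum_le_sum fun j hj => ?_
  have h0 := gE_sq_nonneg (c (j+1))
  push_cast
  have : (0:ℝ) ≤ j := Nat.cast_nonneg j
  nlinarith

noncomputable def Tq (D : ℝ) (p : MvPolynomial σ ℝ) : MvPolynomial σ ℝ := C (1/2:ℝ) * (Lop p + C D * p)

lemma Tq_sq_le {D : ℕ} {p : MvPolynomial σ ℝ} (hp : p.totalDegree ≤ D) :
    gE (Tq D p ^ 2) ≤ (D / 2 : ℝ) * gE (p * Tq D p) ∧ gE (Tq D p ^ 2) ≤ (D / 2 : ℝ) ^ 2 * gE (p ^ 2) := by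
  obtain ⟨c, hc, hL, -, -⟩ := decomp D p hp
  have e1 : p = ∑ j ∈ Finset.range (D + 1), C (1:ℝ) * c j := by simpa using hc
  have e2 : Tq D p = ∑ j ∈ Finset.range (D + 1), C (((D:ℝ) - j)/2) * c j := by
    rw [Tq]
    have : Lop p = ∑ j ∈ Finset.range (D + 1), C (-(j:ℝ)) * c j := by rw [hc, decomp_Lop hL]
    rw [this]
    rw [hc]
    rw [Finset.mul_sum, ← Finset.sum_add_distrib, Finset.mul_sum]
    refine Finset.sum_congr rfl fun j hj => ?_
    have : ((D:ℝ) - j)/2 = (1/2) * (-j + D) := by ring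
    rw [this, C_mul, map_add]; ring
  have h1 := decomp_bilin' hL e1 e2
  have h2 := decomp_bilin' hL e1 e1
  rw [← pow_two] at h2
  have h3 := decomp_bilin' hL e2 e2
  rw [← pow_two] at h3
  rw [h3, h1, h2, Finset.mul_sum, Finset.mul_sum]
  constructor
  all_goals
    refine Finset.sum_le_sum fun j hj => ?_
    have h0 := gE_sq_nonneg (c j)
    have h4 : (j:ℝ) ≤ D := by have := Finset.mem_range.1 hj; exact_mod_cast (by omega : j ≤ D)
    have h5 : (0:ℝ) ≤ j := Nat.cast_nonneg j
    rw [← mul_assoc]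
    refine mul_le_mul_of_nonneg_right ?_ h0
    nlinarith

/-- projection: eigen top part orthogonal to lower degree -/
lemma orth_lower {m : ℕ} {p q : MvPolynomial σ ℝ} (hp : Lop p = -(C (m:ℝ) * p)) (hm : 1 ≤ m)
    (hq : q.totalDegree ≤ m - 1) : gE (p * q) = 0 := by
  obtain ⟨c, hc, hL, -, -⟩ := decomp (m-1) q hq
  rw [hc, Finset.mul_sum, gE_sum]
  refine Finset.sum_eq_zero fun j hj => ?_
  refine eig_orth hp (hL j) ?_
  have := Finset.mem_range.1 hj
  exact_mod_cast (by omega : m ≠ j)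

lemma eig_pderiv {m : ℕ} {p : MvPolynomial σ ℝ} (hm : 1 ≤ m) (hp : Lop p = -(C (m:ℝ) * p)) (k : σ) :
    Lop (pderiv k p) = -(C ((m-1:ℕ):ℝ) * pderiv k p) := by
  have h := pderiv_Lop k p
  rw [hp] at h
  simp only [map_neg, Derivation.leibniz, smul_eq_mul, pderiv_C, mul_zero, add_zero] at h
  have h2 : Lop (pderiv k p) = pderiv k p - (C (m:ℝ) * pderiv k p) := by rw [eq_sub_iff_add_eq] at h; rw [← h]; ring
  rw [h2, Nat.cast_sub hm, map_sub]; simp; ring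

lemma gam_eig {a b : ℝ} {p q : MvPolynomial σ ℝ} (hp : Lop p = -(C a * p)) (hq : Lop q = -(C b * q)) :
    gam p q = Tq (a + b) (p * q) := by
  rw [Tq, Lop_mul, hp, hq]
  have : (2 : MvPolynomial σ ℝ) = C (2:ℝ) := (map_ofNat C 2).symm
  rw [this]
  have h2 : C (1/2:ℝ) * (p * -(C b * q) + q * -(C a * p) + C 2 * gam p q + C (a + b) * (p * q))
    = (C (1/2) * C 2) * gam p q := by rw [map_add]; ring
  rw [h2, ← C_mul]; simp

end part2


section part3

lemma deriv_hermite (n : ℕ) : Polynomial.derivative (Polynomial.hermite (n + 1)) = (n + 1 : Polynomial ℤ) * Polynomial.hermite n := by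
  induction n with
  | zero => simp
  | succ n ih =>
    rw [Polynomial.hermite_succ (n+1), map_sub, Polynomial.derivative_mul, ih, Polynomial.derivative_mul,
      Polynomial.hermite_succ n]
    simp only [Polynomial.derivative_X, Polynomial.derivative_add, Polynomial.derivative_natCast, Polynomial.derivative_one]
    push_cast
    ring

lemma hermite_ode (n : ℕ) : Polynomial.derivative (Polynomial.derivative (Polynomial.hermite n))
    - Polynomial.X * Polynomial.derivative (Polynomial.hermite n) = - ((n : Polynomial ℤ) * Polynomial.hermite n) := by
  cases n with
  | zero => simp
  | succ n =>
    rw [deriv_hermite, Polynomial.derivative_mul, Polynomial.hermite_succ n]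
    simp only [Polynomial.derivative_X, Polynomial.derivative_add, Polynomial.derivative_natCast, Polynomial.derivative_one]
    push_cast
    ring

variable {σ : Type} [Fintype σ]

lemma pderiv_aevalX (l i : σ) (q : Polynomial ℤ) :
    pderiv l (Polynomial.aeval (X i : MvPolynomial σ ℝ) q) = Polynomial.aeval (X i) (Polynomial.derivative q) * pderiv l (X i) := by
  have h := Derivation.map_aeval (D := (pderiv l : Derivation ℝ (MvPolynomial σ ℝ) (MvPolynomial σ ℝ)).restrictScalars ℤ) q (X i)
  exact h

lemma Lop_hermite (i : σ) (n : ℕ) : Lop (Polynomial.aeval (X i : MvPolynomial σ ℝ) (Polynomial.hermite n))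
    = -(C (n:ℝ) * Polynomial.aeval (X i : MvPolynomial σ ℝ) (Polynomial.hermite n)) := by
  classical
  rw [Lop, Finset.sum_eq_single i]
  · rw [pderiv_aevalX, pderiv_X_self, mul_one, pderiv_aevalX, pderiv_X_self, mul_one]
    have := congrArg (Polynomial.aeval (X i : MvPolynomial σ ℝ)) (hermite_ode n)
    simpa using this
  · intro l _ hl
    rw [pderiv_aevalX, pderiv_X_of_ne hl.symm]; simp
  · simp

lemma Lop_hermiteProd_aux (k : σ → ℕ) (s : Finset σ) :
    Lop (∏ i ∈ s, Polynomial.aeval (X i : MvPolynomial σ ℝ) (Polynomial.hermite (k i)))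
      = -(C ((∑ i ∈ s, k i : ℕ):ℝ) * ∏ i ∈ s, Polynomial.aeval (X i : MvPolynomial σ ℝ) (Polynomial.hermite (k i)))
    ∧ ∀ l ∉ s, pderiv l (∏ i ∈ s, Polynomial.aeval (X i : MvPolynomial σ ℝ) (Polynomial.hermite (k i))) = 0 := by
  classical
  induction s using Finset.induction_on with
  | empty => simp [← C_1, Lop_C, -map_one]
  | insert a s h ih =>
    rw [Finset.prod_insert h, Finset.sum_insert h]
    constructor
    · rw [Lop_mul, ih.1, Lop_hermite]
      have : gam (Polynomial.aeval (X a : MvPolynomial σ ℝ) (Polynomial.hermite (k a)))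
        (∏ i ∈ s, Polynomial.aeval (X i : MvPolynomial σ ℝ) (Polynomial.hermite (k i))) = 0 := by
        rw [gam]
        refine Finset.sum_eq_zero fun l _ => ?_
        by_cases hl : l = a
        · subst hl; rw [ih.2 l h, mul_zero]
        · rw [pderiv_aevalX, pderiv_X_of_ne (Ne.symm hl)]; simp
      rw [this]
      push_cast; rw [map_add]; ring
    · intro l hl
      rw [Finset.mem_insert, not_or] at hl
      rw [Derivation.leibniz, ih.2 l hl.2, pderiv_aevalX, pderiv_X_of_ne (Ne.symm hl.1)]; simp

lemma chaos_eig {K m : ℕ} {Q : MvPolynomial (Fin K) ℝ} (hQ : Q ∈ chaos K m) : Lop Q = -(C (m:ℝ) * Q) := by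
  refine Submodule.span_induction (p := fun Q _ => Lop Q = -(C (m:ℝ) * Q)) ?_ ?_ ?_ ?_ hQ
  · rintro P ⟨k, hk, rfl⟩
    rw [hermiteProd, (Lop_hermiteProd_aux k Finset.univ).1, hk]
  · simp [Lop_zero]
  · intro p q _ _ hp hq; rw [Lop_add, hp, hq]; ring
  · intro a p _ hp; rw [smul_eq_C_mul, Lop_smul, hp]; ring

/-- Hypercontractivity, exponent 2. -/
lemma hyp2 (m : ℕ) : ∃ c : ℝ, 0 ≤ c ∧ ∀ (σ α : Type) [Fintype σ] [Fintype α] (F : α → MvPolynomial σ ℝ),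
    (∀ a, (F a).totalDegree ≤ m) → gE ((∑ a, F a ^ 2) ^ 2) ≤ c * gE (∑ a, F a ^ 2) ^ 2 := by
  induction m with
  | zero =>
    refine ⟨1, zero_le_one, fun σ α _ _ F hF => ?_⟩
    have : ∀ a, ∃ b : ℝ, F a = C b := fun a => ⟨_, totalDegree_eq_zero_iff_eq_C.1 (Nat.le_zero.1 (hF a))⟩
    choose b hb using this
    have : ∑ a, F a ^ 2 = C (∑ a, b a ^ 2) := by simp [hb, map_sum]
    rw [this, ← C_pow, gE_C, gE_C, one_mul]
  | succ m ih =>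
    obtain ⟨c, hc, ih⟩ := ih
    refine ⟨2 + 16 * c * ((m+1:ℕ):ℝ) ^ 2, by positivity, fun σ α _ _ F hF => ?_⟩
    set S := ∑ a, F a ^ 2 with hS
    set S' := ∑ b : α × σ, (pderiv b.2 (F b.1)) ^ 2 with hS'
    have h1 := ih σ (α × σ) (fun b => pderiv b.2 (F b.1)) (fun b => td_pderiv b.2 (hF b.1))
    have hP := poincare S
    have hpt : gE (gam S S) ≤ gE (C (1/2:ℝ) * S ^ 2 + C (8:ℝ) * S' ^ 2) := by
      refine gE_mono fun x => ?_
      have e1 : eval x (gam S S) = ∑ k, (∑ a, 2 * (eval x (F a) * eval x (pderiv k (F a)))) ^ 2 := by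
        simp only [gam, map_sum, map_mul]
        refine Finset.sum_congr rfl fun k _ => ?_
        rw [pow_two]
        have : eval x (pderiv k S) = ∑ a, 2 * (eval x (F a) * eval x (pderiv k (F a))) := by
          rw [hS]
          simp only [map_sum]
          refine Finset.sum_congr rfl fun a _ => ?_
          rw [pow_two, Derivation.leibniz]; simp; ring
        rw [this]
      have eS : eval x S = ∑ a, eval x (F a) ^ 2 := by simp [hS]
      have eS' : eval x S' = ∑ k, ∑ a, eval x (pderiv k (F a)) ^ 2 := by
        simp only [hS', map_sum, map_pow]; rw [Fintype.sum_prod_type, Finset.sum_comm]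
      have h4 : eval x (gam S S) ≤ 4 * (eval x S * eval x S') := by
        rw [e1, eS, eS', Finset.mul_sum, Finset.mul_sum]
        refine Finset.sum_le_sum fun k _ => ?_
        rw [← Finset.mul_sum, mul_pow]
        have := Finset.sum_mul_sq_le_sq_mul_sq Finset.univ (fun a => eval x (F a)) (fun a => eval x (pderiv k (F a)))
        linarith
      simp only [map_add, map_mul, map_pow, eval_C]
      nlinarith [sq_nonneg (eval x S - 4 * eval x S')]
    have hS'1 : gE S' ≤ ((m+1:ℕ):ℝ) * gE S := by
      have hS1 : gE S = ∑ a, gE (F a ^ 2) := by rw [hS, gE_sum]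
      rw [hS1, Finset.mul_sum]
      have : gE S' = ∑ a, gE (gam (F a) (F a)) := by
        rw [hS', gE_sum, Fintype.sum_prod_type]
        refine Finset.sum_congr rfl fun a _ => ?_
        rw [gam, gE_sum]; simp [pow_two]
      rw [this]
      exact Finset.sum_le_sum fun a _ => gam_le (hF a)
    have hS'0 : 0 ≤ gE S' := gE_nonneg fun x => by simp [hS']; positivity
    rw [gE_add, gE_smul, gE_smul] at hpt
    have h5 : gE S' ^ 2 ≤ (((m+1:ℕ):ℝ) * gE S) ^ 2 := by gcongr
    have h6 : c * gE S' ^ 2 ≤ c * (((m+1:ℕ):ℝ) * gE S) ^ 2 := by gcongr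
    have h1' : gE (S' ^ 2) ≤ c * gE S' ^ 2 := h1
    nlinarith

lemma hyp_pow (m k : ℕ) : ∃ c : ℝ, 0 ≤ c ∧ ∀ (σ α : Type) [Fintype σ] [Fintype α] (F : α → MvPolynomial σ ℝ),
    (∀ a, (F a).totalDegree ≤ m) → gE ((∑ a, F a ^ 2) ^ (2 ^ k)) ≤ c * gE (∑ a, F a ^ 2) ^ (2 ^ k) := by
  induction k with
  | zero => exact ⟨1, zero_le_one, fun σ α _ _ F hF => by simp⟩
  | succ k ih =>
    rcases k with _ | k
    · obtain ⟨c, hc, h⟩ := hyp2 m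
      exact ⟨c, hc, fun σ α _ _ F hF => by simpa using h σ α F hF⟩
    · obtain ⟨c, hc, ih⟩ := ih
      obtain ⟨c', hc', h⟩ := hyp2 (2 ^ k * (m + m))
      refine ⟨c' * c ^ 2, by positivity, fun σ α _ _ F hF => ?_⟩
      have h1 := h σ Unit (fun _ => (∑ a, F a ^ 2) ^ (2 ^ k)) (fun _ => by
        refine (totalDegree_pow _ _).trans (Nat.mul_le_mul_left _ (td_sum _ fun a _ => ?_))
        rw [pow_two]; exact td_mul (hF a) (hF a))
      have h2 := ih σ α F hF
      simp only [Finset.univ_unique, Finset.sum_const, Finset.card_singleton, one_smul] at h1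
      simp only [← pow_mul] at h1
      have e1 : 2 ^ k * (2 * 2) = 2 ^ (k + 1 + 1) := by ring
      have e2 : 2 ^ k * 2 = 2 ^ (k + 1) := by ring
      simp only [mul_assoc] at h1
      rw [e1, e2] at h1
      refine h1.trans ?_
      rw [mul_assoc]
      refine mul_le_mul_of_nonneg_left ?_ hc'
      have h0 : 0 ≤ gE ((∑ a, F a ^ 2) ^ 2 ^ (k + 1)) := gE_nonneg fun x => by simp; positivity
      calc _ ≤ (c * gE (∑ a, F a ^ 2) ^ 2 ^ (k + 1)) ^ 2 := by gcongr
        _ = _ := by rw [mul_pow, ← pow_mul]; ring_nf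

lemma gE_XX (c d : σ) [DecidableEq σ] : gE (X c * X d : MvPolynomial σ ℝ) = if c = d then 1 else 0 := by
  rw [gE_ibp, pderiv_X]
  by_cases h : c = d
  · subst h; simp [gE_one]
  · simp [h, gE_zero, Pi.single_apply, Ne.symm h]

lemma gE_linform_sq (κ : Type) [Fintype κ] (f : σ → κ) (hf : Function.Injective f) (b : σ → ℝ) :
    gE ((∑ l, C (b l) * X (f l) : MvPolynomial κ ℝ) ^ 2) = ∑ l, b l ^ 2 := by
  classical
  rw [pow_two, Finset.sum_mul_sum, gE_sum]
  refine Finset.sum_congr rfl fun k _ => ?_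
  rw [gE_sum, Finset.sum_eq_single k]
  · have : C (b k) * X (f k) * (C (b k) * X (f k)) = C (b k ^ 2) * (X (f k) * X (f k) : MvPolynomial κ ℝ) := by
      rw [C_pow]; ring
    rw [this, gE_smul, gE_XX]; simp
  · intro l _ hl
    have : C (b k) * X (f k) * (C (b l) * X (f l)) = C (b k * b l) * (X (f k) * X (f l) : MvPolynomial κ ℝ) := by
      rw [C_mul]; ring
    rw [this, gE_smul, gE_XX, if_neg (fun h => hl (hf h).symm)]; simp
  · simp

lemma quad_lemma (κ : Type) [Fintype κ] [DecidableEq κ] (e f : σ → κ) (he : Function.Injective e) (hf : Function.Injective f)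
    (B : σ → σ → ℝ) (t : ℝ) :
    ∫ y, (∑ k, ∑ l, B k l * y (e k) * y (f l) - t) ^ 2 ∂gaussPi κ
      ≤ 4 * ∑ k, ∑ l, B k l ^ 2 + (∑ k, ∑ l, (if e k = f l then B k l else 0) - t) ^ 2 := by
  classical
  set q : MvPolynomial κ ℝ := ∑ k, ∑ l, C (B k l) * X (e k) * X (f l) with hq
  have h1 : ∫ y, (∑ k, ∑ l, B k l * y (e k) * y (f l) - t) ^ 2 ∂gaussPi κ = gE ((q - C t) ^ 2) := by
    rw [gE]; congr 1; ext y; simp [hq]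
  have h2 : gE q = ∑ k, ∑ l, (if e k = f l then B k l else 0) := by
    rw [hq, gE_sum]
    refine Finset.sum_congr rfl fun k _ => ?_
    rw [gE_sum]
    refine Finset.sum_congr rfl fun l _ => ?_
    rw [mul_assoc, gE_smul, gE_XX]; simp
  have hP := poincare (q - C t)
  rw [gE_sub, gE_C, h2] at hP
  rw [h1]
  set W : σ → MvPolynomial κ ℝ := fun k => ∑ l, C (B k l) * X (f l) with hW
  set Z : σ → MvPolynomial κ ℝ := fun l => ∑ k, C (B k l) * X (e k) with hZ
  have hg : gE (gam (q - C t) (q - C t)) ≤ gE (∑ k, C (2:ℝ) * W k ^ 2 + ∑ l, C (2:ℝ) * Z l ^ 2) := by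
    refine gE_mono fun y => ?_
    have hd : ∀ c, eval y (pderiv c (q - C t)) = (∑ k, if e k = c then eval y (W k) else 0) + ∑ l, if f l = c then eval y (Z l) else 0 := by
      intro c
      have e1 : ∑ l, (if f l = c then eval y (Z l) else 0) = ∑ k, ∑ l, (if f l = c then B k l * y (e k) else 0) := by
        rw [Finset.sum_comm]
        refine Finset.sum_congr rfl fun l _ => ?_
        split_ifs with h
        · simp [hZ]
        · simp
      have e2 : ∑ k, (if e k = c then eval y (W k) else 0) = ∑ k, ∑ l, (if e k = c then B k l * y (f l) else 0) := by
        refine Finset.sum_congr rfl fun l _ => ?_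
        split_ifs with h
        · simp [hW]
        · simp
      rw [e1, e2, ← Finset.sum_add_distrib, hq]
      simp only [map_sub, pderiv_C, sub_zero, map_sum]
      refine Finset.sum_congr rfl fun k _ => ?_
      rw [← Finset.sum_add_distrib]
      refine Finset.sum_congr rfl fun l _ => ?_
      rw [Derivation.leibniz, Derivation.leibniz, pderiv_X, pderiv_X, pderiv_C]
      simp only [smul_eq_mul, Pi.single_apply, map_add, map_mul, eval_X, eval_C, mul_zero, add_zero]
      split_ifs <;> simp <;> ring
    have hone : ∀ (g : σ → κ) (hg : Function.Injective g) (w : σ → ℝ), ∑ c, (∑ k, if g k = c then w k else 0) ^ 2 = ∑ k, w k ^ 2 := by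
      intro g hg w
      have : ∀ c, (∑ k, if g k = c then w k else 0) ^ 2 = ∑ k, if g k = c then w k ^ 2 else 0 := by
        intro c
        by_cases h : ∃ k, g k = c
        · obtain ⟨k, rfl⟩ := h
          simp [hg.eq_iff]
        · push Not at h
          simp [h]
      simp_rw [this]
      rw [Finset.sum_comm]
      simp
    have : eval y (gam (q - C t) (q - C t)) = ∑ c, (eval y (pderiv c (q - C t))) ^ 2 := by
      simp [gam, pow_two]
    rw [this]
    simp_rw [hd]
    calc _ ≤ ∑ c, (2 * (∑ k, if e k = c then eval y (W k) else 0) ^ 2 + 2 * (∑ l, if f l = c then eval y (Z l) else 0) ^ 2) := by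
          refine Finset.sum_le_sum fun c _ => ?_
          nlinarith [sq_nonneg ((∑ k, if e k = c then eval y (W k) else 0) - (∑ l, if f l = c then eval y (Z l) else 0))]
      _ = _ := by
          rw [Finset.sum_add_distrib, ← Finset.mul_sum, ← Finset.mul_sum, hone e he, hone f hf]
          simp [Finset.mul_sum]
  have hWs : gE (∑ k, C (2:ℝ) * W k ^ 2 + ∑ l, C (2:ℝ) * Z l ^ 2) = 4 * ∑ k, ∑ l, B k l ^ 2 := by
    rw [gE_add, gE_sum, gE_sum]
    simp_rw [gE_smul]
    simp only [hW, hZ, gE_linform_sq κ f hf, gE_linform_sq κ e he]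
    rw [← Finset.mul_sum, ← Finset.mul_sum, Finset.sum_comm (f := fun l k => B k l ^ 2)]
    ring
  linarith

lemma Tq_add (D : ℝ) (p q : MvPolynomial σ ℝ) : Tq D (p + q) = Tq D p + Tq D q := by
  simp only [Tq, Lop_add]; ring
lemma Tq_sum (D : ℝ) {α : Type} (s : Finset α) (f : α → MvPolynomial σ ℝ) : Tq D (∑ a ∈ s, f a) = ∑ a ∈ s, Tq D (f a) := by
  simp only [Tq, Lop_sum, Finset.mul_sum, ← Finset.sum_add_distrib]
lemma Tq_sub_C (D : ℝ) (p : MvPolynomial σ ℝ) (a : ℝ) : Tq D (p - C a) = Tq D p - C (D / 2 * a) := by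
  have : D / 2 * a = (1/2) * (D * a) := by ring
  rw [this, C_mul, C_mul]
  simp only [Tq, Lop_sub, Lop_C]; ring

lemma gE_gam_le_half (p q : MvPolynomial σ ℝ) : gE (gam p q) ≤ (gE (gam p p) + gE (gam q q)) / 2 := by
  have h : gE (gam p q) ≤ gE (C (1/2:ℝ) * (gam p p + gam q q)) := by
    refine gE_mono fun x => ?_
    simp only [gam, map_sum, map_mul, map_add, eval_C, ← Finset.sum_add_distrib, Finset.mul_sum]
    refine Finset.sum_le_sum fun k _ => ?_
    nlinarith [sq_nonneg (eval x (pderiv k p) - eval x (pderiv k q))]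
  rw [gE_smul, gE_add] at h; linarith

lemma pderiv_gam_self (r : MvPolynomial σ ℝ) (s : σ) : pderiv s (gam r r) = C (2:ℝ) * ∑ k, pderiv k r * pderiv s (pderiv k r) := by
  simp only [gam, map_sum, Derivation.leibniz, smul_eq_mul, Finset.mul_sum]
  refine Finset.sum_congr rfl fun k _ => ?_
  rw [map_ofNat]; ring

lemma gam_gam_gam (p q : MvPolynomial σ ℝ) : gam (gam p p) (gam q q) = C (4:ℝ) * ∑ k, ∑ l, (pderiv k p * pderiv l q) * gam (pderiv k p) (pderiv l q) := by
  have h4 : (C (4:ℝ) : MvPolynomial σ ℝ) = C 2 * C 2 := by rw [← C_mul]; norm_num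
  conv_lhs => rw [gam]
  simp_rw [pderiv_gam_self]
  simp only [gam]
  simp_rw [Finset.mul_sum (s := Finset.univ) (f := fun s => pderiv s (pderiv _ p) * pderiv s (pderiv _ q))]
  rw [h4]
  have : ∀ s, (C (2:ℝ) * ∑ k, pderiv k p * pderiv s (pderiv k p)) * (C (2:ℝ) * ∑ k, pderiv k q * pderiv s (pderiv k q))
     = C 2 * C 2 * ∑ k, ∑ l, pderiv k p * pderiv l q * (pderiv s (pderiv k p) * pderiv s (pderiv l q)) := by
    intro s
    have : ∑ k, ∑ l, pderiv k p * pderiv l q * (pderiv s (pderiv k p) * pderiv s (pderiv l q))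
      = (∑ k, pderiv k p * pderiv s (pderiv k p)) * ∑ k, pderiv k q * pderiv s (pderiv k q) := by
      rw [Finset.sum_mul_sum]
      refine Finset.sum_congr rfl fun k _ => Finset.sum_congr rfl fun l _ => ?_
      ring
    rw [this]; ring
  simp_rw [this]
  rw [← Finset.mul_sum]
  refine congrArg (fun z => (C 2 * C 2 : MvPolynomial σ ℝ) * z) ?_
  rw [Finset.sum_comm]
  refine Finset.sum_congr rfl fun k _ => ?_
  rw [Finset.sum_comm]

lemma HS_le {p q : MvPolynomial σ ℝ} {a b : ℕ} (ha : 1 ≤ a) (hb : 1 ≤ b)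
    (hp : Lop p = -(C (a:ℝ) * p)) (hq : Lop q = -(C (b:ℝ) * q)) (hpd : p.totalDegree ≤ a) (hqd : q.totalDegree ≤ b)
    {c c' τ : ℝ} (h1 : gE ((gam p p - C c) ^ 2) ≤ τ) (h2 : gE ((gam q q - C c') ^ 2) ≤ τ) :
    ∑ k, ∑ l, gE (gam (pderiv k p) (pderiv l q) ^ 2) ≤ ((a + b : ℕ) : ℝ) ^ 2 * τ := by
  set D : ℕ := (a - 1) + (b - 1) with hD
  have hτ : 0 ≤ τ := (gE_sq_nonneg _).trans h1
  have hstep : ∀ k l, gE (gam (pderiv k p) (pderiv l q) ^ 2) ≤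
      (D / 2 : ℝ) * gE ((pderiv k p * pderiv l q) * gam (pderiv k p) (pderiv l q)) := by
    intro k l
    have := (Tq_sq_le (D := D) (td_mul (td_pderiv k hpd) (td_pderiv l hqd))).1
    rw [gam_eig (eig_pderiv ha hp k) (eig_pderiv hb hq l)]
    rw [hD] at this ⊢
    push_cast at this ⊢
    exact this
  have hsum := gam_gam_gam p q
  have hsumE : ∑ k, ∑ l, gE ((pderiv k p * pderiv l q) * gam (pderiv k p) (pderiv l q)) = gE (gam (gam p p) (gam q q)) / 4 := by
    rw [hsum, gE_smul, gE_sum]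
    simp_rw [gE_sum]; ring
  have hG : ∀ (r : MvPolynomial σ ℝ) (n : ℕ) (d : ℝ), r.totalDegree ≤ n → gE ((gam r r - C d) ^ 2) ≤ τ →
      gE (gam (gam r r) (gam r r)) ≤ ((n - 1 + (n - 1) : ℕ) : ℝ) * τ := by
    intro r n d hr h
    have h3 := gam_le (p := gam r r - C d) (td_sub (td_gam hr hr) (td_C d))
    rw [gam_sub_C, gam_comm, gam_sub_C] at h3
    exact h3.trans (mul_le_mul_of_nonneg_left h (Nat.cast_nonneg _))
  calc ∑ k, ∑ l, gE (gam (pderiv k p) (pderiv l q) ^ 2)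
      ≤ ∑ k, ∑ l, (D / 2 : ℝ) * gE ((pderiv k p * pderiv l q) * gam (pderiv k p) (pderiv l q)) :=
        Finset.sum_le_sum fun k _ => Finset.sum_le_sum fun l _ => hstep k l
    _ = (D / 2 : ℝ) * (gE (gam (gam p p) (gam q q)) / 4) := by
        rw [← hsumE, Finset.mul_sum]; simp_rw [Finset.mul_sum]
    _ ≤ (D / 2 : ℝ) * (D * τ / 4) := by
        have h5 := gE_gam_le_half (gam p p) (gam q q)
        have h6 := hG p a c hpd h1
        have h7 := hG q b c' hqd h2
        have : (D : ℝ) = ((a - 1 : ℕ) : ℝ) + ((b - 1 : ℕ) : ℝ) := by rw [hD]; push_cast; ring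
        push_cast at h6 h7
        refine mul_le_mul_of_nonneg_left ?_ (by positivity)
        rw [this]; linarith
    _ ≤ _ := by
        have : (D:ℝ) ≤ ((a + b : ℕ):ℝ) := by exact_mod_cast (by omega : D ≤ a + b)
        have h0 : (0:ℝ) ≤ D := Nat.cast_nonneg D
        have : (D:ℝ) ^ 2 ≤ ((a + b : ℕ):ℝ) ^ 2 := by gcongr
        have := mul_le_mul_of_nonneg_right this hτ
        nlinarith [mul_nonneg (sq_nonneg (D:ℝ)) hτ]

lemma trace_le {p q : MvPolynomial σ ℝ} {a b : ℕ} (ha : 1 ≤ a) (hb : 1 ≤ b)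
    (hp : Lop p = -(C (a:ℝ) * p)) (hq : Lop q = -(C (b:ℝ) * q)) (hpd : p.totalDegree ≤ a) (hqd : q.totalDegree ≤ b)
    {c τ : ℝ} (h1 : gE ((gam p q - C c) ^ 2) ≤ τ) :
    gE ((∑ k, gam (pderiv k p) (pderiv k q) - C (((a - 1 + (b - 1) : ℕ) : ℝ) / 2 * c)) ^ 2) ≤ ((a + b : ℕ) : ℝ) ^ 2 * τ := by
  set D : ℕ := (a - 1) + (b - 1) with hD
  have hτ : 0 ≤ τ := (gE_sq_nonneg _).trans h1
  have e : ∑ k, gam (pderiv k p) (pderiv k q) = Tq D (gam p q) := by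
    rw [gam, Tq_sum]
    refine Finset.sum_congr rfl fun k _ => ?_
    rw [gam_eig (eig_pderiv ha hp k) (eig_pderiv hb hq k), hD]; push_cast; rfl
  rw [e, ← Tq_sub_C]
  refine ((Tq_sq_le (D := D) (td_sub (td_gam hpd hqd) (td_C c))).2).trans ?_
  have h2 : (D:ℝ) ≤ ((a + b : ℕ):ℝ) := by exact_mod_cast (by omega : D ≤ a + b)
  have h0 : (0:ℝ) ≤ D := Nat.cast_nonneg D
  have : ((D:ℝ)/2) ^ 2 ≤ ((a + b : ℕ):ℝ) ^ 2 := by gcongr; linarith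
  exact mul_le_mul this h1 (gE_sq_nonneg _) (sq_nonneg _)

end part3


section part4
variable {σ : Type} [Fintype σ]

lemma gE_CS (p q : MvPolynomial σ ℝ) : gE (p * q) ^ 2 ≤ gE (p ^ 2) * gE (q ^ 2) := by
  have key : ∀ t : ℝ, 0 ≤ gE (p ^ 2) * (t * t) + (2 * gE (p * q)) * t + gE (q ^ 2) := by
    intro t
    have h := gE_sq_nonneg (C t * p + q)
    have e : (C t * p + q) ^ 2 = C (t * t) * p ^ 2 + C (2 * t) * (p * q) + q ^ 2 := by
      rw [C_mul, C_mul, map_ofNat]; ring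
    rw [e, gE_add, gE_add, gE_smul, gE_smul] at h
    linarith
  have := discrim_le_zero key
  rw [discrim] at this
  nlinarith

noncomputable def rotHom (t : ℝ) : MvPolynomial (σ ⊕ σ) ℝ →ₐ[ℝ] MvPolynomial (σ ⊕ σ) ℝ :=
  aeval (Sum.elim (fun k => C (Real.cos t) * X (Sum.inl k) + C (Real.sin t) * X (Sum.inr k))
    (fun k => C (-Real.sin t) * X (Sum.inl k) + C (Real.cos t) * X (Sum.inr k)))

noncomputable def Tder : Derivation ℝ (MvPolynomial (σ ⊕ σ) ℝ) (MvPolynomial (σ ⊕ σ) ℝ) :=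
  mkDerivation ℝ (Sum.elim (fun k => X (Sum.inr k)) (fun k => - X (Sum.inl k)))

lemma Tder_apply (p : MvPolynomial (σ ⊕ σ) ℝ) : Tder p =
    ∑ k, (X (Sum.inr k) * pderiv (Sum.inl k) p - X (Sum.inl k) * pderiv (Sum.inr k) p) := by
  classical
  induction p using MvPolynomial.induction_on with
  | C a => simp [Tder]
  | add p q hp hq => rw [map_add, hp, hq, ← Finset.sum_add_distrib]; refine Finset.sum_congr rfl fun k _ => ?_; simp only [map_add]; ring
  | mul_X p i hp =>
    rw [Derivation.leibniz, hp]
    have : Tder (X i : MvPolynomial (σ ⊕ σ) ℝ) = ∑ k, (X (Sum.inr k) * pderiv (Sum.inl k) (X i) - X (Sum.inl k) * pderiv (Sum.inr k) (X i)) := by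
      rw [Tder, mkDerivation_X]
      rcases i with i | i
      · simp [pderiv_X, Pi.single_apply]
      · simp [pderiv_X, Pi.single_apply]
    rw [this]
    simp only [smul_eq_mul, Finset.mul_sum, ← Finset.sum_add_distrib, Derivation.leibniz]
    refine Finset.sum_congr rfl fun k _ => ?_
    ring

lemma gE_Tder (p : MvPolynomial (σ ⊕ σ) ℝ) : gE (Tder p) = 0 := by
  rw [Tder_apply, gE_sum]
  refine Finset.sum_eq_zero fun k _ => ?_
  rw [gE_sub, gE_ibp, gE_ibp, pderiv_comm', sub_self]

lemma rot_Tder_X (t : ℝ) (i : σ ⊕ σ) : rotHom t (Tder (X i)) = Tder (rotHom t (X i)) := by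
  rcases i with i | i <;>
  simp [rotHom, Tder, mkDerivation_X, Derivation.leibniz] <;> ring

lemma rot_Tder (t : ℝ) (p : MvPolynomial (σ ⊕ σ) ℝ) : rotHom t (Tder p) = Tder (rotHom t p) := by
  induction p using MvPolynomial.induction_on with
  | C a =>
    have : rotHom t (C a : MvPolynomial (σ ⊕ σ) ℝ) = C a := by simp [rotHom]
    rw [this]; simp [Tder]
  | add p q hp hq => simp only [map_add, hp, hq]
  | mul_X p i hp =>
    simp only [Derivation.leibniz, smul_eq_mul, map_add, map_mul, hp, rot_Tder_X]

lemma hasDeriv_rot (p : MvPolynomial (σ ⊕ σ) ℝ) : ∀ (Z : MvPolynomial (σ ⊕ σ) ℝ) (t : ℝ),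
    HasDerivAt (fun t => gE (rotHom t p * Z)) (gE (rotHom t (Tder p) * Z)) t := by
  induction p using MvPolynomial.induction_on with
  | C a =>
    intro Z t
    have : ∀ t, rotHom t (C a : MvPolynomial (σ ⊕ σ) ℝ) = C a := by simp [rotHom]
    simp_rw [this]
    have h : Tder (C a : MvPolynomial (σ ⊕ σ) ℝ) = 0 := by simp [Tder]
    rw [h, map_zero, zero_mul, gE_zero]
    exact hasDerivAt_const _ _
  | add p q hp hq =>
    intro Z t
    simp only [map_add, add_mul, gE_add]
    exact (hp Z t).add (hq Z t)
  | mul_X p i hp =>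
    intro Z t
    have main : ∀ (a b : ℝ → ℝ) (a' b' : ℝ) (U V : MvPolynomial (σ ⊕ σ) ℝ),
        (∀ t, rotHom t (X i) = C (a t) * U + C (b t) * V) →
        (rotHom t (Tder (X i)) = C a' * U + C b' * V) → HasDerivAt a a' t → HasDerivAt b b' t →
        HasDerivAt (fun t => gE (rotHom t (p * X i) * Z)) (gE (rotHom t (Tder (p * X i)) * Z)) t := by
      intro a b a' b' U V h1 h2 ha hb
      have e1 : ∀ t, gE (rotHom t (p * X i) * Z) = a t * gE (rotHom t p * (U * Z)) + b t * gE (rotHom t p * (V * Z)) := by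
        intro t
        rw [map_mul, h1, ← gE_smul, ← gE_smul, ← gE_add]; congr 1; ring
      simp_rw [e1]
      have hd := (ha.mul (hp (U * Z) t)).add (hb.mul (hp (V * Z) t))
      refine hd.congr_deriv ?_
      simp only [Derivation.leibniz, smul_eq_mul, map_add, map_mul, h2]
      rw [h1]
      simp only [← gE_smul, ← gE_add]
      congr 1; ring
    rcases i with i | i
    · refine main Real.cos Real.sin (-Real.sin t) (Real.cos t) (X (Sum.inl i)) (X (Sum.inr i)) ?_ ?_ (Real.hasDerivAt_cos t) (Real.hasDerivAt_sin t)
      · intro t; simp [rotHom]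
      · simp [rotHom, Tder, mkDerivation_X]
    · refine main (fun t => - Real.sin t) Real.cos (-Real.cos t) (-Real.sin t) (X (Sum.inl i)) (X (Sum.inr i)) ?_ ?_ (Real.hasDerivAt_sin t).neg (Real.hasDerivAt_cos t)
      · intro t; simp [rotHom]
      · simp [rotHom, Tder, mkDerivation_X]; ring

lemma rotHom_zero (p : MvPolynomial (σ ⊕ σ) ℝ) : rotHom 0 p = p := by
  have : rotHom (σ := σ) 0 = AlgHom.id ℝ _ := by
    ext i; rcases i with i | i <;> simp [rotHom]
  rw [this]; rfl

lemma gE_rot (t : ℝ) (p : MvPolynomial (σ ⊕ σ) ℝ) : gE (rotHom t p) = gE p := by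
  have h : ∀ t, HasDerivAt (fun t => gE (rotHom t p)) 0 t := by
    intro t
    have := hasDeriv_rot p 1 t
    simp only [mul_one] at this
    rwa [rot_Tder, gE_Tder] at this
  have := is_const_of_deriv_eq_zero (f := fun t => gE (rotHom t p)) (fun t => (h t).differentiableAt) (fun t => (h t).deriv) t 0
  simpa [rotHom_zero] using this

lemma sq_le_aux (A B t : ℝ) (hA0 : 0 ≤ A) (hB0 : 0 ≤ B) (h3 : A ^ 2 ≤ t ^ 2 * (B * A)) : A ^ 2 ≤ t ^ 4 * B ^ 2 := by
  rcases hA0.eq_or_lt with h | h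
  · rw [← h]; simp; positivity
  · have : A ≤ t ^ 2 * B := by
      by_contra hc
      push Not at hc
      nlinarith
    calc A ^ 2 ≤ (t ^ 2 * B) ^ 2 := by gcongr
      _ = _ := by ring

lemma rot_taylor (p : MvPolynomial (σ ⊕ σ) ℝ) {t : ℝ} (ht : 0 ≤ t) :
    gE ((rotHom t p - p - C t * Tder p) ^ 2) ≤ t ^ 4 * gE (Tder (Tder p) ^ 2) := by
  set r := rotHom t p - p - C t * Tder p with hr
  set M := √(gE (Tder (Tder p) ^ 2)) * √(gE (r ^ 2)) with hM
  have hM0 : 0 ≤ M := by positivity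
  have hb : ∀ s, |gE (rotHom s (Tder (Tder p)) * r)| ≤ M := by
    intro s
    have h := gE_CS (rotHom s (Tder (Tder p))) r
    rw [← map_pow, gE_rot] at h
    rw [hM, ← Real.sqrt_mul (gE_sq_nonneg _), ← Real.sqrt_sq_eq_abs]
    exact Real.sqrt_le_sqrt h
  have h1 : ∀ s ∈ Set.Icc (0:ℝ) t, ‖gE (rotHom s (Tder p) * r) - gE (rotHom 0 (Tder p) * r)‖ ≤ M * (s - 0) := by
    intro s hs
    refine norm_image_sub_le_of_norm_deriv_le_segment' (f := fun s => gE (rotHom s (Tder p) * r)) (f' := fun s => gE (rotHom s (Tder (Tder p)) * r))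
      (fun x _ => (hasDeriv_rot (Tder p) r x).hasDerivWithinAt) (fun x _ => hb x) s ⟨hs.1, le_rfl⟩
  have h2 := norm_image_sub_le_of_norm_deriv_le_segment' (a := 0) (b := t) (C := M * t)
    (f := fun s => gE (rotHom s p * r) - s * gE (Tder p * r))
    (f' := fun s => gE (rotHom s (Tder p) * r) - 1 * gE (Tder p * r))
    (fun x _ => ((hasDeriv_rot p r x).sub ((hasDerivAt_id x).mul_const _)).hasDerivWithinAt)
    (fun x hx => by
      have := h1 x ⟨hx.1, hx.2.le⟩
      rw [rotHom_zero] at this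
      rw [one_mul]
      refine this.trans ?_
      have := hx.2
      rw [sub_zero]; gcongr) t ⟨ht, le_rfl⟩
  simp only [rotHom_zero, zero_mul, sub_zero] at h2
  have e : gE (rotHom t p * r) - t * gE (Tder p * r) - gE (p * r) = gE (r ^ 2) := by
    rw [← gE_smul, ← gE_sub, ← gE_sub]; congr 1; rw [pow_two]; nth_rw 4 [hr]; ring
  rw [e] at h2
  have h3 : gE (r ^ 2) ≤ t ^ 2 * (√(gE (Tder (Tder p) ^ 2)) * √(gE (r ^ 2))) := by
    refine (le_abs_self _).trans (h2.trans (le_of_eq ?_)); rw [hM]; ring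
  have h4 := Real.sq_sqrt (gE_sq_nonneg r)
  have h5 := Real.sq_sqrt (gE_sq_nonneg (Tder (Tder p)))
  have h6 := sq_le_aux (√(gE (r ^ 2))) (√(gE (Tder (Tder p) ^ 2))) t (Real.sqrt_nonneg _) (Real.sqrt_nonneg _) (by rw [h4]; exact h3)
  rw [h4, h5] at h6
  exact h6

lemma gauss_sum_map : ((gaussPi σ).prod (gaussPi σ)).map (fun z : (σ → ℝ) × (σ → ℝ) => (Sum.elim z.1 z.2 : σ ⊕ σ → ℝ)) = gaussPi (σ ⊕ σ) := by
  have h := (measurePreserving_sumPiEquivProdPi (fun _ : σ ⊕ σ => gaussianReal 0 1)).symm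
  have := h.map_eq
  exact this

lemma measurable_sumElim : Measurable (fun z : (σ → ℝ) × (σ → ℝ) => (Sum.elim z.1 z.2 : σ ⊕ σ → ℝ)) := by
  refine measurable_pi_lambda _ fun i => ?_
  rcases i with i | i <;> simp <;> fun_prop

lemma measurable_eval (p : MvPolynomial σ ℝ) : Measurable (fun x : σ → ℝ => eval x p) :=
  (MvPolynomial.continuous_eval p).measurable

lemma gE_sumtype (p : MvPolynomial (σ ⊕ σ) ℝ) :
    Integrable (fun z : (σ → ℝ) × (σ → ℝ) => eval (Sum.elim z.1 z.2) p) ((gaussPi σ).prod (gaussPi σ)) ∧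
    gE p = ∫ z, eval (Sum.elim z.1 z.2) p ∂((gaussPi σ).prod (gaussPi σ)) := by
  constructor
  · have h := integrable_poly p
    rw [← gauss_sum_map] at h
    exact h.comp_measurable measurable_sumElim
  · rw [gE, ← gauss_sum_map, integral_map measurable_sumElim.aemeasurable (measurable_eval p).aestronglyMeasurable]

lemma Lop_sq_le {D : ℕ} {p : MvPolynomial σ ℝ} (hp : p.totalDegree ≤ D) : gE (Lop p ^ 2) ≤ (D:ℝ) ^ 2 * gE (p ^ 2) := by
  obtain ⟨c, hc, hL, -, -⟩ := decomp D p hp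
  have e1 : p = ∑ j ∈ Finset.range (D + 1), C (1:ℝ) * c j := by simpa using hc
  have e2 : Lop p = ∑ j ∈ Finset.range (D + 1), C (-(j:ℝ)) * c j := by rw [hc, decomp_Lop hL]
  have h1 := decomp_bilin' hL e2 e2
  have h2 := decomp_bilin' hL e1 e1
  rw [← pow_two] at h1 h2
  rw [h1, h2, Finset.mul_sum]
  refine Finset.sum_le_sum fun j hj => ?_
  have h0 := gE_sq_nonneg (c j)
  have h4 : (j:ℝ) ≤ D := by have := Finset.mem_range.1 hj; exact_mod_cast (by omega : j ≤ D)
  have h5 : (0:ℝ) ≤ j := Nat.cast_nonneg j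
  rw [← mul_assoc]
  refine mul_le_mul_of_nonneg_right ?_ h0
  nlinarith

lemma Tder_rename (p : MvPolynomial σ ℝ) : Tder (rename Sum.inl p) = ∑ k, X (Sum.inr k) * rename Sum.inl (pderiv k p) := by
  induction p using MvPolynomial.induction_on with
  | C a => simp [Tder]
  | add p q hp hq => simp only [map_add, hp, hq, ← Finset.sum_add_distrib, mul_add]
  | mul_X p i hp =>
    classical
    simp only [map_mul, Derivation.leibniz, hp, smul_eq_mul, map_add, mul_add, Finset.sum_add_distrib, rename_X]
    rw [add_comm]
    simp [pderiv_X, Pi.single_apply, Tder, mkDerivation_X, apply_ite, Finset.mul_sum, mul_comm, mul_left_comm]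
    rw [add_comm]

lemma TTder_rename (p : MvPolynomial σ ℝ) (N H : σ → ℝ) : eval (Sum.elim N H) (Tder (Tder (rename Sum.inl p))) =
    ∑ k, ∑ l, eval N (pderiv l (pderiv k p)) * H (id k) * H (id l) - ∑ k, N k * eval N (pderiv k p) := by
  rw [Tder_rename, map_sum, map_sum, ← Finset.sum_sub_distrib]
  refine Finset.sum_congr rfl fun k _ => ?_
  rw [Derivation.leibniz, Tder_rename]
  simp [eval_rename, Finset.mul_sum, Tder, mkDerivation_X, Function.comp_def]
  rw [← sub_eq_add_neg, mul_comm (N k)]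
  congr 1
  refine Finset.sum_congr rfl fun l _ => ?_
  ring

lemma gE_TT_le {D : ℕ} {p : MvPolynomial σ ℝ} (hp : p.totalDegree ≤ D) :
    gE (Tder (Tder (rename (Sum.inl : σ → σ ⊕ σ) p)) ^ 2) ≤ 5 * (D:ℝ) ^ 2 * gE (p ^ 2) := by
  classical
  obtain ⟨h1, h2⟩ := gE_sumtype (Tder (Tder (rename (Sum.inl : σ → σ ⊕ σ) p)) ^ 2)
  rw [h2, integral_prod _ h1]
  have hpt : ∀ N : σ → ℝ, ∫ H, eval (Sum.elim N H) (Tder (Tder (rename (Sum.inl : σ → σ ⊕ σ) p)) ^ 2) ∂gaussPi σ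
      ≤ eval N (C (4:ℝ) * ∑ k, ∑ l, (pderiv l (pderiv k p)) ^ 2 + Lop p ^ 2) := by
    intro N
    simp only [map_pow, TTder_rename]
    refine (quad_lemma σ id id Function.injective_id Function.injective_id _ _).trans (le_of_eq ?_)
    simp [Lop]
  have h3 : gE (C (4:ℝ) * ∑ k, ∑ l, (pderiv l (pderiv k p)) ^ 2 + Lop p ^ 2) ≤ 5 * (D:ℝ) ^ 2 * gE (p ^ 2) := by
    rw [gE_add, gE_smul, gE_sum]
    have h4 : ∀ k, gE (∑ l, (pderiv l (pderiv k p)) ^ 2) ≤ D * gE (pderiv k p ^ 2) := by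
      intro k
      have : gam (pderiv k p) (pderiv k p) = ∑ l, (pderiv l (pderiv k p)) ^ 2 := by simp [gam, pow_two]
      rw [← this]
      exact gam_le ((td_pderiv k hp).trans (Nat.sub_le _ _))
    have h5 : ∑ k, gE (pderiv k p ^ 2) ≤ D * gE (p ^ 2) := by
      rw [← gE_sum]
      have : gam p p = ∑ k, pderiv k p ^ 2 := by simp [gam, pow_two]
      rw [← this]; exact gam_le hp
    have h6 := Finset.sum_le_sum fun k (_ : k ∈ Finset.univ) => h4 k
    rw [← Finset.mul_sum] at h6
    have h7 := Lop_sq_le hp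
    have h8 := mul_le_mul_of_nonneg_left h5 (Nat.cast_nonneg (α := ℝ) D)
    nlinarith
  exact (integral_mono h1.integral_prod_left (integrable_poly _) hpt).trans h3

noncomputable def remPoly (t : ℝ) (p : MvPolynomial σ ℝ) : MvPolynomial (σ ⊕ σ) ℝ :=
  rotHom t (rename Sum.inl p) - rename Sum.inl p - C t * Tder (rename Sum.inl p)

lemma gE_rem_le {D : ℕ} {p : MvPolynomial σ ℝ} (hp : p.totalDegree ≤ D) {t : ℝ} (ht : 0 ≤ t) :
    gE (remPoly t p ^ 2) ≤ t ^ 4 * (5 * (D:ℝ) ^ 2 * gE (p ^ 2)) :=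
  (rot_taylor _ ht).trans (mul_le_mul_of_nonneg_left (gE_TT_le hp) (by positivity))

lemma eval_rot (t : ℝ) (p : MvPolynomial σ ℝ) (N H : σ → ℝ) : eval (Sum.elim N H) (rotHom t (rename Sum.inl p))
    = eval (fun k => Real.cos t * N k + Real.sin t * H k) p := by
  induction p using MvPolynomial.induction_on with
  | C a => simp [rotHom]
  | add p q hp hq => simp only [map_add, hp, hq]
  | mul_X p i hp => simp only [map_mul, hp, rename_X]; simp [rotHom]

lemma eval_rem (t : ℝ) (p : MvPolynomial σ ℝ) (N H : σ → ℝ) :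
    eval (fun k => Real.cos t * N k + Real.sin t * H k) p = 
     eval N p + t * ∑ k, eval N (pderiv k p) * H k + eval (Sum.elim N H) (remPoly t p) := by
  simp only [remPoly, map_sub, eval_rot, map_mul, Tder_rename, map_sum, eval_C, eval_X, Sum.elim_inr, eval_rename, Sum.elim_comp_inl]
  simp only [mul_comm (H _)]
  ring

lemma td_rot {D : ℕ} (t : ℝ) {p : MvPolynomial (σ ⊕ σ) ℝ} (hp : p.totalDegree ≤ D) : (rotHom t p).totalDegree ≤ D := by
  refine deg_ind (m := D) (P := fun p => (rotHom t p).totalDegree ≤ D) (by simp) ?_ ?_ p hp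
  · intro p q hp hq; rw [map_add]; exact td_add hp hq
  · intro s a hs
    rw [rotHom, aeval_monomial]
    refine td_smul a (le_trans ?_ hs)
    rw [Finsupp.prod]
    refine (totalDegree_finsetProd _ _).trans ?_
    rw [Finsupp.sum]
    refine Finset.sum_le_sum fun i _ => ?_
    refine (totalDegree_pow _ _).trans ?_
    have : ∀ i, (Sum.elim (fun k => C (Real.cos t) * X (Sum.inl k) + C (Real.sin t) * X (Sum.inr k))
    (fun k => C (-Real.sin t) * X (Sum.inl k) + C (Real.cos t) * X (Sum.inr k)) i : MvPolynomial (σ ⊕ σ) ℝ).totalDegree ≤ 1 := by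
      intro i
      rcases i with i | i <;> exact td_add (td_smul _ (totalDegree_X _).le) (td_smul _ (totalDegree_X _).le)
    calc _ ≤ s i * 1 := Nat.mul_le_mul_left _ (this i)
      _ = s i := mul_one _

lemma td_rem {D : ℕ} (t : ℝ) {p : MvPolynomial σ ℝ} (hp : p.totalDegree ≤ D) : (remPoly t p).totalDegree ≤ D + 1 := by
  have h1 : (rename (Sum.inl : σ → σ ⊕ σ) p).totalDegree ≤ D := (totalDegree_rename_le _ _).trans hp
  refine td_sub (td_sub ((td_rot t h1).trans (Nat.le_succ _)) (h1.trans (Nat.le_succ _))) (td_smul _ ?_)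
  rw [Tder_rename]
  refine td_sum _ fun k _ => ?_
  rw [add_comm D]
  exact td_mul (totalDegree_X _).le ((totalDegree_rename_le _ _).trans ((td_pderiv k hp).trans (Nat.sub_le _ _)))

end part4


section part5
variable {σ : Type} [Fintype σ]

lemma bddInt {Ω : Type*} [MeasurableSpace Ω] {μ : Measure Ω} [IsFiniteMeasure μ] {f : Ω → ℝ} (hf : Measurable f)
    (h : ∀ x, |f x| ≤ 1) : Integrable f μ :=
  Integrable.of_bound hf.aestronglyMeasurable 1 (ae_of_all _ h)

lemma rot1 (t : ℝ) : ((gaussianReal 0 1).prod (gaussianReal 0 1)).map (fun z : ℝ × ℝ => Real.cos t * z.1 + Real.sin t * z.2) = gaussianReal 0 1 := by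
  have e : (fun z : ℝ × ℝ => Real.cos t * z.1 + Real.sin t * z.2) = (fun z : ℝ × ℝ => z.1 + z.2) ∘ Prod.map (fun x => Real.cos t * x) (fun x => Real.sin t * x) := by
    ext z; simp
  rw [e, ← Measure.map_map (by fun_prop) (by fun_prop), ← Measure.map_prod_map _ _ (by fun_prop) (by fun_prop),
    gaussianReal_map_const_mul, gaussianReal_map_const_mul]
  have := gaussianReal_conv_gaussianReal (m₁ := Real.cos t * 0) (m₂ := Real.sin t * 0) (v₁ := NNReal.mk (Real.cos t ^ 2) (sq_nonneg _) * 1) (v₂ := NNReal.mk (Real.sin t ^ 2) (sq_nonneg _) * 1)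
  rw [Measure.conv] at this
  rw [this]
  congr 1
  · simp
  · ext; simp

lemma rot_map (t : ℝ) : ((gaussPi σ).prod (gaussPi σ)).map (fun z : (σ → ℝ) × (σ → ℝ) => fun k => Real.cos t * z.1 k + Real.sin t * z.2 k) = gaussPi σ := by
  have h := (measurePreserving_arrowProdEquivProdArrow ℝ ℝ σ (fun _ => gaussianReal 0 1) (fun _ => gaussianReal 0 1)).map_eq
  unfold gaussPi
  rw [← h, Measure.map_map]
  · have h2 := Measure.pi_map_pi (ι := σ) (X := fun _ => ℝ × ℝ) (Y := fun _ => ℝ) (μ := fun _ => (gaussianReal 0 1).prod (gaussianReal 0 1))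
      (f := fun _ z => Real.cos t * z.1 + Real.sin t * z.2) (hμ := fun _ => by rw [rot1]; infer_instance) (fun _ => by fun_prop)
    simp_rw [rot1] at h2
    exact h2
  · fun_prop
  · exact MeasurableEquiv.measurable _

lemma cexp_gauss (b : σ → ℝ) : ∫ y, Complex.exp ((∑ k, b k * y k : ℝ) * Complex.I) ∂gaussPi σ = Real.exp (-(1/2) * ∑ k, b k ^ 2) := by
  have e : ∀ y : σ → ℝ, Complex.exp ((∑ k, b k * y k : ℝ) * Complex.I) = ∏ k, Complex.exp ((b k : ℂ) * (y k : ℂ) * Complex.I) := by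
    intro y
    rw [← Complex.exp_sum]
    push_cast
    rw [Finset.sum_mul]
  simp_rw [e]
  unfold gaussPi
  rw [integral_fintype_prod_eq_prod (f := fun k (x:ℝ) => Complex.exp ((b k : ℂ) * (x : ℂ) * Complex.I))]
  simp_rw [← charFun_apply_real, charFun_gaussianReal]
  rw [← Complex.exp_sum]
  push_cast
  congr 1
  rw [Finset.mul_sum]
  refine Finset.sum_congr rfl fun k _ => ?_
  simp; ring

lemma cos_gauss (c : ℝ) (b : σ → ℝ) : ∫ y, Real.cos (c + ∑ k, b k * y k) ∂gaussPi σ = Real.cos c * Real.exp (-(1/2) * ∑ k, b k ^ 2) := by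
  have hInt : Integrable (fun y : σ → ℝ => Complex.exp ((c:ℂ) * Complex.I) * Complex.exp ((∑ k, b k * y k : ℝ) * Complex.I)) (gaussPi σ) := by
    refine Integrable.of_bound (C := 1) (Measurable.aestronglyMeasurable (by fun_prop)) (ae_of_all _ fun y => ?_)
    rw [norm_mul, Complex.norm_exp_ofReal_mul_I, Complex.norm_exp_ofReal_mul_I]; simp
  have h1 : ∀ y : σ → ℝ, Real.cos (c + ∑ k, b k * y k) = RCLike.re (Complex.exp ((c:ℂ) * Complex.I) * Complex.exp ((∑ k, b k * y k : ℝ) * Complex.I)) := by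
    intro y
    rw [← Complex.exp_add, ← add_mul, ← Complex.ofReal_add]
    exact (Complex.exp_ofReal_mul_I_re _).symm
  simp_rw [h1]
  rw [integral_re hInt, integral_const_mul, cexp_gauss]
  rw [RCLike.re_eq_complex_re, Complex.re_mul_ofReal, Complex.exp_ofReal_mul_I_re]

lemma abs_exp_neg_le {a : ℝ} (h : 0 ≤ a) : |Real.exp (-(1/2) * a)| ≤ 1 := by
  rw [abs_of_pos (Real.exp_pos _)]; exact Real.exp_le_one_iff.2 (by linarith)

lemma fourier_ineq {α : Type} [Fintype α] (x : α → ℝ) (A : α → σ → ℝ) :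
    ∫ H, Real.exp (-(1/2) * ∑ a, (x a + ∑ k, A a k * H k) ^ 2) ∂gaussPi σ
      ≤ ∫ ξ, Real.exp (-(1/2) * ∑ k, (∑ a, ξ a * A a k) ^ 2) ∂gaussPi α := by
  have h1 : ∀ H : σ → ℝ, Real.exp (-(1/2) * ∑ a, (x a + ∑ k, A a k * H k) ^ 2)
      = ∫ ξ, Real.cos (∑ a, ξ a * (x a + ∑ k, A a k * H k)) ∂gaussPi α := by
    intro H
    have := cos_gauss 0 (fun a => x a + ∑ k, A a k * H k)
    simp only [Real.cos_zero, one_mul, zero_add] at this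
    rw [← this]
    simp_rw [mul_comm]
  simp_rw [h1]
  have hInt : Integrable (Function.uncurry fun (H : σ → ℝ) (ξ : α → ℝ) => Real.cos (∑ a, ξ a * (x a + ∑ k, A a k * H k))) ((gaussPi σ).prod (gaussPi α)) := by
    refine bddInt ?_ (fun z => Real.abs_cos_le_one _)
    unfold Function.uncurry
    fun_prop
  rw [integral_integral_swap hInt]
  refine integral_mono hInt.integral_prod_right ?_ fun ξ => ?_
  · refine bddInt (by fun_prop) fun ξ => abs_exp_neg_le (by positivity)
  · have e : ∀ H : σ → ℝ, ∑ a, ξ a * (x a + ∑ k, A a k * H k) = ∑ a, ξ a * x a + ∑ k, (∑ a, ξ a * A a k) * H k := by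
      intro H
      simp_rw [mul_add, Finset.sum_add_distrib, Finset.mul_sum, Finset.sum_mul]
      congr 1
      rw [Finset.sum_comm]
      refine Finset.sum_congr rfl fun k _ => Finset.sum_congr rfl fun l _ => ?_
      ring
    simp only [e]
    rw [cos_gauss]
    have := Real.cos_le_one (∑ a, ξ a * x a)
    have h2 := Real.exp_pos (-(1/2) * ∑ k, (∑ a, ξ a * A a k) ^ 2)
    nlinarith

noncomputable def phi {ι : Type} [Fintype ι] (F : ι → MvPolynomial σ ℝ) (u : ι → ℝ) : ℝ :=
  ∫ x, Real.exp (-(1/2) * ∑ k, (∑ i, u i * eval x (pderiv k (F i))) ^ 2) ∂gaussPi σ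

lemma measurable_evalc {Ω : Type*} [MeasurableSpace Ω] (p : MvPolynomial σ ℝ) {f : Ω → σ → ℝ} (hf : Measurable f) :
    Measurable (fun z => eval (f z) p) := (measurable_eval p).comp hf

lemma phi_le_one {ι : Type} [Fintype ι] (F : ι → MvPolynomial σ ℝ) (u : ι → ℝ) : phi F u ≤ 1 := by
  have hm : Measurable fun x : σ → ℝ => Real.exp (-(1/2) * ∑ k, (∑ i, u i * eval x (pderiv k (F i))) ^ 2) := by
    have := fun k i => measurable_eval (pderiv k (F i))
    fun_prop
  calc phi F u ≤ ∫ x, 1 ∂gaussPi σ := by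
        refine integral_mono (bddInt hm fun x => abs_exp_neg_le (by positivity)) (integrable_const _) fun x => ?_
        exact (le_abs_self _).trans (abs_exp_neg_le (by positivity))
    _ = 1 := by simp

lemma phi_nonneg {ι : Type} [Fintype ι] (F : ι → MvPolynomial σ ℝ) (u : ι → ℝ) : 0 ≤ phi F u :=
  integral_nonneg fun x => (Real.exp_pos _).le

lemma fourier_phi {α κ : Type} [Fintype α] [Fintype κ] (Y : α × κ → MvPolynomial σ ℝ) (x : α → ℝ) (u : κ → ℝ) (t : ℝ) :
    Integrable (fun ξ => phi Y (fun b => t * ξ b.1 * u b.2)) (gaussPi α) ∧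
    ∫ z, Real.exp (-(1/2) * ∑ a, ((x a + ∑ i, u i * eval z.1 (Y (a, i))) + ∑ k, (t * ∑ i, u i * eval z.1 (pderiv k (Y (a, i)))) * z.2 k) ^ 2)
      ∂((gaussPi σ).prod (gaussPi σ)) ≤ ∫ ξ, phi Y (fun b => t * ξ b.1 * u b.2) ∂gaussPi α := by
  have hmY := fun (a : α) (i : κ) => measurable_evalc (Y (a, i)) (f := fun z : (σ → ℝ) × (σ → ℝ) => z.1) measurable_fst
  have hmY' := fun (k : σ) (a : α) (i : κ) => measurable_evalc (pderiv k (Y (a, i))) (f := fun z : (σ → ℝ) × (σ → ℝ) => z.1) measurable_fst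
  have hmY2 := fun (k : σ) (a : α) (i : κ) => measurable_evalc (pderiv k (Y (a, i))) (f := fun z : (σ → ℝ) × (α → ℝ) => z.1) measurable_fst
  have hInt : Integrable (Function.uncurry fun (N : σ → ℝ) (ξ : α → ℝ) => Real.exp (-(1/2) * ∑ k, (∑ a, ξ a * (t * ∑ i, u i * eval N (pderiv k (Y (a, i))))) ^ 2)) ((gaussPi σ).prod (gaussPi α)) := by
    refine bddInt ?_ (fun z => abs_exp_neg_le (by positivity))
    unfold Function.uncurry
    fun_prop
  have e : ∀ ξ : α → ℝ, phi Y (fun b => t * ξ b.1 * u b.2) = ∫ N, Real.exp (-(1/2) * ∑ k, (∑ a, ξ a * (t * ∑ i, u i * eval N (pderiv k (Y (a, i))))) ^ 2) ∂gaussPi σ := by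
    intro ξ
    rw [phi]
    congr 1; ext N
    congr 2
    refine Finset.sum_congr rfl fun k _ => ?_
    rw [Fintype.sum_prod_type]
    congr 1
    refine Finset.sum_congr rfl fun a _ => ?_
    rw [Finset.mul_sum, Finset.mul_sum]
    refine Finset.sum_congr rfl fun i _ => ?_
    ring
  simp_rw [e]
  refine ⟨hInt.integral_prod_right, ?_⟩
  have hInt2 : Integrable (fun z : (σ → ℝ) × (σ → ℝ) => Real.exp (-(1/2) * ∑ a, ((x a + ∑ i, u i * eval z.1 (Y (a, i))) + ∑ k, (t * ∑ i, u i * eval z.1 (pderiv k (Y (a, i)))) * z.2 k) ^ 2)) ((gaussPi σ).prod (gaussPi σ)) := by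
    refine bddInt ?_ (fun z => abs_exp_neg_le (by positivity))
    refine Real.measurable_exp.comp (Measurable.const_mul (Finset.measurable_sum _ fun a _ => Measurable.pow_const (Measurable.add (Measurable.add measurable_const (Finset.measurable_sum _ fun i _ => (hmY a i).const_mul _)) (Finset.measurable_sum _ fun k _ => Measurable.mul (Measurable.const_mul (Finset.measurable_sum _ fun i _ => (hmY' k a i).const_mul _) _) ?_)) _) _)
    exact (measurable_pi_apply k).comp measurable_snd
  have e1 := integral_prod _ hInt2
  have e2 := integral_integral_swap hInt
  have i1 := hInt2.integral_prod_left
  have i2 := hInt.integral_prod_left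
  refine e1.le.trans (le_trans ?_ e2.le)
  refine integral_mono i1 i2 fun N => ?_
  exact fourier_ineq (fun a => x a + ∑ i, u i * eval N (Y (a, i))) (fun a k => t * ∑ i, u i * eval N (pderiv k (Y (a, i))))

lemma pdf_le (x : ℝ) : gaussianPDFReal 0 1 x ≤ 1/2 := by
  rw [gaussianPDFReal]
  have h1 : Real.exp (-(x - 0) ^ 2 / (2 * (1:NNReal))) ≤ 1 := Real.exp_le_one_iff.2 (by
    have : 0 ≤ (x - 0) ^ 2 := sq_nonneg _
    have h2 : (0:ℝ) < 2 * ((1:NNReal):ℝ) := by simp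
    rw [neg_div]; have := div_nonneg this h2.le; linarith)
  have h2 : (√(2 * Real.pi * (1:NNReal)))⁻¹ ≤ 1/2 := by
    rw [one_div]
    refine inv_anti₀ (by norm_num) ?_
    refine Real.le_sqrt_of_sq_le ?_
    have := Real.pi_gt_three
    simp; nlinarith
  have := mul_le_mul h2 h1 (Real.exp_pos _).le (by norm_num)
  rw [mul_one] at this
  exact this

lemma gauss_Icc_le {η : ℝ} (hη : 0 ≤ η) : (gaussianReal 0 1).real (Set.Icc (-η) η) ≤ η := by
  rw [Measure.real]
  refine ENNReal.toReal_le_of_le_ofReal hη ?_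
  rw [gaussianReal_apply 0 one_ne_zero]
  calc ∫⁻ x in Set.Icc (-η) η, gaussianPDF 0 1 x ≤ ∫⁻ x in Set.Icc (-η) η, ENNReal.ofReal (1/2) := by
        refine lintegral_mono fun x => ENNReal.ofReal_le_ofReal (pdf_le x)
    _ = ENNReal.ofReal η := by
        rw [setLIntegral_const, Real.volume_Icc, ← ENNReal.ofReal_mul (by norm_num)]
        congr 1; ring

lemma small_ball (r : ℕ) {η : ℝ} (hη : 0 ≤ η) : (gaussPi (Fin r)).real {ξ | ∀ a, |ξ a| ≤ η} ≤ η ^ r := by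
  have : {ξ : Fin r → ℝ | ∀ a, |ξ a| ≤ η} = Set.univ.pi fun _ => Set.Icc (-η) η := by
    ext ξ; simp only [Set.mem_setOf_eq, Set.mem_pi, Set.mem_univ, forall_true_left, Set.mem_Icc, abs_le]
  rw [this, Measure.real, gaussPi, Measure.pi_pi, ENNReal.toReal_prod]
  simp only [Finset.prod_const, Finset.card_univ, Fintype.card_fin]
  exact pow_le_pow_left₀ ENNReal.toReal_nonneg (gauss_Icc_le hη) r

lemma phi_avg {κ : Type} [Fintype κ] (r M' : ℕ) (Y : Fin r × κ → MvPolynomial σ ℝ) (u : κ → ℝ) (t η C' : ℝ) (ht : 0 < t) (hη : 0 < η)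
    (hs : 0 < ∑ i, u i ^ 2) (hC' : ∀ w, phi Y w * (∑ b, w b ^ 2) ^ M' ≤ C') :
    ∫ ξ, phi Y (fun b => t * ξ b.1 * u b.2) ∂gaussPi (Fin r) ≤ η ^ r + C' / (t ^ 2 * η ^ 2 * ∑ i, u i ^ 2) ^ M' := by
  have hInt := (fourier_phi Y 0 u t).1
  set S : Set (Fin r → ℝ) := {ξ | ∀ a, |ξ a| ≤ η}
  have hS : MeasurableSet S := by
    have : S = ⋂ a, {ξ | |ξ a| ≤ η} := by ext; simp [S]
    rw [this]
    exact MeasurableSet.iInter fun a => measurableSet_le (by fun_prop) measurable_const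
  set s := ∑ i, u i ^ 2
  have hC0 : 0 ≤ C' := (mul_nonneg (phi_nonneg Y 0) (by positivity)).trans (hC' 0)
  calc ∫ ξ, phi Y (fun b => t * ξ b.1 * u b.2) ∂gaussPi (Fin r)
      ≤ ∫ ξ, (S.indicator (fun _ => (1:ℝ)) ξ + C' / (t ^ 2 * η ^ 2 * s) ^ M') ∂gaussPi (Fin r) := by
        refine integral_mono hInt ?_ fun ξ => ?_
        · exact ((integrable_const _).indicator hS).add (integrable_const _)
        · by_cases hξ : ξ ∈ S
          · simp only [Set.indicator_of_mem hξ]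
            have := phi_le_one Y (fun b => t * ξ b.1 * u b.2)
            have h0 : 0 ≤ C' / (t ^ 2 * η ^ 2 * s) ^ M' := by positivity
            linarith
          · simp only [Set.indicator_of_notMem hξ, zero_add]
            rw [le_div_iff₀ (by positivity)]
            refine le_trans (mul_le_mul_of_nonneg_left ?_ (phi_nonneg _ _)) (hC' _)
            refine pow_le_pow_left₀ (by positivity) ?_ _
            simp only [S, Set.mem_setOf_eq, not_forall, not_le] at hξ
            obtain ⟨a, ha⟩ := hξ
            rw [Fintype.sum_prod_type]
            have h1 : ∑ i, (t * ξ a * u i) ^ 2 ≤ ∑ a, ∑ i, (t * ξ a * u i) ^ 2 :=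
              Finset.single_le_sum (f := fun a => ∑ i, (t * ξ a * u i) ^ 2) (fun a _ => by positivity) (Finset.mem_univ a)
            refine le_trans ?_ h1
            have : ∑ i, (t * ξ a * u i) ^ 2 = t ^ 2 * (ξ a) ^ 2 * s := by
              simp only [s, Finset.mul_sum, mul_pow]
            rw [this]
            have : η ^ 2 ≤ (ξ a) ^ 2 := by rw [← sq_abs (ξ a)]; gcongr
            gcongr
    _ ≤ _ := by
        rw [integral_add ((integrable_const _).indicator hS) (integrable_const _), integral_indicator_const _ hS]
        simp only [smul_eq_mul, mul_one, integral_const, probReal_univ, one_mul]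
        have := small_ball r hη.le
        gcongr

end part5


section part6
variable {σ : Type} [Fintype σ]

lemma Astep_real (M r p : ℕ) (hr : 16*M ≤ r) (hp : 2*M ≤ p) (ρ e C' c K E : ℝ) (hρ : 1 ≤ ρ) (he : 0 ≤ e) (hC' : 0 ≤ C') (hc : 0 ≤ c) (hK : 0 ≤ K)
    (h : E ≤ e * ((ρ⁻¹)^r + C' / (((ρ⁻¹)^6)^2 * (ρ⁻¹)^2 * ρ^16)^(8*M)) + c * (ρ^16 * (((ρ⁻¹)^6)^4 * K))^p) :
    E * (ρ^16)^M ≤ e * (1 + C') + c * K^p := by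
  have h0 : 0 < ρ := by linarith
  have e1 : ((ρ⁻¹)^6)^2 * (ρ⁻¹)^2 * ρ^16 = ρ^2 := by field_simp
  have e2 : ρ^16 * (((ρ⁻¹)^6)^4 * K) = (ρ⁻¹)^8 * K := by field_simp
  rw [e1, e2] at h
  have e3 : (ρ⁻¹)^r * (ρ^16)^M ≤ 1 := by
    rw [← pow_mul, inv_pow, inv_mul_le_iff₀ (by positivity), mul_one]
    exact pow_le_pow_right₀ hρ hr
  have e4 : C' / (ρ^2)^(8*M) * (ρ^16)^M = C' := by
    rw [← pow_mul, ← pow_mul, show 2*(8*M) = 16*M by ring]; field_simp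
  have e5 : ((ρ⁻¹)^8 * K)^p * (ρ^16)^M ≤ K^p := by
    rw [mul_pow, ← pow_mul, ← pow_mul, inv_pow, mul_assoc, inv_mul_le_iff₀ (by positivity), mul_comm]
    exact mul_le_mul_of_nonneg_right (pow_le_pow_right₀ hρ (by omega)) (by positivity)
  calc E * (ρ^16)^M ≤ (e * ((ρ⁻¹)^r + C' / (ρ^2)^(8*M)) + c * ((ρ⁻¹)^8 * K)^p) * (ρ^16)^M := by gcongr
    _ = e * ((ρ⁻¹)^r * (ρ^16)^M + C' / (ρ^2)^(8*M) * (ρ^16)^M) + c * (((ρ⁻¹)^8 * K)^p * (ρ^16)^M) := by ring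
    _ ≤ _ := by rw [e4]; gcongr

lemma exp_pt {α : Type} [Fintype α] (L R : α → ℝ) (W : ℝ) (p : ℕ) (hW : ∑ a, R a ^ 2 ≤ W) :
    Real.exp (-∑ a, (L a + R a) ^ 2) ≤ Real.exp 1 * Real.exp (-(1/2) * ∑ a, L a ^ 2) + W ^ p := by
  have h0 : (0:ℝ) ≤ ∑ a, R a ^ 2 := by positivity
  have hp : 0 ≤ W ^ p := pow_nonneg (h0.trans hW) p
  by_cases h : W ≤ 1
  · rw [← Real.exp_add]
    have : Real.exp (-∑ a, (L a + R a) ^ 2) ≤ Real.exp (1 + -(1/2) * ∑ a, L a ^ 2) := by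
      refine Real.exp_le_exp.2 ?_
      have : (1/2) * ∑ a, L a ^ 2 - ∑ a, R a ^ 2 ≤ ∑ a, (L a + R a) ^ 2 := by
        rw [Finset.mul_sum, ← Finset.sum_sub_distrib]
        refine Finset.sum_le_sum fun a _ => ?_
        nlinarith [sq_nonneg (L a + 2 * R a)]
      linarith
    linarith
  · have h1 : Real.exp (-∑ a, (L a + R a) ^ 2) ≤ 1 := Real.exp_le_one_iff.2 (by
      have : 0 ≤ ∑ a, (L a + R a) ^ 2 := by positivity
      linarith)
    have h2 : 1 ≤ W ^ p := one_le_pow₀ (by linarith)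
    have h3 : 0 ≤ Real.exp 1 * Real.exp (-(1/2) * ∑ a, L a ^ 2) := by positivity
    linarith

lemma exp_neg_le1 {a : ℝ} (h : 0 ≤ a) : |Real.exp (-a)| ≤ 1 := by
  rw [abs_of_pos (Real.exp_pos _)]; exact Real.exp_le_one_iff.2 (by linarith)

lemma Astep (D M r k : ℕ) (κ : Type) [Fintype κ] (B' C' : ℝ) (hB : 0 ≤ B') (hC : 0 ≤ C') (hr : 16*M ≤ r) (hk : 2*M ≤ 2^k) :
    ∃ C'' : ℝ, ∀ (σ : Type) [Fintype σ] (Y : Fin r × κ → MvPolynomial σ ℝ), (∀ b, (Y b).totalDegree ≤ D) → (∀ b, gE ((Y b)^2) ≤ B') →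
      (∀ w, phi Y w * (∑ b, w b ^ 2) ^ (8*M) ≤ C') → ∀ (x : Fin r → ℝ) (u : κ → ℝ),
      (∫ N, Real.exp (-∑ a, (x a + ∑ i, u i * eval N (Y (a, i))) ^ 2) ∂gaussPi σ) * (∑ i, u i ^ 2) ^ M ≤ C'' := by
  obtain ⟨c, hc0, hc⟩ := hyp_pow (D+1) k
  set K : ℝ := ∑ b : Fin r × κ, 5*D^2*B' with hKdef
  have hK : 0 ≤ K := by positivity
  refine ⟨1 + (Real.exp 1 * (1 + C') + c * K^(2^k)), fun σ _ Y hY hYB hphi x u => ?_⟩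
  have hpos2 : 0 ≤ Real.exp 1 * (1 + C') + c * K^(2^k) := by positivity
  have hmY := fun (a : Fin r) (i : κ) => measurable_eval (Y (a, i))
  have hmX : Measurable fun N : σ → ℝ => Real.exp (-∑ a, (x a + ∑ i, u i * eval N (Y (a, i))) ^ 2) := by fun_prop
  have hle1 : ∫ N, Real.exp (-∑ a, (x a + ∑ i, u i * eval N (Y (a, i))) ^ 2) ∂gaussPi σ ≤ 1 := by
    calc _ ≤ ∫ N, (1:ℝ) ∂gaussPi σ := by
          refine integral_mono (bddInt hmX fun N => exp_neg_le1 (by positivity)) (integrable_const _) fun N => ?_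
          exact (le_abs_self _).trans (exp_neg_le1 (by positivity))
      _ = 1 := by simp
  have hge0 : 0 ≤ ∫ N, Real.exp (-∑ a, (x a + ∑ i, u i * eval N (Y (a, i))) ^ 2) ∂gaussPi σ := integral_nonneg fun N => (Real.exp_pos _).le
  set s := ∑ i, u i ^ 2 with hs
  have hs0 : 0 ≤ s := by positivity
  rcases le_or_gt s 1 with hs1 | hs1
  · have : s ^ M ≤ 1 := pow_le_one₀ hs0 hs1
    have := mul_le_mul hle1 this (by positivity) zero_le_one
    linarith
  obtain ⟨ρ, hρ1, hρ⟩ : ∃ ρ : ℝ, 1 ≤ ρ ∧ s = ρ^16 := by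
    refine ⟨s ^ ((1:ℝ)/16), Real.one_le_rpow hs1.le (by norm_num), ?_⟩
    rw [← Real.rpow_natCast, ← Real.rpow_mul hs0]; norm_num
  have hρ0 : 0 < ρ := by linarith
  set t : ℝ := (ρ⁻¹)^6 with ht
  have ht0 : 0 < t := by positivity
  -- rotate
  have hrot : ∫ N, Real.exp (-∑ a, (x a + ∑ i, u i * eval N (Y (a, i))) ^ 2) ∂gaussPi σ
      = ∫ z, Real.exp (-∑ a, (x a + ∑ i, u i * eval (fun k => Real.cos t * z.1 k + Real.sin t * z.2 k) (Y (a, i))) ^ 2) ∂((gaussPi σ).prod (gaussPi σ)) := by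
    conv_lhs => rw [← rot_map t]
    rw [integral_map (by fun_prop) hmX.aestronglyMeasurable]
  set Z : MvPolynomial (σ ⊕ σ) ℝ := (∑ b, (remPoly t (Y b))^2) with hZ
  have hZint := gE_sumtype ((C s * Z)^(2^k))
  set L : (σ → ℝ) × (σ → ℝ) → Fin r → ℝ := fun z a => ((x a + ∑ i, u i * eval z.1 (Y (a, i))) + ∑ k, (t * ∑ i, u i * eval z.1 (pderiv k (Y (a, i)))) * z.2 k) with hL
  have hpt : ∀ z : (σ → ℝ) × (σ → ℝ), Real.exp (-∑ a, (x a + ∑ i, u i * eval (fun k => Real.cos t * z.1 k + Real.sin t * z.2 k) (Y (a, i))) ^ 2)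
      ≤ Real.exp 1 * Real.exp (-(1/2) * ∑ a, L z a ^ 2) + eval (Sum.elim z.1 z.2) ((C s * Z)^(2^k)) := by
    intro z
    have e1 : ∀ a, x a + ∑ i, u i * eval (fun k => Real.cos t * z.1 k + Real.sin t * z.2 k) (Y (a, i)) = L z a + ∑ i, u i * eval (Sum.elim z.1 z.2) (remPoly t (Y (a, i))) := by
      intro a
      simp only [hL]
      rw [add_assoc, add_assoc]
      congr 1
      have : ∑ k, (t * ∑ i, u i * eval z.1 (pderiv k (Y (a, i)))) * z.2 k = ∑ i, u i * (t * ∑ k, eval z.1 (pderiv k (Y (a, i))) * z.2 k) := by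
        simp_rw [Finset.mul_sum, Finset.sum_mul]
        rw [Finset.sum_comm]
        refine Finset.sum_congr rfl fun i _ => Finset.sum_congr rfl fun k _ => ?_
        ring
      rw [this, ← Finset.sum_add_distrib, ← Finset.sum_add_distrib]
      refine Finset.sum_congr rfl fun i _ => ?_
      rw [eval_rem]; ring
    simp_rw [e1]
    rw [map_pow]
    refine exp_pt _ _ _ _ ?_
    rw [map_mul, eval_C, hZ, map_sum, Fintype.sum_prod_type, Finset.mul_sum]
    refine Finset.sum_le_sum fun a _ => ?_
    refine (Finset.sum_mul_sq_le_sq_mul_sq _ _ _).trans ?_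
    simp [hs]
  have hF := (fourier_phi Y x u t).2
  have hA := phi_avg r (8*M) Y u t (ρ⁻¹) C' ht0 (by positivity) (by linarith) hphi
  have hZb : gE ((C s * Z)^(2^k)) ≤ c * (ρ^16 * (t^4*K))^(2^k) := by
    have h1 := hc (σ ⊕ σ) (Fin r × κ) (fun b => remPoly t (Y b)) (fun b => td_rem t (hY b))
    have h2 : gE Z ≤ t^4*K := by
      rw [hZ, gE_sum, hKdef, Finset.mul_sum]
      refine Finset.sum_le_sum fun b _ => (gE_rem_le (hY b) ht0.le).trans ?_
      have := hYB b
      gcongr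
    have h0 : 0 ≤ gE Z := gE_nonneg fun z => by rw [hZ, map_sum]; exact Finset.sum_nonneg fun b _ => by rw [map_pow]; positivity
    rw [mul_pow, ← map_pow, gE_smul, mul_pow (ρ^16), ← hρ]
    calc s^(2^k) * gE (Z^(2^k)) ≤ s^(2^k) * (c * (t^4*K)^(2^k)) := by
          refine mul_le_mul_of_nonneg_left (h1.trans ?_) (by positivity)
          gcongr
      _ = _ := by ring
  have hmL : Measurable fun z => Real.exp (-(1/2) * ∑ a, L z a ^ 2) := by
    have hmY := fun (a : Fin r) (i : κ) => measurable_evalc (Y (a, i)) (f := fun z : (σ → ℝ) × (σ → ℝ) => z.1) measurable_fst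
    have hmY' := fun (k : σ) (a : Fin r) (i : κ) => measurable_evalc (pderiv k (Y (a, i))) (f := fun z : (σ → ℝ) × (σ → ℝ) => z.1) measurable_fst
    refine Real.measurable_exp.comp (Measurable.const_mul (Finset.measurable_sum _ fun a _ => Measurable.pow_const (Measurable.add (Measurable.add measurable_const (Finset.measurable_sum _ fun i _ => (hmY a i).const_mul _)) (Finset.measurable_sum _ fun k _ => Measurable.mul (Measurable.const_mul (Finset.measurable_sum _ fun i _ => (hmY' k a i).const_mul _) _) ?_)) _) _)
    exact (measurable_pi_apply k).comp measurable_snd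
  have hiL : Integrable (fun z => Real.exp 1 * Real.exp (-(1/2) * ∑ a, L z a ^ 2)) ((gaussPi σ).prod (gaussPi σ)) :=
    (bddInt hmL fun z => abs_exp_neg_le (by positivity)).const_mul _
  have hE : ∫ N, Real.exp (-∑ a, (x a + ∑ i, u i * eval N (Y (a, i))) ^ 2) ∂gaussPi σ ≤
      Real.exp 1 * ((ρ⁻¹)^r + C' / (((ρ⁻¹)^6)^2 * (ρ⁻¹)^2 * ρ^16)^(8*M)) + c * (ρ^16 * (((ρ⁻¹)^6)^4 * K))^(2^k) := by
    rw [hrot]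
    refine (integral_mono_of_nonneg (ae_of_all _ fun z => (Real.exp_pos _).le) (hiL.add hZint.1) (ae_of_all _ hpt)).trans ?_
    have := integral_add hiL hZint.1
    rw [integral_const_mul, ← hZint.2] at this
    refine this.le.trans (add_le_add ?_ hZb)
    refine mul_le_mul_of_nonneg_left ?_ (Real.exp_pos _).le
    refine hF.trans (hA.trans ?_)
    rw [← hρ]
  have := Astep_real M r (2^k) hr hk ρ (Real.exp 1) C' c K _ hρ1 (Real.exp_pos _).le hC hc0 hK hE
  rw [hρ]
  linarith

end part6


section part7
variable {σ : Type} [Fintype σ]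

noncomputable def Yg (g : σ → ℝ) (p : MvPolynomial σ ℝ) : MvPolynomial σ ℝ := ∑ k, C (g k) * pderiv k p

lemma td_Yg {m : ℕ} (g : σ → ℝ) {p : MvPolynomial σ ℝ} (hp : p.totalDegree ≤ m) : (Yg g p).totalDegree ≤ m - 1 :=
  td_sum _ fun k _ => td_smul _ (td_pderiv k hp)

lemma Yg_sub (g : σ → ℝ) (p q : MvPolynomial σ ℝ) : Yg g (p - q) = Yg g p - Yg g q := by
  simp only [Yg, map_sub, mul_sub, Finset.sum_sub_distrib]

lemma eig_Yg {m : ℕ} (g : σ → ℝ) {p : MvPolynomial σ ℝ} (hm : 1 ≤ m) (hp : Lop p = -(C (m:ℝ) * p)) :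
    Lop (Yg g p) = -(C ((m-1:ℕ):ℝ) * Yg g p) := by
  simp only [Yg, Lop_sum, Lop_smul, eig_pderiv hm hp, Finset.mul_sum, ← Finset.sum_neg_distrib]
  refine Finset.sum_congr rfl fun k _ => ?_
  ring

lemma gam_Yg (g h : σ → ℝ) (p q : MvPolynomial σ ℝ) :
    gam (Yg g p) (Yg h q) = ∑ k, ∑ l, C (g k) * (C (h l) * gam (pderiv k p) (pderiv l q)) := by
  simp only [Yg, gam_sum_left, gam_sum_right, gam_smul_left]
  rw [Finset.sum_comm]
  refine Finset.sum_congr rfl fun k _ => Finset.sum_congr rfl fun l _ => ?_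
  rw [gam_comm, gam_smul_left, gam_comm]

lemma eval_Yg (g : σ → ℝ) (p : MvPolynomial σ ℝ) (x : σ → ℝ) : eval x (Yg g p) = ∑ k, g k * eval x (pderiv k p) := by
  simp [Yg]

lemma fub {κ : Type} [Fintype κ] (h : (κ → ℝ) → MvPolynomial σ ℝ) (p : MvPolynomial σ ℝ)
    (hm : Measurable fun z : (κ → ℝ) × (σ → ℝ) => eval z.2 (h z.1)) (h0 : ∀ G N, 0 ≤ eval N (h G))
    (hi : ∀ N, Integrable (fun G => eval N (h G)) (gaussPi κ)) (hp : ∀ N, ∫ G, eval N (h G) ∂gaussPi κ ≤ eval N p) :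
    Measurable (fun G => ENNReal.ofReal (gE (h G))) ∧ ∫⁻ G, ENNReal.ofReal (gE (h G)) ∂gaussPi κ ≤ ENNReal.ofReal (gE p) := by
  have e : ∀ G, ENNReal.ofReal (gE (h G)) = ∫⁻ N, ENNReal.ofReal (eval N (h G)) ∂gaussPi σ := fun G =>
    ofReal_integral_eq_lintegral_ofReal (integrable_poly _) (ae_of_all _ (h0 G))
  have hm' : Measurable fun z : (κ → ℝ) × (σ → ℝ) => ENNReal.ofReal (eval z.2 (h z.1)) := hm.ennreal_ofReal
  simp_rw [e]
  refine ⟨hm'.lintegral_prod_right', ?_⟩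
  rw [lintegral_lintegral_swap (f := fun G N => ENNReal.ofReal (eval N (h G))) hm'.aemeasurable]
  have hp0 : ∀ N, 0 ≤ eval N p := fun N => (integral_nonneg (fun G => h0 G N)).trans (hp N)
  have e2 : ENNReal.ofReal (gE p) = ∫⁻ N, ENNReal.ofReal (eval N p) ∂gaussPi σ :=
    ofReal_integral_eq_lintegral_ofReal (integrable_poly _) (ae_of_all _ hp0)
  rw [e2]
  refine lintegral_mono fun N => ?_
  simp only
  rw [← ofReal_integral_eq_lintegral_ofReal (hi N) (ae_of_all _ fun G => h0 G N)]
  exact ENNReal.ofReal_le_ofReal (hp N)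

lemma fub_quad {r : ℕ} (a b : Fin r) (p q : MvPolynomial σ ℝ) (t A : ℝ)
    (hA : 4 * ∑ k, ∑ l, gE (gam (pderiv k p) (pderiv l q) ^ 2) + gE (((if a = b then ∑ k, gam (pderiv k p) (pderiv k q) else 0) - C t) ^ 2) ≤ A) :
    Measurable (fun G : Fin r × σ → ℝ => ENNReal.ofReal (gE ((gam (Yg (fun k => G (a, k)) p) (Yg (fun k => G (b, k)) q) - C t) ^ 2))) ∧
    ∫⁻ G, ENNReal.ofReal (gE ((gam (Yg (fun k => G (a, k)) p) (Yg (fun k => G (b, k)) q) - C t) ^ 2)) ∂gaussPi (Fin r × σ) ≤ ENNReal.ofReal A := by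
  classical
  have ev : ∀ (G : Fin r × σ → ℝ) (N : σ → ℝ), eval N ((gam (Yg (fun k => G (a, k)) p) (Yg (fun k => G (b, k)) q) - C t) ^ 2)
      = (∑ k, ∑ l, eval N (gam (pderiv k p) (pderiv l q)) * G (a, k) * G (b, l) - t) ^ 2 := by
    intro G N
    rw [gam_Yg]
    simp only [map_pow, map_sub, map_sum, map_mul, eval_C]
    congr 2
    refine Finset.sum_congr rfl fun k _ => Finset.sum_congr rfl fun l _ => ?_
    ring
  have := fub (fun G : Fin r × σ → ℝ => (gam (Yg (fun k => G (a, k)) p) (Yg (fun k => G (b, k)) q) - C t) ^ 2)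
    (C 4 * ∑ k, ∑ l, (gam (pderiv k p) (pderiv l q) ^ 2) + (((if a = b then ∑ k, gam (pderiv k p) (pderiv k q) else 0) - C t) ^ 2)) ?_ ?_ ?_ ?_
  · refine ⟨this.1, this.2.trans (ENNReal.ofReal_le_ofReal ?_)⟩
    simpa only [gE_add, gE_smul, gE_sum] using hA
  · simp_rw [ev]
    have hh := fun k l => measurable_evalc (gam (pderiv k p) (pderiv l q)) (f := fun z : (Fin r × σ → ℝ) × (σ → ℝ) => z.2) measurable_snd
    fun_prop
  · intro G N; rw [map_pow]; positivity
  · intro N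
    simp_rw [ev]
    have := integrable_poly ((∑ k, ∑ l, C (eval N (gam (pderiv k p) (pderiv l q))) * X (a, k) * X (b, l) - C t) ^ 2 : MvPolynomial (Fin r × σ) ℝ)
    simpa using this
  · intro N
    simp_rw [ev]
    refine (quad_lemma (Fin r × σ) (fun k => (a, k)) (fun l => (b, l)) (fun _ _ h => by simpa using h) (fun _ _ h => by simpa using h)
      (fun k l => eval N (gam (pderiv k p) (pderiv l q))) t).trans (le_of_eq ?_)
    simp only [map_add, map_mul, eval_C, map_sum, map_pow, map_sub]
    congr 3
    by_cases hab : a = b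
    · simp [hab]
    · simp [hab]

lemma fub_lin {r : ℕ} (a : Fin r) (p : MvPolynomial σ ℝ) :
    Measurable (fun G : Fin r × σ → ℝ => ENNReal.ofReal (gE ((Yg (fun k => G (a, k)) p) ^ 2))) ∧
    ∫⁻ G, ENNReal.ofReal (gE ((Yg (fun k => G (a, k)) p) ^ 2)) ∂gaussPi (Fin r × σ) ≤ ENNReal.ofReal (gE (gam p p)) := by
  have ev : ∀ (G : Fin r × σ → ℝ) (N : σ → ℝ), eval N ((Yg (fun k => G (a, k)) p) ^ 2)
      = eval G ((∑ l, C (eval N (pderiv l p)) * X (a, l) : MvPolynomial (Fin r × σ) ℝ) ^ 2) := by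
    intro G N
    rw [map_pow, eval_Yg]
    simp [mul_comm]
  refine fub (fun G : Fin r × σ → ℝ => (Yg (fun k => G (a, k)) p) ^ 2) (gam p p) ?_ ?_ ?_ ?_
  · simp only [map_pow, eval_Yg]
    have hh := fun k => measurable_evalc (pderiv k p) (f := fun z : (Fin r × σ → ℝ) × (σ → ℝ) => z.2) measurable_snd
    fun_prop
  · intro G N; rw [map_pow]; positivity
  · intro N
    simp_rw [ev]
    exact integrable_poly _
  · intro N
    simp_rw [ev]
    refine (gE_linform_sq (Fin r × σ) (fun l => (a, l)) (fun _ _ h => by simpa using h) (fun l => eval N (pderiv l p))).le.trans (le_of_eq ?_)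
    simp [gam, pow_two]

lemma markov2 {Ω : Type*} [MeasurableSpace Ω] (μ : Measure Ω) [IsProbabilityMeasure μ] (f g : Ω → ENNReal) (hf : Measurable f) (hg : Measurable g)
    (A B : ℝ) (hA : 0 < A) (hB : 0 < B) (h1 : ∫⁻ x, f x ∂μ ≤ ENNReal.ofReal A) (h2 : ∫⁻ x, g x ∂μ ≤ ENNReal.ofReal B) :
    MeasurableSet {x | f x < ENNReal.ofReal (4*A) ∧ g x < ENNReal.ofReal (4*B)} ∧
    1/2 ≤ μ.real {x | f x < ENNReal.ofReal (4*A) ∧ g x < ENNReal.ofReal (4*B)} := by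
  have key : ∀ (f : Ω → ENNReal), Measurable f → ∀ A : ℝ, 0 < A → ∫⁻ x, f x ∂μ ≤ ENNReal.ofReal A → μ.real {x | ENNReal.ofReal (4*A) ≤ f x} ≤ 1/4 := by
    intro f hf A hA h1
    have := (mul_meas_ge_le_lintegral hf (μ := μ) (ENNReal.ofReal (4*A))).trans h1
    have h3 := ENNReal.toReal_mono ENNReal.ofReal_ne_top this
    rw [ENNReal.toReal_mul, ENNReal.toReal_ofReal (by positivity), ENNReal.toReal_ofReal hA.le] at h3
    change 4 * A * μ.real _ ≤ A at h3
    nlinarith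
  have hms : MeasurableSet {x | f x < ENNReal.ofReal (4*A) ∧ g x < ENNReal.ofReal (4*B)} :=
    (measurableSet_lt hf measurable_const).inter (measurableSet_lt hg measurable_const)
  refine ⟨hms, ?_⟩
  have h3 := probReal_compl_eq_one_sub hms (μ := μ)
  have h4 : {x | f x < ENNReal.ofReal (4*A) ∧ g x < ENNReal.ofReal (4*B)}ᶜ = {x | ENNReal.ofReal (4*A) ≤ f x} ∪ {x | ENNReal.ofReal (4*B) ≤ g x} := by
    ext x; simp only [Set.mem_compl_iff, Set.mem_setOf_eq, not_and_or, not_lt, Set.mem_union]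
  have h5 := measureReal_union_le (μ := μ) {x | ENNReal.ofReal (4*A) ≤ f x} {x | ENNReal.ofReal (4*B) ≤ g x}
  rw [← h4] at h5
  have := key f hf A hA h1
  have := key g hg B hB h2
  linarith

end part7


section part8
variable {σ : Type} [Fintype σ]

structure Hyp {ι : Type} (m : ι → ℕ) (cc : ι → ι → ℝ) (B τ : ℝ) (F Q : ι → MvPolynomial σ ℝ) : Prop where
  eig : ∀ i, Lop (Q i) = -(C (m i : ℝ) * Q i)
  tdF : ∀ i, (F i).totalDegree ≤ m i
  tdQ : ∀ i, (Q i).totalDegree ≤ m i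
  tdR : ∀ i, (F i - Q i).totalDegree ≤ m i - 1
  l2 : ∀ i, gE (F i ^ 2) ≤ B
  gm : ∀ i j, gE ((gam (Q i) (Q j) - C (cc i j)) ^ 2) ≤ τ

noncomputable def ccn {κ : Type} (r : ℕ) (m : κ → ℕ) (cc : κ → κ → ℝ) (b b' : Fin r × κ) : ℝ :=
  if b.1 = b'.1 then ((m b.2 - 1 + (m b'.2 - 1) : ℕ) : ℝ) / 2 * cc b.2 b'.2 else 0

noncomputable def Yfam {κ : Type} {r : ℕ} (G : Fin r × σ → ℝ) (F : κ → MvPolynomial σ ℝ) (b : Fin r × κ) : MvPolynomial σ ℝ :=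
  Yg (fun k => G (b.1, k)) (F b.2)

lemma pair_le {r : ℕ} {κ : Type} {m : κ → ℕ} {cc : κ → κ → ℝ} {B τ : ℝ} {F Q : κ → MvPolynomial σ ℝ} (hm : ∀ i, 2 ≤ m i)
    (H : Hyp m cc B τ F Q) (b b' : Fin r × κ) :
    4 * ∑ k, ∑ l, gE (gam (pderiv k (Q b.2)) (pderiv l (Q b'.2)) ^ 2) + gE (((if b.1 = b'.1 then ∑ k, gam (pderiv k (Q b.2)) (pderiv k (Q b'.2)) else 0) - C (ccn r m cc b b')) ^ 2)
      ≤ 5 * ((m b.2 + m b'.2 : ℕ) : ℝ) ^ 2 * τ := by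
  have h1 : ∀ i, 1 ≤ m i := fun i => by have := hm i; omega
  have hτ : 0 ≤ τ := (gE_sq_nonneg _).trans (H.gm b.2 b.2)
  have e1 := HS_le (h1 b.2) (h1 b'.2) (H.eig _) (H.eig _) (H.tdQ _) (H.tdQ _) (H.gm b.2 b.2) (H.gm b'.2 b'.2)
  have e2 := trace_le (h1 b.2) (h1 b'.2) (H.eig _) (H.eig _) (H.tdQ _) (H.tdQ _) (H.gm b.2 b'.2)
  unfold ccn
  split_ifs with h
  · linarith
  · have : gE ((0 - C 0 : MvPolynomial σ ℝ) ^ 2) = 0 := by simp [gE_zero]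
    rw [this]
    have : 0 ≤ ((m b.2 + m b'.2 : ℕ) : ℝ) ^ 2 * τ := by positivity
    linarith

lemma good {κ : Type} [Fintype κ] (r : ℕ) (m : κ → ℕ) (hm : ∀ i, 2 ≤ m i) (cc : κ → κ → ℝ) (B τ' : ℝ) (hB : 0 < B) (hτ' : 0 < τ') :
    ∃ τ : ℝ, 0 < τ ∧ ∀ (σ : Type) [Fintype σ] (F Q : κ → MvPolynomial σ ℝ), Hyp m cc B τ F Q →
      ∃ S : Set (Fin r × σ → ℝ), MeasurableSet S ∧ 1/2 ≤ (gaussPi (Fin r × σ)).real S ∧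
        ∀ G ∈ S, Hyp (fun b : Fin r × κ => m b.2 - 1) (ccn r m cc) (4 * (∑ b : Fin r × κ, (m b.2 : ℝ) * B + 1)) τ' (Yfam G F) (Yfam G Q) := by
  set K : ℝ := ∑ b : Fin r × κ, ∑ b' : Fin r × κ, 5 * ((m b.2 + m b'.2 : ℕ) : ℝ) ^ 2 + 1 with hKd
  have hK : 0 < K := by positivity
  refine ⟨τ' / (4 * K), by positivity, fun σ _ F Q H => ?_⟩
  set τ := τ' / (4 * K) with hτd
  have hτ : 0 < τ := by positivity
  have hKτ : 4 * (K * τ) = τ' := by rw [hτd]; field_simp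
  set f : (Fin r × σ → ℝ) → ENNReal := fun G => ∑ b : Fin r × κ, ∑ b' : Fin r × κ, ENNReal.ofReal (gE ((gam (Yfam G Q b) (Yfam G Q b') - C (ccn r m cc b b')) ^ 2)) with hf
  set g : (Fin r × σ → ℝ) → ENNReal := fun G => ∑ b : Fin r × κ, ENNReal.ofReal (gE ((Yfam G F b) ^ 2)) with hg
  have hq : ∀ b b' : Fin r × κ, Measurable (fun G : Fin r × σ → ℝ => ENNReal.ofReal (gE ((gam (Yfam G Q b) (Yfam G Q b') - C (ccn r m cc b b')) ^ 2))) ∧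
      ∫⁻ G, ENNReal.ofReal (gE ((gam (Yfam G Q b) (Yfam G Q b') - C (ccn r m cc b b')) ^ 2)) ∂gaussPi (Fin r × σ) ≤ ENNReal.ofReal (5 * ((m b.2 + m b'.2 : ℕ) : ℝ) ^ 2 * τ) :=
    fun b b' : Fin r × κ => fub_quad b.1 b'.1 (Q b.2) (Q b'.2) (ccn r m cc b b') _ (pair_le hm H b b')
  have hl : ∀ b : Fin r × κ, Measurable (fun G : Fin r × σ → ℝ => ENNReal.ofReal (gE ((Yfam G F b) ^ 2))) ∧
      ∫⁻ G, ENNReal.ofReal (gE ((Yfam G F b) ^ 2)) ∂gaussPi (Fin r × σ) ≤ ENNReal.ofReal (gE (gam (F b.2) (F b.2))) :=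
    fun b : Fin r × κ => fub_lin (r := r) b.1 (F b.2)
  have hfm : Measurable f := Finset.measurable_sum _ fun b _ => Finset.measurable_sum _ fun b' _ => (hq b b').1
  have hgm : Measurable g := Finset.measurable_sum _ fun b _ => (hl b).1
  have hfi : ∫⁻ G, f G ∂gaussPi (Fin r × σ) ≤ ENNReal.ofReal (K * τ) := by
    simp only [hf]
    rw [lintegral_finsetSum _ fun b _ => Finset.measurable_sum _ fun b' _ => (hq b b').1]
    calc _ ≤ ∑ b : Fin r × κ, ∑ b' : Fin r × κ, ENNReal.ofReal (5 * ((m b.2 + m b'.2 : ℕ) : ℝ) ^ 2 * τ) := by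
          refine Finset.sum_le_sum fun b _ => ?_
          rw [lintegral_finsetSum _ fun b' _ => (hq b b').1]
          exact Finset.sum_le_sum fun b' _ => (hq b b').2
      _ = ENNReal.ofReal (∑ b : Fin r × κ, ∑ b' : Fin r × κ, (5 * ((m b.2 + m b'.2 : ℕ) : ℝ) ^ 2 * τ)) := by
          rw [ENNReal.ofReal_sum_of_nonneg fun b _ => by positivity]
          refine Finset.sum_congr rfl fun b _ => ?_
          rw [ENNReal.ofReal_sum_of_nonneg fun b _ => by positivity]
      _ ≤ _ := by
          refine ENNReal.ofReal_le_ofReal ?_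
          rw [hKd, add_mul, Finset.sum_mul]
          simp_rw [Finset.sum_mul]
          linarith
  have hgi : ∫⁻ G, g G ∂gaussPi (Fin r × σ) ≤ ENNReal.ofReal (∑ b : Fin r × κ, (m b.2 : ℝ) * B + 1) := by
    simp only [hg]
    rw [lintegral_finsetSum _ fun b _ => (hl b).1]
    calc _ ≤ ∑ b : Fin r × κ, ENNReal.ofReal ((m b.2 : ℝ) * B) := by
          refine Finset.sum_le_sum fun b _ => (hl b).2.trans (ENNReal.ofReal_le_ofReal ?_)
          exact (gam_le (H.tdF _)).trans (mul_le_mul_of_nonneg_left (H.l2 _) (by positivity))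
      _ = ENNReal.ofReal (∑ b : Fin r × κ, (m b.2 : ℝ) * B) := by
          rw [ENNReal.ofReal_sum_of_nonneg fun b _ => by positivity]
      _ ≤ _ := ENNReal.ofReal_le_ofReal (by linarith)
  obtain ⟨hS1, hS2⟩ := markov2 (gaussPi (Fin r × σ)) f g hfm hgm (K * τ) (∑ b : Fin r × κ, (m b.2 : ℝ) * B + 1) (by positivity) (by positivity) hfi hgi
  refine ⟨_, hS1, hS2, fun G hG => ?_⟩
  obtain ⟨hG1, hG2⟩ := hG
  have h1 : ∀ i, 1 ≤ m i := fun i => by have := hm i; omega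
  refine ⟨fun b => eig_Yg _ (h1 _) (H.eig _), fun b => td_Yg _ (H.tdF _), fun b => td_Yg _ (H.tdQ _), fun b => ?_, fun b => ?_, fun b b' => ?_⟩
  · unfold Yfam; rw [← Yg_sub]; exact td_Yg _ (H.tdR _)
  · have h : ENNReal.ofReal (gE ((Yfam G F b) ^ 2)) ≤ g G := by
      rw [hg]; exact Finset.single_le_sum (f := fun b => ENNReal.ofReal (gE ((Yfam G F b) ^ 2))) (fun _ _ => zero_le) (Finset.mem_univ b)
    exact (ENNReal.ofReal_le_ofReal_iff (by positivity)).1 (h.trans hG2.le)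
  · have h : ENNReal.ofReal (gE ((gam (Yfam G Q b) (Yfam G Q b') - C (ccn r m cc b b')) ^ 2)) ≤ f G := by
      rw [hf]
      refine le_trans ?_ (Finset.single_le_sum (f := fun b => ∑ b', ENNReal.ofReal (gE ((gam (Yfam G Q b) (Yfam G Q b') - C (ccn r m cc b b')) ^ 2))) (fun _ _ => zero_le) (Finset.mem_univ b))
      exact Finset.single_le_sum (f := fun b' => ENNReal.ofReal (gE ((gam (Yfam G Q b) (Yfam G Q b') - C (ccn r m cc b b')) ^ 2))) (fun _ _ => zero_le) (Finset.mem_univ b')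
    rw [hKτ] at hG1
    exact (ENNReal.ofReal_le_ofReal_iff hτ'.le).1 (h.trans hG1.le)

lemma L1core {ι : Type} [Fintype ι] {r : ℕ} (S : Set (Fin r × σ → ℝ)) (hS : MeasurableSet S) (hS2 : 1/2 ≤ (gaussPi (Fin r × σ)).real S)
    (F : ι → MvPolynomial σ ℝ) (u : ι → ℝ) (E : ℝ) (hE0 : 0 ≤ E)
    (hE : ∀ G ∈ S, ∫ N, Real.exp (-∑ a, (∑ k, G (a, k) * ∑ i, u i * eval N (pderiv k (F i))) ^ 2) ∂gaussPi σ ≤ E) :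
    phi F (fun i => 2 * √r * u i) ≤ 2 * E := by
  set V : (σ → ℝ) → σ → ℝ := fun N k => ∑ i, u i * eval N (pderiv k (F i)) with hV
  have hVm : ∀ k, Measurable fun N => V N k := fun k => by
    have := fun i => measurable_eval (pderiv k (F i))
    simp only [hV]; fun_prop
  have hVm2 : ∀ k, Measurable fun z : (σ → ℝ) × (Fin r × σ → ℝ) => V z.1 k := fun k => (hVm k).comp measurable_fst
  have hInt : Integrable (Function.uncurry fun (N : σ → ℝ) (G : Fin r × σ → ℝ) => Real.exp (-∑ a, (∑ k, G (a, k) * V N k) ^ 2)) ((gaussPi σ).prod ((gaussPi (Fin r × σ)).restrict S)) := by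
    refine bddInt ?_ (fun z => exp_neg_le1 (by positivity))
    unfold Function.uncurry
    fun_prop
  have hpt : ∀ N, Real.exp (-(1/2) * ∑ k, (∑ i, (2 * √r * u i) * eval N (pderiv k (F i))) ^ 2)
      ≤ 2 * ∫ G in S, Real.exp (-∑ a, (∑ k, G (a, k) * V N k) ^ 2) ∂gaussPi (Fin r × σ) := by
    intro N
    set y : ℝ := ∑ k, V N k ^ 2 with hy
    have hy0 : 0 ≤ y := by positivity
    have e1 : -(1/2) * ∑ k, (∑ i, (2 * √r * u i) * eval N (pderiv k (F i))) ^ 2 = -(2 * r * y) := by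
      have : ∀ k, (∑ i, (2 * √r * u i) * eval N (pderiv k (F i))) ^ 2 = 4 * r * V N k ^ 2 := by
        intro k
        simp only [hV, mul_assoc, ← Finset.mul_sum]
        rw [mul_pow, mul_pow, Real.sq_sqrt (Nat.cast_nonneg r)]; ring
      simp_rw [this, ← Finset.mul_sum, ← hy]; ring
    rw [e1]
    have hlin := fun a => gE_linform_sq (Fin r × σ) (fun l => (a, l)) (fun _ _ h => by simpa using h) (fun l => V N l)
    have hXp : ∀ G : Fin r × σ → ℝ, ∑ a, (∑ k, G (a, k) * V N k) ^ 2 = eval G (∑ a, (∑ l, C (V N l) * X (a, l) : MvPolynomial (Fin r × σ) ℝ) ^ 2) := by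
      intro G; simp [mul_comm]
    have hXi : Integrable (fun G : Fin r × σ → ℝ => ∑ a, (∑ k, G (a, k) * V N k) ^ 2) (gaussPi (Fin r × σ)) := by
      simp_rw [hXp]; exact integrable_poly _
    have hXv : ∫ G, ∑ a, (∑ k, G (a, k) * V N k) ^ 2 ∂gaussPi (Fin r × σ) = r * y := by
      simp_rw [hXp]
      change gE _ = _
      rw [gE_sum]
      simp_rw [hlin]
      simp [hy]
    have hXS : ∫ G in S, ∑ a, (∑ k, G (a, k) * V N k) ^ 2 ∂gaussPi (Fin r × σ) ≤ r * y := by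
      rw [← hXv]; exact setIntegral_le_integral hXi (ae_of_all _ fun G => by positivity)
    have hlow : ∫ G in S, (Real.exp (-(2*r*y)) * ((1 + 2*r*y) - ∑ a, (∑ k, G (a, k) * V N k) ^ 2)) ∂gaussPi (Fin r × σ)
        ≤ ∫ G in S, Real.exp (-∑ a, (∑ k, G (a, k) * V N k) ^ 2) ∂gaussPi (Fin r × σ) := by
      refine integral_mono ?_ ?_ fun G => ?_
      · exact ((integrable_const _).sub hXi.integrableOn).const_mul _
      · exact bddInt (by fun_prop) fun z => exp_neg_le1 (by positivity)
      · simp only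
        have := Real.add_one_le_exp (2*r*y - ∑ a, (∑ k, G (a, k) * V N k) ^ 2)
        calc Real.exp (-(2*r*y)) * ((1 + 2*r*y) - ∑ a, (∑ k, G (a, k) * V N k) ^ 2)
            ≤ Real.exp (-(2*r*y)) * Real.exp (2*r*y - ∑ a, (∑ k, G (a, k) * V N k) ^ 2) := by
              refine mul_le_mul_of_nonneg_left ?_ (Real.exp_pos _).le
              linarith
          _ = _ := by rw [← Real.exp_add]; congr 1; ring
    rw [integral_const_mul, integral_sub (integrable_const _) hXi.integrableOn, setIntegral_const, smul_eq_mul] at hlow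
    have hexp := Real.exp_pos (-(2*r*y))
    have hry : 0 ≤ r * y := by positivity
    have : (1/2) * (1 + 2 * r * y) ≤ (gaussPi (Fin r × σ)).real S * (1 + 2*r*y) :=
      mul_le_mul_of_nonneg_right hS2 (by linarith)
    have h3 : Real.exp (-(2*r*y)) * (1/2) ≤ Real.exp (-(2*r*y)) * ((gaussPi (Fin r × σ)).real S * (1 + 2*r*y) - ∫ G in S, ∑ a, (∑ k, G (a, k) * V N k) ^ 2 ∂gaussPi (Fin r × σ)) := by
      refine mul_le_mul_of_nonneg_left ?_ hexp.le
      linarith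
    linarith
  have hi1 := hInt.integral_prod_left
  have hsw := integral_integral_swap hInt
  calc phi F (fun i => 2 * √r * u i) ≤ ∫ N, 2 * ∫ G in S, Real.exp (-∑ a, (∑ k, G (a, k) * V N k) ^ 2) ∂gaussPi (Fin r × σ) ∂gaussPi σ := by
        refine integral_mono_of_nonneg (ae_of_all _ fun z => (Real.exp_pos _).le) (hi1.const_mul 2) (ae_of_all _ hpt)
    _ = 2 * ∫ G in S, ∫ N, Real.exp (-∑ a, (∑ k, G (a, k) * V N k) ^ 2) ∂gaussPi σ ∂gaussPi (Fin r × σ) := by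
        rw [integral_const_mul]; exact congrArg (2 * ·) hsw
    _ ≤ 2 * ∫ G in S, E ∂gaussPi (Fin r × σ) := by
        refine mul_le_mul_of_nonneg_left ?_ (by norm_num)
        exact setIntegral_mono_on hInt.integral_prod_right (integrable_const _) hS hE
    _ ≤ 2 * E := by
        rw [setIntegral_const, smul_eq_mul]
        have : (gaussPi (Fin r × σ)).real S ≤ 1 := measureReal_le_one
        nlinarith

end part8


section part9
variable {σ : Type} [Fintype σ]

lemma combine_real (M p : ℕ) (hp : 2*M ≤ p) (f s1 s2 C1 C2 a : ℝ) (hf0 : 0 ≤ f) (hf1 : f ≤ 1) (h1 : 0 ≤ s1) (h2 : 0 ≤ s2) (ha : 0 < a)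
    (hC1 : 0 ≤ C1) (hC2 : 0 ≤ C2) (hL1 : f * s2^(2*M) ≤ C1) (hL2 : 0 < s1 → f ≤ Real.exp (-(a * s1)) + C2 * (s2/s1)^p) :
    f * (s1+s2)^M ≤ 2^M * (1 + C1 + (M.factorial / a^M + C2)) := by
  have hfac : (0:ℝ) ≤ M.factorial / a^M := by positivity
  have h2M : (0:ℝ) < 2^M := by positivity
  have triv : s1 + s2 ≤ 2 → f * (s1+s2)^M ≤ 2^M * (1 + C1 + (M.factorial / a^M + C2)) := by
    intro h
    calc f * (s1+s2)^M ≤ 1 * 2^M := by gcongr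
      _ ≤ _ := by nlinarith
  rcases le_or_gt s1 (s2^2) with h | h
  · rcases le_or_gt s2 1 with h' | h'
    · apply triv; nlinarith
    · calc f * (s1+s2)^M ≤ f * (2 * s2^2)^M := by
            refine mul_le_mul_of_nonneg_left (pow_le_pow_left₀ (by positivity) ?_ _) hf0
            nlinarith
        _ = 2^M * (f * s2^(2*M)) := by rw [mul_pow, ← pow_mul]; ring
        _ ≤ 2^M * (1 + C1 + (M.factorial / a^M + C2)) := by
            refine mul_le_mul_of_nonneg_left ?_ h2M.le
            linarith
  · rcases le_or_gt s1 1 with h' | h'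
    · apply triv; nlinarith
    · have h0 : 0 < s1 := by linarith
      have hle : s2 ≤ s1 := by nlinarith
      have e1 : Real.exp (-(a*s1)) * s1^M ≤ M.factorial / a^M := by
        have := Real.pow_div_factorial_le_exp (a*s1) (by positivity) M
        rw [Real.exp_neg, inv_mul_le_iff₀ (Real.exp_pos _)]
        rw [div_le_iff₀ (by positivity), mul_pow] at this
        rw [mul_div_assoc', le_div_iff₀ (by positivity)]
        linarith
      have e2 : (s2/s1)^p * s1^M ≤ 1 := by
        have hq1 : s2/s1 ≤ 1 := (div_le_one h0).2 hle
        calc (s2/s1)^p * s1^M ≤ (s2/s1)^(2*M) * s1^M := by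
              refine mul_le_mul_of_nonneg_right (pow_le_pow_of_le_one (by positivity) hq1 hp) (by positivity)
          _ = (s2^2/s1)^M := by
              rw [pow_mul, ← mul_pow]; congr 1; field_simp
          _ ≤ 1 := pow_le_one₀ (by positivity) ((div_le_one h0).2 h.le)
      calc f * (s1+s2)^M ≤ (Real.exp (-(a * s1)) + C2 * (s2/s1)^p) * (2*s1)^M := by
            refine mul_le_mul (hL2 h0) (pow_le_pow_left₀ (by positivity) (by linarith) _) (by positivity) (by positivity)
        _ = 2^M * (Real.exp (-(a*s1)) * s1^M + C2 * ((s2/s1)^p * s1^M)) := by rw [mul_pow]; ring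
        _ ≤ 2^M * (M.factorial / a^M + C2 * 1) := by gcongr
        _ ≤ _ := by
            refine mul_le_mul_of_nonneg_left ?_ h2M.le
            linarith

lemma Hyp.mono {ι : Type} {m : ι → ℕ} {cc : ι → ι → ℝ} {B τ τ' : ℝ} {F Q : ι → MvPolynomial σ ℝ} (H : Hyp m cc B τ F Q) (h : τ ≤ τ') :
    Hyp m cc B τ' F Q := ⟨H.eig, H.tdF, H.tdQ, H.tdR, H.l2, fun i j => (H.gm i j).trans h⟩

lemma Hyp.comp {ι κ : Type} {m : ι → ℕ} {cc : ι → ι → ℝ} {B τ : ℝ} {F Q : ι → MvPolynomial σ ℝ} (H : Hyp m cc B τ F Q) (e : κ → ι) :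
    Hyp (fun i => m (e i)) (fun i j => cc (e i) (e j)) B τ (fun i => F (e i)) (fun i => Q (e i)) :=
  ⟨fun i => H.eig _, fun i => H.tdF _, fun i => H.tdQ _, fun i => H.tdR _, fun i => H.l2 _, fun i j => H.gm _ _⟩

/-- degree one components: constant gradients, quantitative nondegeneracy. -/
lemma deg1_lower {κ : Type} [Fintype κ] {m : κ → ℕ} (hm : ∀ i, m i = 1) {cc : κ → κ → ℝ} {B c0 : ℝ} (hc0 : 0 < c0) (hcc : ∀ i, c0 ≤ cc i i)
    (hcc0 : ∀ i j, i ≠ j → cc i j = 0) {F Q : κ → MvPolynomial σ ℝ}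
    (H : Hyp m cc B ((c0 / (2 * (Fintype.card κ + 1)))^2) F Q) (u : κ → ℝ) (N : σ → ℝ) :
    c0 / 2 * ∑ i, u i ^ 2 ≤ ∑ k, (∑ i, u i * eval N (pderiv k (F i))) ^ 2 := by
  classical
  set ε : ℝ := c0 / (2 * (Fintype.card κ + 1)) with hε
  have hε0 : 0 < ε := by positivity
  have hd : ∀ i k, pderiv k (F i) = pderiv k (Q i) := by
    intro i k
    have h0 : (F i - Q i).totalDegree = 0 := by
      have := H.tdR i; rw [hm i] at this; omega
    rw [totalDegree_eq_zero_iff_eq_C] at h0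
    have : F i = Q i + C (coeff 0 (F i - Q i)) := by rw [← h0]; ring
    rw [this, map_add, pderiv_C, add_zero]
  have ha : ∀ i j, |eval N (gam (Q i) (Q j)) - cc i j| ≤ ε := by
    intro i j
    have h0 : (gam (Q i) (Q j)).totalDegree = 0 := by
      have := td_gam (H.tdQ i) (H.tdQ j); rw [hm i, hm j] at this; omega
    rw [totalDegree_eq_zero_iff_eq_C] at h0
    have h1 := H.gm i j
    rw [h0] at h1 ⊢
    rw [← C_sub, ← C_pow, gE_C] at h1
    rw [eval_C]
    exact abs_le_of_sq_le_sq h1 hε0.le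
  have e1 : ∑ k, (∑ i, u i * eval N (pderiv k (F i))) ^ 2 = ∑ i, ∑ j, u i * u j * eval N (gam (Q i) (Q j)) := by
    have e0 : ∀ k, (∑ i, u i * eval N (pderiv k (F i))) ^ 2 = ∑ i, ∑ j, (u i * eval N (pderiv k (Q i))) * (u j * eval N (pderiv k (Q j))) := by
      intro k; rw [pow_two, Finset.sum_mul_sum]; simp only [hd]
    simp only [e0, gam, map_sum, map_mul, Finset.mul_sum]
    rw [Finset.sum_comm]
    refine Finset.sum_congr rfl fun i _ => ?_
    rw [Finset.sum_comm]
    refine Finset.sum_congr rfl fun j _ => Finset.sum_congr rfl fun k _ => ?_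
    ring
  rw [e1]
  have e2 : ∑ i, ∑ j, (u i * u j * cc i j - ε * (|u i| * |u j|)) ≤ ∑ i, ∑ j, u i * u j * eval N (gam (Q i) (Q j)) := by
    refine Finset.sum_le_sum fun i _ => Finset.sum_le_sum fun j _ => ?_
    have h1 : |u i * u j * (eval N (gam (Q i) (Q j)) - cc i j)| ≤ |u i| * |u j| * ε := by
      rw [abs_mul, abs_mul]; exact mul_le_mul_of_nonneg_left (ha i j) (by positivity)
    have := (abs_le.1 h1).1
    linarith
  have e3 : ∑ i, ∑ j, (u i * u j * cc i j - ε * (|u i| * |u j|)) = ∑ i, u i ^ 2 * cc i i - ε * (∑ i, |u i|) ^ 2 := by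
    simp_rw [Finset.sum_sub_distrib]
    congr 1
    · refine Finset.sum_congr rfl fun i _ => ?_
      rw [Finset.sum_eq_single i]
      · ring
      · intro j _ hj; rw [hcc0 i j hj.symm, mul_zero]
      · simp
    · rw [pow_two, Finset.sum_mul_sum, Finset.mul_sum]
      refine Finset.sum_congr rfl fun i _ => ?_
      rw [Finset.mul_sum]
  have e4 : c0 * ∑ i, u i ^ 2 ≤ ∑ i, u i ^ 2 * cc i i := by
    rw [Finset.mul_sum]
    refine Finset.sum_le_sum fun i _ => ?_
    rw [mul_comm]; exact mul_le_mul_of_nonneg_left (hcc i) (sq_nonneg _)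
  have e5 : (∑ i, |u i|) ^ 2 ≤ Fintype.card κ * ∑ i, u i ^ 2 := by
    have := sq_sum_le_card_mul_sum_sq (s := Finset.univ) (f := fun i => |u i|)
    simpa using this
  have e6 : ε * (Fintype.card κ) ≤ c0 / 2 := by
    rw [hε, div_mul_eq_mul_div, div_le_div_iff₀ (by positivity) (by norm_num)]
    nlinarith
  have hs : 0 ≤ ∑ i, u i ^ 2 := by positivity
  have e7 : ε * (∑ i, |u i|) ^ 2 ≤ c0 / 2 * ∑ i, u i ^ 2 := by
    calc ε * (∑ i, |u i|) ^ 2 ≤ ε * (Fintype.card κ * ∑ i, u i ^ 2) := by gcongr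
      _ = ε * Fintype.card κ * ∑ i, u i ^ 2 := by ring
      _ ≤ _ := by gcongr
  linarith

lemma exp_pt2 {V1 V2 : σ → ℝ} (p : ℕ) (A W : ℝ) (hA : 0 < A) (h1 : A ≤ ∑ k, V1 k ^ 2) (h2 : ∑ k, V2 k ^ 2 ≤ W) :
    Real.exp (-(1/2) * ∑ k, (V1 k + V2 k)^2) ≤ Real.exp (-(A/8)) + (4 / A * W) ^ p := by
  have h0 : 0 ≤ ∑ k, V2 k ^ 2 := by positivity
  have h3 : (1/2) * ∑ k, V1 k ^ 2 - ∑ k, V2 k ^ 2 ≤ ∑ k, (V1 k + V2 k) ^ 2 := by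
    rw [Finset.mul_sum, ← Finset.sum_sub_distrib]
    refine Finset.sum_le_sum fun a _ => ?_
    nlinarith [sq_nonneg (V1 a + 2 * V2 a)]
  have hW : 0 ≤ 4 / A * W := mul_nonneg (by positivity) (h0.trans h2)
  by_cases h : 4 / A * W ≤ 1
  · have h4 : W ≤ A / 4 := by
      rw [div_mul_eq_mul_div, div_le_one hA] at h; linarith
    have : Real.exp (-(1/2) * ∑ k, (V1 k + V2 k)^2) ≤ Real.exp (-(A/8)) := Real.exp_le_exp.2 (by linarith)
    have := pow_nonneg hW p
    linarith
  · have h5 : 1 ≤ (4 / A * W) ^ p := one_le_pow₀ (by linarith)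
    have h6 : Real.exp (-(1/2) * ∑ k, (V1 k + V2 k)^2) ≤ 1 := (le_abs_self _).trans (abs_exp_neg_le (by positivity))
    have := Real.exp_pos (-(A/8))
    linarith

open Classical in
lemma L2 {ι : Type} [Fintype ι] (m : ι → ℕ) (hm : ∀ i, 1 ≤ m i) (D : ℕ) (hD : ∀ i, m i ≤ D) (cc : ι → ι → ℝ) (B c0 : ℝ) (hB : 0 < B) (hc0 : 0 < c0)
    (hcc : ∀ i, c0 ≤ cc i i) (hcc0 : ∀ i j, i ≠ j → cc i j = 0) (k : ℕ) :
    ∃ τ : ℝ, 0 < τ ∧ ∃ C2 : ℝ, 0 ≤ C2 ∧ ∀ (σ : Type) [Fintype σ] (F Q : ι → MvPolynomial σ ℝ), Hyp m cc B τ F Q → ∀ u : ι → ℝ,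
      0 < ∑ i : {i // ¬ 2 ≤ m i}, u i ^ 2 → phi F u ≤ Real.exp (-(c0/16 * ∑ i : {i // ¬ 2 ≤ m i}, u i ^ 2)) +
        C2 * ((∑ i : {i // 2 ≤ m i}, u i ^ 2) / ∑ i : {i // ¬ 2 ≤ m i}, u i ^ 2) ^ (2^k) := by
  obtain ⟨c, hc0', hc⟩ := hyp_pow D k
  set S : ℝ := ∑ i : {i // 2 ≤ m i}, m i * B with hS
  have hS0 : 0 ≤ S := by positivity
  refine ⟨(c0 / (2 * (Fintype.card {i // ¬ 2 ≤ m i} + 1)))^2, by positivity, (8/c0)^(2^k) * (c * S^(2^k)), by positivity, fun σ _ F Q H u hs1 => ?_⟩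
  set s1 := ∑ i : {i // ¬ 2 ≤ m i}, u i ^ 2 with hs1d
  set s2 := ∑ i : {i // 2 ≤ m i}, u i ^ 2 with hs2d
  have hs20 : 0 ≤ s2 := by positivity
  have hlow := deg1_lower (κ := {i // ¬ 2 ≤ m i}) (m := fun i => m i) (fun i => by have := hm i; have := i.2; omega) hc0 (fun i => hcc i)
    (fun i j hij => hcc0 _ _ (fun h => hij (Subtype.ext h))) (H.comp (fun i : {i // ¬ 2 ≤ m i} => (i : ι))) (fun i => u i)
  set Z : MvPolynomial σ ℝ := ∑ b : {i // 2 ≤ m i} × σ, pderiv b.2 (F b.1) ^ 2 with hZ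
  have hpt : ∀ N, Real.exp (-(1/2) * ∑ k, (∑ i, u i * eval N (pderiv k (F i))) ^ 2)
      ≤ Real.exp (-(c0/16 * s1)) + eval N (C ((8/c0 * (s2/s1))^(2^k)) * Z^(2^k)) := by
    intro N
    have e : ∀ k, ∑ i, u i * eval N (pderiv k (F i)) = ∑ i : {i // ¬ 2 ≤ m i}, u i * eval N (pderiv k (F i)) + ∑ i : {i // 2 ≤ m i}, u i * eval N (pderiv k (F i)) := by
      intro k
      rw [add_comm]
      exact (Fintype.sum_subtype_add_sum_subtype (fun i => 2 ≤ m i) (fun i => u i * eval N (pderiv k (F i)))).symm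
    simp_rw [e]
    refine (exp_pt2 (2^k) (c0/2 * s1) (s2 * eval N Z) (by positivity) (hlow N) ?_).trans (le_of_eq ?_)
    · rw [hZ, map_sum, Fintype.sum_prod_type, Finset.sum_comm, Finset.mul_sum]
      refine Finset.sum_le_sum fun k _ => ?_
      refine (Finset.sum_mul_sq_le_sq_mul_sq _ _ _).trans ?_
      simp [hs2d]
    · rw [map_mul, eval_C, map_pow, ← mul_pow]
      congr 2
      · ring
      · field_simp; ring
  have hZb : gE (Z^(2^k)) ≤ c * S^(2^k) := by
    have h1 := hc σ ({i // 2 ≤ m i} × σ) (fun b => pderiv b.2 (F b.1)) (fun b => (td_pderiv _ (H.tdF _)).trans ((Nat.sub_le _ _).trans (hD _)))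
    refine h1.trans (mul_le_mul_of_nonneg_left (pow_le_pow_left₀ ?_ ?_ _) hc0')
    · exact gE_nonneg fun x => by rw [map_sum]; exact Finset.sum_nonneg fun b _ => by rw [map_pow]; positivity
    · rw [Fintype.sum_prod_type, gE_sum, hS]
      refine Finset.sum_le_sum fun i _ => ?_
      have := (gam_le (H.tdF i)).trans (mul_le_mul_of_nonneg_left (H.l2 i) (by positivity))
      simpa only [gam, pow_two] using this
  calc phi F u ≤ ∫ N, (Real.exp (-(c0/16 * s1)) + eval N (C ((8/c0 * (s2/s1))^(2^k)) * Z^(2^k))) ∂gaussPi σ :=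
        integral_mono_of_nonneg (ae_of_all _ fun z => (Real.exp_pos _).le) ((integrable_const _).add (integrable_poly _)) (ae_of_all _ hpt)
    _ = Real.exp (-(c0/16 * s1)) + (8/c0 * (s2/s1))^(2^k) * gE (Z^(2^k)) := by
        rw [integral_add (integrable_const _) (integrable_poly _)]
        rw [integral_const, probReal_univ, one_smul]
        congr 1
        exact gE_smul _ _
    _ ≤ Real.exp (-(c0/16 * s1)) + (8/c0 * (s2/s1))^(2^k) * (c * S^(2^k)) := by gcongr
    _ = _ := by rw [mul_pow]; ring

end part9


section part10
variable {σ : Type} [Fintype σ]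

open Classical in
lemma L1 {ι : Type} [Fintype ι] (m : ι → ℕ) (hm : ∀ i, 1 ≤ m i) (r M : ℕ) (hr : 0 < r) (F : ι → MvPolynomial σ ℝ) (hF : ∀ i, (F i).totalDegree ≤ m i)
    (S : Set (Fin r × σ → ℝ)) (hS : MeasurableSet S) (hS2 : 1/2 ≤ (gaussPi (Fin r × σ)).real S) (C'' : ℝ) (hC : 0 ≤ C'')
    (hA : ∀ G ∈ S, ∀ (x : Fin r → ℝ) (u : {i // 2 ≤ m i} → ℝ),
      (∫ N, Real.exp (-∑ a, (x a + ∑ i, u i * eval N (Yfam G (fun i : {i // 2 ≤ m i} => F i) (a, i))) ^ 2) ∂gaussPi σ) * (∑ i, u i ^ 2) ^ M ≤ C'')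
    (u : ι → ℝ) : phi F u * (∑ i : {i // 2 ≤ m i}, u i ^ 2) ^ M ≤ 2 * (4 * r) ^ M * C'' + 1 := by
  set s2 := ∑ i : {i // 2 ≤ m i}, u i ^ 2 with hs2
  have hs20 : 0 ≤ s2 := by positivity
  rcases hs20.eq_or_lt with h0 | h0
  · rw [← h0]
    have : (0:ℝ)^M ≤ 1 := pow_le_one₀ le_rfl zero_le_one
    have := mul_le_mul (phi_le_one F u) this (by positivity) zero_le_one
    have h2 : 0 ≤ 2 * (4 * r : ℝ) ^ M * C'' := by positivity
    linarith
  have hr0 : 0 < √(r:ℝ) := by positivity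
  set v : ι → ℝ := fun i => u i / (2 * √r) with hv
  have hvs : ∑ i : {i // 2 ≤ m i}, v i ^ 2 = s2 / (4 * r) := by
    simp only [hv, div_pow, mul_pow, Real.sq_sqrt (Nat.cast_nonneg r), hs2, Finset.sum_div]
    norm_num
  have huv : u = fun i => 2 * √r * v i := by
    ext i; simp only [hv]; field_simp
  have hE : ∀ G ∈ S, ∫ N, Real.exp (-∑ a, (∑ k, G (a, k) * ∑ i, v i * eval N (pderiv k (F i))) ^ 2) ∂gaussPi σ ≤ C'' / (s2 / (4*r))^M := by
    intro G hG
    rw [le_div_iff₀ (by positivity), ← hvs]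
    refine le_trans (le_of_eq ?_) (hA G hG (fun a => ∑ i : {i // ¬ 2 ≤ m i}, v i * eval 0 (Yg (fun k => G (a, k)) (F i))) (fun i => v i))
    congr 2
    ext N
    congr 2
    refine Finset.sum_congr rfl fun a _ => ?_
    congr 1
    have e1 : ∑ k, G (a, k) * ∑ i, v i * eval N (pderiv k (F i)) = ∑ i, v i * eval N (Yg (fun k => G (a, k)) (F i)) := by
      simp only [eval_Yg, Finset.mul_sum]
      rw [Finset.sum_comm]
      refine Finset.sum_congr rfl fun i _ => Finset.sum_congr rfl fun k _ => ?_
      ring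
    rw [e1, ← Fintype.sum_subtype_add_sum_subtype (fun i => 2 ≤ m i), add_comm]
    congr 1
    refine Finset.sum_congr rfl fun i _ => ?_
    have h0 : (Yg (fun k => G (a, k)) (F i)).totalDegree = 0 := by
      have := td_Yg (fun k => G (a, k)) (hF i)
      have := i.2
      omega
    rw [totalDegree_eq_zero_iff_eq_C] at h0
    rw [h0, eval_C, eval_C]
  have := L1core S hS hS2 F v (C'' / (s2 / (4*r))^M) (by positivity) hE
  rw [← huv] at this
  calc phi F u * s2^M ≤ 2 * (C'' / (s2 / (4*r))^M) * s2^M := by gcongr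
    _ = 2 * (4 * r) ^ M * C'' := by rw [div_pow]; field_simp
    _ ≤ _ := by linarith

theorem mainProp (D : ℕ) : ∀ (ι : Type) [Fintype ι] (m : ι → ℕ) (cc : ι → ι → ℝ) (B : ℝ) (M : ℕ),
    (∀ i, 1 ≤ m i) → (∀ i, m i ≤ D) → (∀ i, 0 < cc i i) → (∀ i j, i ≠ j → cc i j = 0) → 0 < B →
    ∃ τ : ℝ, 0 < τ ∧ ∃ C : ℝ, 0 ≤ C ∧ ∀ (σ : Type) [Fintype σ] (F Q : ι → MvPolynomial σ ℝ), Hyp m cc B τ F Q →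
      ∀ u : ι → ℝ, phi F u * (∑ i, u i ^ 2) ^ M ≤ C := by
  classical
  induction D with
  | zero =>
    intro ι _ m cc B M h1 h2 _ _ _
    haveI : IsEmpty ι := ⟨fun i => by have := h1 i; have := h2 i; omega⟩
    refine ⟨1, one_pos, 1, zero_le_one, fun σ _ F Q _ u => ?_⟩
    have : (∑ i, u i ^ 2) ^ M ≤ 1 := by
      rw [Finset.univ_eq_empty, Finset.sum_empty]; exact pow_le_one₀ le_rfl zero_le_one
    have := mul_le_mul (phi_le_one F u) this (by rw [Finset.univ_eq_empty, Finset.sum_empty]; positivity) zero_le_one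
    linarith
  | succ D ih =>
    intro ι _ m cc B M h1 h2 hcc hcc0 hB
    obtain ⟨c0, hc0, hcc'⟩ : ∃ c0 : ℝ, 0 < c0 ∧ ∀ i, c0 ≤ cc i i := by
      rcases isEmpty_or_nonempty ι with h | h
      · exact ⟨1, one_pos, fun i => (h.false i).elim⟩
      · obtain ⟨i, hi⟩ := Finite.exists_min (fun i => cc i i)
        exact ⟨cc i i, hcc i, hi⟩
    set M1 := 2 * M with hM1
    set r := 16 * M1 + 1 with hr
    set k := 2 * M1 with hk
    have hk2 : 2 * M1 ≤ 2 ^ k := (Nat.lt_two_pow_self).le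
    set B' : ℝ := 4 * (∑ b : Fin r × {i // 2 ≤ m i}, (m b.2 : ℝ) * B + 1) with hB'
    have hB'0 : 0 < B' := by positivity
    obtain ⟨τ', hτ', C', hC', hI⟩ := ih (Fin r × {i // 2 ≤ m i}) (fun b => m b.2 - 1)
      (ccn r (fun i : {i // 2 ≤ m i} => m i) (fun i j => cc i j)) B' (8 * M1)
      (fun b => by have := b.2.2; omega) (fun b => by have := h2 b.2; omega)
      (fun b => by
        have h := b.2.2
        have h3 : 0 < m b.2 - 1 := by omega
        simp only [ccn, if_true]
        have : (0:ℝ) < ((m b.2 - 1 + (m b.2 - 1) : ℕ) : ℝ) := by exact_mod_cast (by omega)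
        have := hcc b.2
        positivity)
      (fun b b' hbb => by
        unfold ccn
        split_ifs with h
        · have : (b.2 : ι) ≠ b'.2 := fun h' => hbb (Prod.ext h (Subtype.ext h'))
          simp only [hcc0 _ _ this, mul_zero]
        · rfl) hB'0
    obtain ⟨C'', hA⟩ := Astep D M1 r k {i // 2 ≤ m i} B' C' hB'0.le hC' (by omega) hk2
    obtain ⟨τ1, hτ1, hgood⟩ := good (κ := {i // 2 ≤ m i}) r (fun i => m i) (fun i => i.2) (fun i j => cc i j) B τ' hB hτ'
    obtain ⟨τ2, hτ2, C2, hC2, hL2⟩ := L2 m h1 (D+1) h2 cc B c0 hB hc0 hcc' hcc0 M1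
    have hp : 2 * M ≤ 2 ^ M1 := (Nat.lt_two_pow_self).le
    set C1 : ℝ := 2 * (4 * r) ^ M1 * max C'' 0 + 1 with hC1
    have hC10 : 0 ≤ C1 := by positivity
    refine ⟨min τ1 τ2, lt_min hτ1 hτ2, 2^M * (1 + C1 + (M.factorial / (c0/16)^M + C2)), by positivity, fun σ _ F Q H u => ?_⟩
    obtain ⟨S, hS, hS2, hSG⟩ := hgood σ _ _ ((H.mono (min_le_left _ _)).comp (fun i : {i // 2 ≤ m i} => (i : ι)))
    have key := L1 m h1 r M1 (by omega) F H.tdF S hS hS2 (max C'' 0) (le_max_right _ _) (fun G hG x v => by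
      have HG := hSG G hG
      refine le_trans ?_ (le_max_left _ _)
      exact hA σ (Yfam G (fun i : {i // 2 ≤ m i} => F i)) (fun b => (HG.tdF b).trans (by have := h2 b.2; omega)) (fun b => HG.l2 b)
        (fun w => hI σ _ _ HG w) x v) u
    have := combine_real M (2 ^ M1) hp (phi F u) (∑ i : {i // ¬ 2 ≤ m i}, u i ^ 2) (∑ i : {i // 2 ≤ m i}, u i ^ 2) C1 C2 (c0/16)
      (phi_nonneg _ _) (phi_le_one _ _) (by positivity) (by positivity) (by positivity) hC10 hC2 key (hL2 σ F Q (H.mono (min_le_right _ _)) u)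
    rwa [add_comm, Fintype.sum_subtype_add_sum_subtype (fun i => 2 ≤ m i) (fun i => u i ^ 2)] at this

end part10

section part11
variable {σ : Type} [Fintype σ]

lemma eval_aeval_eq {ι : Type} (Q : ι → MvPolynomial σ ℝ) (p : MvPolynomial ι ℝ) (x : σ → ℝ) :
    eval x (aeval Q p) = eval (fun i => eval x (Q i)) p := by
  induction p using MvPolynomial.induction_on with
  | C a => simp
  | add p q hp hq => simp only [map_add, hp, hq]
  | mul_X p i hp => simp only [map_mul, hp, aeval_X, eval_X]

noncomputable def clampR (A t : ℝ) : ℝ := max (-A) (min A t)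

lemma clampR_cont (A : ℝ) : Continuous (clampR A) := by unfold clampR; fun_prop

lemma clampR_abs {A : ℝ} (hA : 0 < A) (t : ℝ) : |clampR A t| ≤ A := by
  unfold clampR
  rw [abs_le]
  exact ⟨le_max_left _ _, max_le (by linarith) (min_le_left _ _)⟩

lemma clampR_sub {A : ℝ} (hA : 0 < A) (t : ℝ) : |t - clampR A t| ≤ t ^ 2 / A := by
  unfold clampR
  rw [le_div_iff₀ hA]
  rcases le_total t A with h | h
  · rw [min_eq_right h]
    rcases le_total (-A) t with h' | h'
    · rw [max_eq_right h']; simp; positivity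
    · rw [max_eq_left h', abs_of_nonpos (by linarith)]; nlinarith
  · rw [min_eq_left h, max_eq_right (by linarith), abs_of_nonneg (by linarith)]; nlinarith

lemma clamp_int {A : ℝ} (hA : 0 < A) (p : MvPolynomial σ ℝ) :
    |gE p - ∫ x, clampR A (eval x p) ∂gaussPi σ| ≤ gE (p ^ 2) / A := by
  have hi : Integrable (fun x => clampR A (eval x p)) (gaussPi σ) :=
    Integrable.of_bound ((clampR_cont A).measurable.comp (measurable_eval p)).aestronglyMeasurable A
      (ae_of_all _ fun x => clampR_abs hA _)
  unfold gE
  rw [← integral_sub (integrable_poly p) hi, ← integral_div]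
  refine (abs_integral_le_integral_abs).trans ?_
  refine integral_mono ((integrable_poly p).sub hi).abs ((integrable_poly (p^2)).div_const A) fun x => ?_
  simpa using clampR_sub hA (eval x p)

lemma mom_conv {d : ℕ} {K : ℕ → ℕ} (Q : (n : ℕ) → Fin d → MvPolynomial (Fin (K n)) ℝ)
    (hlaw : TendstoInLaw
      (fun n => Measure.map (fun x i => eval x (Q n i)) (gaussPi (Fin (K n))))
      (gaussPi (Fin d))) (p : MvPolynomial (Fin d) ℝ) (B : ℝ)
    (hB : ∀ n, gE ((aeval (Q n) p) ^ 2) ≤ B) :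
    Tendsto (fun n => gE (aeval (Q n) p)) atTop (𝓝 (gE p)) := by
  rw [Metric.tendsto_atTop]
  intro ε hε
  set S : ℝ := |B| + gE (p^2) + 1 with hS
  have hp2 := gE_sq_nonneg p
  have hS0 : 0 < S := by positivity
  set A : ℝ := 4 * S / ε with hAdef
  have hA : 0 < A := by positivity
  let f : BoundedContinuousFunction (Fin d → ℝ) ℝ := BoundedContinuousFunction.ofNormedAddCommGroup
    (fun y => clampR A (eval y p)) ((clampR_cont A).comp (MvPolynomial.continuous_eval p)) A (fun y => clampR_abs hA _)
  have h1 := hlaw f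
  rw [Metric.tendsto_atTop] at h1
  obtain ⟨N, hN⟩ := h1 (ε/4) (by positivity)
  refine ⟨N, fun n hn => ?_⟩
  have h2 := hN n hn
  have hm : Measurable (fun (x : Fin (K n) → ℝ) i => eval x (Q n i)) :=
    measurable_pi_lambda _ fun i => measurable_eval _
  rw [integral_map hm.aemeasurable f.continuous.aestronglyMeasurable] at h2
  have h3 := clamp_int hA (aeval (Q n) p)
  have h4 := clamp_int hA p
  simp only [eval_aeval_eq] at h3
  have hSA : S / A = ε / 4 := by rw [hAdef]; field_simp
  have h5 : gE ((aeval (Q n) p)^2) / A ≤ ε/4 := by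
    rw [← hSA]; gcongr; have := hB n; have := le_abs_self B; linarith
  have h6 : gE (p^2) / A ≤ ε/4 := by
    rw [← hSA]; gcongr; have := abs_nonneg B; linarith
  rw [Real.dist_eq] at h2 ⊢
  have hf : ∀ y, f y = clampR A (eval y p) := fun y => rfl
  simp only [hf] at h2
  rw [abs_lt] at h2 ⊢
  have h3' := abs_le.1 (h3.trans h5)
  have h4' := abs_le.1 (h4.trans h6)
  constructor <;> linarith [h2.1, h2.2, h3'.1, h3'.2, h4'.1, h4'.2]

/-- degree zero is impossible -/
lemma m_pos {d : ℕ} {K : ℕ → ℕ} (Q : (n : ℕ) → Fin d → MvPolynomial (Fin (K n)) ℝ)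
    (hlaw : TendstoInLaw
      (fun n => Measure.map (fun x i => eval x (Q n i)) (gaussPi (Fin (K n))))
      (gaussPi (Fin d))) (i : Fin d) (h0 : ∀ n, (Q n i).totalDegree = 0) : False := by
  have hc : ∀ n, ∃ a : ℝ, Q n i = C a := fun n => ⟨_, totalDegree_eq_zero_iff_eq_C.1 (h0 n)⟩
  choose a ha using hc
  have key : ∀ t : ℝ, Tendsto (fun n => Real.cos (t * a n)) atTop (𝓝 (Real.exp (-(1/2) * t ^ 2))) := by
    intro t
    let f : BoundedContinuousFunction (Fin d → ℝ) ℝ := BoundedContinuousFunction.ofNormedAddCommGroup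
      (fun y => Real.cos (t * y i)) (by fun_prop) 1 (fun y => Real.abs_cos_le_one _)
    have hf : ∀ y, f y = Real.cos (t * y i) := fun y => rfl
    have h1 := hlaw f
    have e1 : ∫ x, f x ∂gaussPi (Fin d) = Real.exp (-(1/2) * t ^ 2) := by
      have := cos_gauss (σ := Fin d) 0 (Pi.single i t)
      simp only [Pi.single_apply, ite_mul, zero_mul, Finset.sum_ite_eq', Finset.mem_univ, if_true, zero_add, ite_pow, Real.cos_zero, one_mul] at this
      simp only [hf]
      rw [this]
      simp
    rw [e1] at h1
    refine h1.congr fun n => ?_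
    have hm : Measurable (fun (x : Fin (K n) → ℝ) i => eval x (Q n i)) :=
      measurable_pi_lambda _ fun i => measurable_eval _
    rw [integral_map hm.aemeasurable f.continuous.aestronglyMeasurable]
    simp [hf, ha]
  have k1 := key 1
  have k2 := key 2
  have k3 : Tendsto (fun n => Real.cos (2 * a n)) atTop (𝓝 (2 * (Real.exp (-(1/2) * 1 ^ 2))^2 - 1)) := by
    have := ((k1.pow 2).const_mul 2).sub_const 1
    refine this.congr fun n => ?_
    rw [one_mul, Real.cos_two_mul]
  have e := tendsto_nhds_unique k2 k3
  have e2 : (Real.exp (-(1/2) * 1 ^ 2))^2 = Real.exp (-1) := by rw [← Real.exp_nat_mul]; norm_num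
  have e3 : Real.exp (-(1/2) * 2 ^ 2) = Real.exp (-1) ^ 2 := by rw [← Real.exp_nat_mul]; norm_num
  rw [e2, e3] at e
  have : Real.exp (-1) < 1 := by rw [Real.exp_lt_one_iff]; norm_num
  nlinarith

end part11

section part12
variable {σ : Type} [Fintype σ]

lemma gE_gam_eig {a : ℝ} {p : MvPolynomial σ ℝ} (hp : Lop p = -(C a * p)) (r : MvPolynomial σ ℝ) :
    gE (gam r p) = a * gE (r * p) := by
  have h := gE_mul_Lop r p
  rw [hp] at h
  have e : r * -(C a * p) = -(C a * (r * p)) := by ring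
  rw [e, gE_neg, gE_smul] at h
  linarith

lemma gam_sq_le {a b : ℕ} {p q : MvPolynomial σ ℝ} (hp : Lop p = -(C (a:ℝ) * p)) (hq : Lop q = -(C (b:ℝ) * q))
    (hpd : p.totalDegree ≤ a) (hqd : q.totalDegree ≤ b) :
    gE (gam p q ^ 2) ≤ ((a + b : ℝ) / 2) * gE (p * q * gam p q) := by
  have h := (Tq_sq_le (D := a + b) (td_mul hpd hqd)).1
  rw [gam_eig hp hq]
  push_cast at h
  exact h

lemma diag_bound {a : ℕ} {p : MvPolynomial σ ℝ} (hp : Lop p = -(C (a:ℝ) * p)) (hpd : p.totalDegree ≤ a) :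
    gE ((gam p p - C (a:ℝ)) ^ 2) ≤ (a:ℝ)^2/3 * gE (p^2 * p^2) - 2 * a^2 * gE (p * p) + a ^ 2 := by
  have h1 := gam_sq_le hp hp hpd hpd
  have h2 := gE_gam_eig hp p
  have h3 := gE_gam_eig hp (p*(p*p))
  have e3 : gam (p*(p*p)) p = C 3 * (p * p * gam p p) := by
    rw [gam_mul_left, gam_mul_left, (map_ofNat C 3)]; ring
  have e3' : p*(p*p)*p = p^2 * p^2 := by ring
  rw [e3, gE_smul, e3'] at h3
  have e : (gam p p - C (a:ℝ))^2 = gam p p ^ 2 - C (2 * a:ℝ) * gam p p + C ((a:ℝ)^2) := by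
    rw [C_mul, (map_ofNat C 2), C_pow]; ring
  rw [e, gE_add, gE_sub, gE_smul, gE_C, h2]
  have h4 : gE (p * p * gam p p) = a / 3 * gE (p^2*p^2) := by linarith
  rw [h4] at h1
  nlinarith

lemma offdiag_bound {a b : ℕ} {p q : MvPolynomial σ ℝ} (hp : Lop p = -(C (a:ℝ) * p)) (hq : Lop q = -(C (b:ℝ) * q))
    (hpd : p.totalDegree ≤ a) (hqd : q.totalDegree ≤ b) :
    gE (gam p q ^ 2) ≤ ((a + b : ℝ) / 4) * (a * gE (p^2 * q^2) - a * gE (q * q)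
      + Real.sqrt (gE ((gam p p - C (a:ℝ))^2) * gE (q^2 * q^2))) := by
  have h1 := gam_sq_le hp hq hpd hqd
  have h3 := gE_gam_eig hp (p*(q*q))
  have e3 : gam (p*(q*q)) p = C 2 * (p * q * gam p q) + ((gam p p - C (a:ℝ)) * q^2 + C (a:ℝ) * (q * q)) := by
    rw [gam_mul_left, gam_mul_left, (map_ofNat C 2), gam_comm q p]; ring
  have e3' : p*(q*q)*p = p^2 * q^2 := by ring
  rw [e3, gE_add, gE_add, gE_smul, gE_smul, e3'] at h3
  have h4 := gE_CS (gam p p - C (a:ℝ)) (q^2)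
  have e4 : (q^2)^2 = q^2 * q^2 := by ring
  rw [e4] at h4
  have h5 := Real.abs_le_sqrt h4
  have h6 := neg_abs_le (gE ((gam p p - C (a:ℝ)) * q^2))
  refine h1.trans ?_
  have h7 : gE (p * q * gam p q) ≤ 1/2 * (a * gE (p^2 * q^2) - a * gE (q * q)
      + Real.sqrt (gE ((gam p p - C (a:ℝ))^2) * gE (q^2 * q^2))) := by linarith
  calc _ ≤ ((a + b : ℝ) / 2) * _ := mul_le_mul_of_nonneg_left h7 (by positivity)
    _ = _ := by ring

lemma gE_XXXX {d : ℕ} (i j : Fin d) : gE (X i ^ 2 * X j ^ 2 : MvPolynomial (Fin d) ℝ) = if i = j then 3 else 1 := by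
  have e : (X i ^ 2 * X j ^ 2 : MvPolynomial (Fin d) ℝ) = X i * (X i * (X j * X j)) := by ring
  rw [e, gE_ibp]
  by_cases h : i = j
  · subst h
    have : pderiv i (X i * (X i * X i) : MvPolynomial (Fin d) ℝ) = C 3 * (X i * X i) := by
      simp only [Derivation.leibniz, pderiv_X_self, smul_eq_mul, map_ofNat C 3]; ring
    rw [this, gE_smul, gE_XX]; simp
  · have : pderiv i (X i * (X j * X j) : MvPolynomial (Fin d) ℝ) = X j * X j := by
      simp only [Derivation.leibniz, pderiv_X_self, smul_eq_mul, pderiv_X_of_ne (Ne.symm h)]; ring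
    rw [this, gE_XX]; simp [h]

lemma pow_bounds (D : ℕ) : ∃ c : ℝ, 0 ≤ c ∧ ∀ (σ : Type) [Fintype σ] (p : MvPolynomial σ ℝ) (B : ℝ), p.totalDegree ≤ D →
    gE (p^2) ≤ B → gE (p^4) ≤ c * B^2 ∧ gE (p^8) ≤ c * B^4 := by
  obtain ⟨c1, h1, H1⟩ := hyp_pow D 1
  obtain ⟨c2, h2, H2⟩ := hyp_pow D 2
  refine ⟨c1 + c2, by positivity, fun σ _ p B hp hB => ?_⟩
  have k1 := H1 σ Unit (fun _ => p) (fun _ => hp)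
  have k2 := H2 σ Unit (fun _ => p) (fun _ => hp)
  simp only [Finset.univ_unique, Finset.sum_const, Finset.card_singleton, one_smul, ← pow_mul] at k1 k2
  norm_num at k1 k2
  have h0 := gE_sq_nonneg p
  constructor
  · refine k1.trans ?_
    have : gE (p^2)^2 ≤ B^2 := by gcongr
    have := mul_le_mul_of_nonneg_left this h1
    nlinarith [mul_nonneg h2 (sq_nonneg B)]
  · refine k2.trans ?_
    have : gE (p^2)^4 ≤ B^4 := by gcongr
    have := mul_le_mul_of_nonneg_left this h2
    nlinarith [mul_nonneg h1 (by positivity : 0 ≤ B^4)]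

lemma gam_conv {d : ℕ} {m : Fin d → ℕ} {K : ℕ → ℕ} (Q : (n : ℕ) → Fin d → MvPolynomial (Fin (K n)) ℝ)
    (hlaw : TendstoInLaw
      (fun n => Measure.map (fun x i => eval x (Q n i)) (gaussPi (Fin (K n))))
      (gaussPi (Fin d))) (B : ℝ) (heig : ∀ n i, Lop (Q n i) = -(C (m i : ℝ) * Q n i))
    (htd : ∀ n i, (Q n i).totalDegree ≤ m i) (hB : ∀ n i, gE (Q n i ^ 2) ≤ B) (τ : ℝ) (hτ : 0 < τ) :
    ∃ N, ∀ n ≥ N, ∀ i j, gE ((gam (Q n i) (Q n j) - C (if i = j then (m i : ℝ) else 0)) ^ 2) ≤ τ := by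
  obtain ⟨c, hc, H⟩ := pow_bounds (∑ i, m i)
  have hD : ∀ n i, (Q n i).totalDegree ≤ ∑ i, m i := fun n i =>
    (htd n i).trans (Finset.single_le_sum (f := m) (fun _ _ => Nat.zero_le _) (Finset.mem_univ i))
  have h4 : ∀ n i, gE (Q n i ^ 4) ≤ c * B^2 := fun n i => (H _ _ B (hD n i) (hB n i)).1
  have h8 : ∀ n i, gE (Q n i ^ 8) ≤ c * B^4 := fun n i => (H _ _ B (hD n i) (hB n i)).2
  have c2 : ∀ i j, Tendsto (fun n => gE (Q n i * Q n j)) atTop (𝓝 (if i = j then 1 else 0)) := by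
    intro i j
    have := mom_conv Q hlaw (X i * X j) (c * B^2) (fun n => by
      have h : gE ((aeval (Q n) (X i * X j : MvPolynomial (Fin d) ℝ))^2) ≤ gE (C (1/2:ℝ) * (Q n i^4 + Q n j^4)) := by
        refine gE_mono fun x => ?_
        simp only [map_mul, aeval_X, map_pow, map_add, eval_C]
        nlinarith [sq_nonneg (eval x (Q n i)^2 - eval x (Q n j)^2)]
      rw [gE_smul, gE_add] at h
      linarith [h4 n i, h4 n j])
    simp only [map_mul, aeval_X, gE_XX] at this
    exact this
  have c4 : ∀ i j, Tendsto (fun n => gE (Q n i^2 * Q n j^2)) atTop (𝓝 (if i = j then 3 else 1)) := by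
    intro i j
    have := mom_conv Q hlaw (X i^2 * X j^2) (c * B^4) (fun n => by
      have h : gE ((aeval (Q n) (X i^2 * X j^2 : MvPolynomial (Fin d) ℝ))^2) ≤ gE (C (1/2:ℝ) * (Q n i^8 + Q n j^8)) := by
        refine gE_mono fun x => ?_
        simp only [map_mul, aeval_X, map_pow, map_add, eval_C]
        nlinarith [sq_nonneg (eval x (Q n i)^4 - eval x (Q n j)^4)]
      rw [gE_smul, gE_add] at h
      linarith [h8 n i, h8 n j])
    simp only [map_mul, map_pow, aeval_X, gE_XXXX] at this
    exact this
  have dg : ∀ i, Tendsto (fun n => gE ((gam (Q n i) (Q n i) - C (m i : ℝ)) ^ 2)) atTop (𝓝 0) := by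
    intro i
    have t := (((c4 i i).const_mul ((m i:ℝ)^2/3)).sub ((c2 i i).const_mul (2 * (m i:ℝ)^2))).add_const ((m i:ℝ)^2)
    simp only [if_true] at t
    have e : (m i:ℝ)^2/3 * 3 - 2 * (m i:ℝ)^2 * 1 + (m i:ℝ)^2 = 0 := by ring
    rw [e] at t
    exact squeeze_zero (fun n => gE_sq_nonneg _) (fun n => diag_bound (heig n i) (htd n i)) t
  have od : ∀ i j, i ≠ j → Tendsto (fun n => gE (gam (Q n i) (Q n j) ^ 2)) atTop (𝓝 0) := by
    intro i j hij
    have t := ((((c4 i j).const_mul (m i:ℝ)).sub ((c2 j j).const_mul (m i:ℝ))).add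
      ((dg i).mul (c4 j j)).sqrt).const_mul (((m i:ℝ) + m j)/4)
    simp only [if_true, if_neg hij] at t
    have e : ((m i:ℝ) + m j)/4 * ((m i:ℝ) * 1 - (m i:ℝ) * 1 + Real.sqrt (0 * 3)) = 0 := by simp
    rw [e] at t
    exact squeeze_zero (fun n => gE_sq_nonneg _) (fun n => offdiag_bound (heig n i) (heig n j) (htd n i) (htd n j)) t
  have ev : ∀ᶠ n in atTop, ∀ i j, gE ((gam (Q n i) (Q n j) - C (if i = j then (m i : ℝ) else 0)) ^ 2) ≤ τ := by
    rw [eventually_all]; intro i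
    rw [eventually_all]; intro j
    by_cases h : i = j
    · subst h; simp only [if_true]; exact (dg i).eventually_le_const hτ
    · simp only [if_neg h, C_0, sub_zero]; exact (od i j h).eventually_le_const hτ
  exact eventually_atTop.1 ev

end part12

section part13
variable {σ : Type} [Fintype σ]

noncomputable def gc (d : ℕ) : ENNReal := ∫⁻ v : Fin d → ℝ, ENNReal.ofReal (Real.exp (-(1/2) * ∑ i, v i ^ 2))

lemma gc_ne_top (d : ℕ) : gc d ≠ ⊤ := by
  have h : Integrable (fun v : Fin d → ℝ => ∏ i, Real.exp (-(1/2) * v i ^ 2)) :=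
    Integrable.fintype_prod (f := fun _ (t:ℝ) => Real.exp (-(1/2) * t ^ 2)) (fun i => integrable_exp_neg_mul_sq (by norm_num))
  have e : (fun v : Fin d → ℝ => Real.exp (-(1/2) * ∑ i, v i ^ 2)) = (fun v : Fin d → ℝ => ∏ i, Real.exp (-(1/2) * v i ^ 2)) := by
    funext v; rw [← Real.exp_sum, Finset.mul_sum]
  rw [← e] at h
  exact (h.lintegral_lt_top).ne

lemma gc_ne_zero (d : ℕ) : gc d ≠ 0 := by
  unfold gc
  intro h
  rw [lintegral_eq_zero_iff (by fun_prop)] at h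
  have h2 : ∀ᵐ v : Fin d → ℝ, False := by
    filter_upwards [h] with v hv
    simp only [Pi.zero_apply, ENNReal.ofReal_eq_zero] at hv
    exact absurd hv (not_le.2 (Real.exp_pos _))
  rw [ae_iff] at h2
  simp at h2
  exact NeZero.ne (volume : Measure (Fin d → ℝ)) h2

lemma chg_var {d : ℕ} (M : Matrix (Fin d) (Fin d) ℝ) (hM : M.det ≠ 0) :
    ∫⁻ u : Fin d → ℝ, ENNReal.ofReal (Real.exp (-(1/2) * ∑ i, (M.mulVec u) i ^ 2))
      = ENNReal.ofReal |M.det⁻¹| * gc d := by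
  have h := Real.map_matrix_volume_pi_eq_smul_volume_pi hM
  have hm : Measurable (Matrix.toLin' M) := (LinearMap.continuous_of_finiteDimensional _).measurable
  have h2 : ∫⁻ v, ENNReal.ofReal (Real.exp (-(1/2) * ∑ i, v i ^ 2)) ∂(Measure.map (Matrix.toLin' M) volume)
    = ∫⁻ u : Fin d → ℝ, ENNReal.ofReal (Real.exp (-(1/2) * ∑ i, (M.mulVec u) i ^ 2)) := by
    rw [lintegral_map (by fun_prop) hm]
    rfl
  rw [← h2, h, lintegral_smul_measure]
  rfl

lemma det_posdef {d : ℕ} (A : Matrix (Fin d) (Fin d) ℝ) (hA : A.PosDef) :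
    gc d ^ 2 * (ENNReal.ofReal A.det)⁻¹ = (∫⁻ u : Fin d → ℝ, ENNReal.ofReal (Real.exp (-(1/2) * (u ⬝ᵥ A.mulVec u)))) ^ 2 := by
  open scoped MatrixOrder in
  obtain ⟨M, hM⟩ := CStarAlgebra.nonneg_iff_eq_star_mul_self.mp hA.posSemidef.nonneg
  have hM' : A = M.transpose * M := by rw [hM]; rfl
  have hdet : A.det = M.det ^ 2 := by rw [hM', Matrix.det_mul, Matrix.det_transpose]; ring
  have hpos := hA.det_pos
  have hM0 : M.det ≠ 0 := by intro h; rw [hdet, h] at hpos; simp at hpos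
  have e : ∀ u : Fin d → ℝ, u ⬝ᵥ A.mulVec u = ∑ i, (M.mulVec u) i ^ 2 := by
    intro u
    rw [hM', ← Matrix.mulVec_mulVec, Matrix.dotProduct_mulVec, Matrix.vecMul_transpose]
    simp [dotProduct, pow_two]
  simp only [e]
  rw [chg_var M hM0, mul_pow, ← ENNReal.ofReal_inv_of_pos hpos, ← ENNReal.ofReal_pow (abs_nonneg _), sq_abs, hdet, mul_comm, inv_pow]

lemma det_psd {d : ℕ} (A : Matrix (Fin d) (Fin d) ℝ) (hA : A.PosSemidef) :
    gc d ^ 2 * (ENNReal.ofReal A.det)⁻¹ ≤ (∫⁻ u : Fin d → ℝ, ENNReal.ofReal (Real.exp (-(1/2) * (u ⬝ᵥ A.mulVec u)))) ^ 2 := by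
  have hc : Continuous (fun ε : ℝ => (A + ε • (1 : Matrix (Fin d) (Fin d) ℝ)).det) := by
    apply Continuous.matrix_det; fun_prop
  have ht : Tendsto (fun ε : ℝ => gc d ^ 2 * (ENNReal.ofReal (A + ε • (1 : Matrix (Fin d) (Fin d) ℝ)).det)⁻¹) (𝓝[>] 0)
      (𝓝 (gc d ^ 2 * (ENNReal.ofReal A.det)⁻¹)) := by
    refine ENNReal.Tendsto.const_mul ?_ (Or.inr (ENNReal.pow_ne_top (gc_ne_top d)))
    rw [ENNReal.tendsto_inv_iff]
    refine ENNReal.tendsto_ofReal ?_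
    have := (hc.tendsto 0).mono_left (nhdsWithin_le_nhds (s := Set.Ioi 0))
    simpa using this
  refine le_of_tendsto ht ?_
  filter_upwards [self_mem_nhdsWithin] with ε hε
  have hε : 0 < ε := hε
  have hp : (A + ε • (1 : Matrix (Fin d) (Fin d) ℝ)).PosDef := by
    refine Matrix.PosDef.posSemidef_add hA ?_
    exact Matrix.PosDef.one.smul hε
  rw [det_posdef _ hp]
  refine pow_le_pow_left' (lintegral_mono fun u => ENNReal.ofReal_le_ofReal (Real.exp_le_exp.2 ?_)) 2
  have : 0 ≤ u ⬝ᵥ u := by simp only [dotProduct]; exact Finset.sum_nonneg fun i _ => mul_self_nonneg _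
  rw [Matrix.add_mulVec, dotProduct_add, Matrix.smul_mulVec, Matrix.one_mulVec, dotProduct_smul, smul_eq_mul]
  nlinarith

lemma det_mal {K d : ℕ} (F : Fin d → MvPolynomial (Fin K) ℝ) (x : Fin K → ℝ) :
    gc d ^ 2 * (ENNReal.ofReal (malMatrix F x).det)⁻¹ ≤
      (∫⁻ u : Fin d → ℝ, ENNReal.ofReal (Real.exp (-(1/2) * ∑ k, (∑ i, u i * eval x (pderiv k (F i)))^2))) ^ 2 := by
  let G : Matrix (Fin K) (Fin d) ℝ := Matrix.of fun k i => eval x (pderiv k (F i))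
  have hG : malMatrix F x = G.transpose * G := by
    ext i j; simp [malMatrix, G, Matrix.mul_apply]
  have hpsd : (malMatrix F x).PosSemidef := by
    rw [hG]; exact Matrix.posSemidef_conjTranspose_mul_self G
  refine (det_psd _ hpsd).trans (le_of_eq ?_)
  congr 1
  refine lintegral_congr fun u => ?_
  have e : u ⬝ᵥ (malMatrix F x).mulVec u = ∑ k, (∑ i, u i * eval x (pderiv k (F i)))^2 := by
    rw [hG, ← Matrix.mulVec_mulVec, Matrix.dotProduct_mulVec, Matrix.vecMul_transpose]
    simp only [dotProduct, G, Matrix.mulVec, Matrix.of_apply, pow_two, mul_comm]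
  rw [e]

end part13

section part14
variable {σ : Type} [Fintype σ]

noncomputable def ek {ι : Type} [Fintype ι] (F : ι → MvPolynomial σ ℝ) (x : σ → ℝ) (u : ι → ℝ) : ENNReal :=
  ENNReal.ofReal (Real.exp (-(1/2) * ∑ k, (∑ i, u i * eval x (pderiv k (F i)))^2))

lemma ek_measc {Ω : Type*} [MeasurableSpace Ω] {ι : Type} [Fintype ι] (F : ι → MvPolynomial σ ℝ) {f : Ω → σ → ℝ} {g : Ω → ι → ℝ}
    (hf : Measurable f) (hg : Measurable g) : Measurable (fun z => ek F (f z) (g z)) := by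
  unfold ek
  refine ENNReal.measurable_ofReal.comp (Real.measurable_exp.comp (Measurable.const_mul ?_ _))
  refine Finset.measurable_sum _ fun k _ => Measurable.pow_const (Finset.measurable_sum _ fun i _ => ?_) 2
  exact ((measurable_pi_apply i).comp hg).mul (measurable_evalc _ hf)

lemma ek_meas {ι : Type} [Fintype ι] (F : ι → MvPolynomial σ ℝ) :
    Measurable (fun z : (σ → ℝ) × (ι → ℝ) => ek F z.1 z.2) := ek_measc F measurable_fst measurable_snd

lemma ek_meas_r {ι : Type} [Fintype ι] (F : ι → MvPolynomial σ ℝ) (x : σ → ℝ) : Measurable (fun u : ι → ℝ => ek F x u) :=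
  ek_measc F (f := fun _ => x) (g := fun u => u) measurable_const measurable_id

lemma ek_meas_l {ι : Type} [Fintype ι] (F : ι → MvPolynomial σ ℝ) (u : ι → ℝ) : Measurable (fun x : σ → ℝ => ek F x u) :=
  ek_measc F (f := fun x => x) (g := fun _ => u) measurable_id measurable_const

lemma ek_le_one {ι : Type} [Fintype ι] (F : ι → MvPolynomial σ ℝ) (x : σ → ℝ) (u : ι → ℝ) : ek F x u ≤ 1 := by
  unfold ek
  rw [ENNReal.ofReal_le_one, Real.exp_le_one_iff]
  have : 0 ≤ ∑ k, (∑ i, u i * eval x (pderiv k (F i)))^2 := Finset.sum_nonneg fun _ _ => sq_nonneg _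
  linarith

lemma ek_int {ι : Type} [Fintype ι] (F : ι → MvPolynomial σ ℝ) (u : ι → ℝ) :
    ∫⁻ x, ek F x u ∂gaussPi σ = ENNReal.ofReal (phi F u) := by
  unfold phi ek
  rw [ofReal_integral_eq_lintegral_ofReal]
  · refine bddInt ?_ fun x => ?_
    · refine (Real.measurable_exp.comp (Measurable.const_mul ?_ _))
      refine Finset.measurable_sum _ fun k _ => Measurable.pow_const (Finset.measurable_sum _ fun i _ => ?_) 2
      exact measurable_const.mul (measurable_eval _)
    · rw [abs_of_pos (Real.exp_pos _), Real.exp_le_one_iff]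
      have : 0 ≤ ∑ k, (∑ i, u i * eval x (pderiv k (F i)))^2 := Finset.sum_nonneg fun _ _ => sq_nonneg _
      linarith
  · exact ae_of_all _ fun x => (Real.exp_pos _).le

/-- weight -/
noncomputable def wA (d : ℕ) (u : Fin d → ℝ) : ENNReal := ENNReal.ofReal ((1 + ‖u‖) ^ (d+1))

lemma wA_meas (d : ℕ) : Measurable (wA d) := by unfold wA; fun_prop

lemma one_le_wA (d : ℕ) (u : Fin d → ℝ) : 1 ≤ wA d u := by
  unfold wA
  rw [ENNReal.one_le_ofReal]
  exact one_le_pow₀ (by linarith [norm_nonneg u])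

lemma wA_inv_int (d : ℕ) : ∫⁻ u, (wA d u)⁻¹ ≠ ⊤ := by
  have h := finite_integral_one_add_norm (E := Fin d → ℝ) (μ := volume) (r := (d:ℝ) + 1) (by simp)
  refine ne_of_lt (lt_of_le_of_lt (le_of_eq ?_) h)
  refine lintegral_congr fun u => ?_
  unfold wA
  have h0 : 0 < 1 + ‖u‖ := by positivity
  rw [← ENNReal.ofReal_inv_of_pos (by positivity), Real.rpow_neg h0.le]
  norm_cast

lemma holder_w (d p : ℕ) (hp : 2 ≤ p) : ∃ W : ENNReal, W ≠ ⊤ ∧ ∀ e : (Fin d → ℝ) → ENNReal, Measurable e → (∀ u, e u ≤ 1) →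
    (∫⁻ u, e u) ^ p ≤ W * ∫⁻ u, wA d u ^ p * e u := by
  have hp1 : (1:ℝ) < p := by exact_mod_cast hp
  have hp0 : (p:ℝ) ≠ 0 := by positivity
  have hpq := Real.HolderConjugate.conjExponent hp1
  set q := Real.conjExponent p with hq
  have hq1 : 1 < q := hpq.symm.lt
  refine ⟨((∫⁻ u, ((wA d u)⁻¹) ^ q) ^ (1/q)) ^ p, ?_, fun e he he1 => ?_⟩
  · refine ENNReal.pow_ne_top (ENNReal.rpow_ne_top_of_nonneg (by positivity) ?_)
    refine ne_of_lt (lt_of_le_of_lt (lintegral_mono fun u => ?_) (lt_top_iff_ne_top.2 (wA_inv_int d)))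
    have : (wA d u)⁻¹ ≤ 1 := ENNReal.inv_le_one.2 (one_le_wA d u)
    calc (wA d u)⁻¹ ^ q ≤ (wA d u)⁻¹ ^ (1:ℝ) := ENNReal.rpow_le_rpow_of_exponent_ge this hq1.le
      _ = _ := ENNReal.rpow_one _
  · have h := ENNReal.lintegral_mul_le_Lp_mul_Lq volume hpq (f := fun u => wA d u * e u) (g := fun u => (wA d u)⁻¹)
      ((wA_meas d).mul he).aemeasurable (wA_meas d).inv.aemeasurable
    have e1 : ∀ u, ((fun u => wA d u * e u) * (fun u => (wA d u)⁻¹)) u = e u := by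
      intro u
      simp only [Pi.mul_apply]
      have h0 : wA d u ≠ 0 := (lt_of_lt_of_le one_pos (one_le_wA d u)).ne'
      have ht : wA d u ≠ ⊤ := ENNReal.ofReal_ne_top
      rw [mul_comm (wA d u), mul_assoc, ENNReal.mul_inv_cancel h0 ht, mul_one]
    simp only [e1] at h
    refine (pow_le_pow_left' h p).trans ?_
    rw [mul_pow, mul_comm]
    refine mul_le_mul_right ?_ _
    rw [← ENNReal.rpow_natCast (_ ^ _), ← ENNReal.rpow_mul, one_div, inv_mul_cancel₀ hp0, ENNReal.rpow_one]
    refine lintegral_mono fun u => ?_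
    rw [ENNReal.rpow_natCast, mul_pow]
    refine mul_le_mul_right ?_ _
    calc e u ^ p ≤ e u ^ 1 := pow_le_pow_right_of_le_one' (he1 u) (by omega)
      _ = e u := pow_one _

lemma poly_wt (d L : ℕ) (u : Fin d → ℝ) : (1 + ‖u‖) ^ L ≤ 4 ^ L * (1 + (∑ i, u i^2) ^ L) := by
  set s := ∑ i, u i ^ 2 with hs
  have hs0 : 0 ≤ s := Finset.sum_nonneg fun _ _ => sq_nonneg _
  have hn : ‖u‖ ≤ Real.sqrt s := by
    rw [pi_norm_le_iff_of_nonneg (Real.sqrt_nonneg _)]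
    intro i
    rw [Real.norm_eq_abs]
    refine Real.abs_le_sqrt ?_
    exact Finset.single_le_sum (f := fun i => u i ^2) (fun _ _ => sq_nonneg _) (Finset.mem_univ i)
  have hss := Real.sq_sqrt hs0
  have h1 : 1 + ‖u‖ ≤ 2 * (1 + s) := by nlinarith [sq_nonneg (Real.sqrt s - 1)]
  have h2 : (1 + ‖u‖)^L ≤ (2 * (1+s))^L := by gcongr
  refine h2.trans ?_
  rcases le_total s 1 with h | h
  · calc (2*(1+s))^L ≤ 4^L := by gcongr; linarith
      _ ≤ _ := by nlinarith [pow_nonneg hs0 L, mul_nonneg (by positivity : (0:ℝ) ≤ 4^L) (pow_nonneg hs0 L)]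
  · calc (2*(1+s))^L ≤ (4*s)^L := pow_le_pow_left₀ (by linarith) (by linarith) L
      _ = 4^L * s^L := mul_pow _ _ _
      _ ≤ _ := by nlinarith [(by positivity : (0:ℝ) < 4^L)]

lemma inv_le_aux {g a h : ENNReal} (hg0 : g ≠ 0) (hgt : g ≠ ⊤) (hh : g * a⁻¹ ≤ h) (q : ℕ) : (a ^ q)⁻¹ ≤ g⁻¹ ^ q * h ^ q := by
  rw [ENNReal.inv_pow, ← mul_pow]
  refine pow_le_pow_left' ?_ q
  calc a⁻¹ = g⁻¹ * (g * a⁻¹) := by rw [← mul_assoc, ENNReal.inv_mul_cancel hg0 hgt, one_mul]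
    _ ≤ _ := mul_le_mul_right hh _

lemma det_ek {K d : ℕ} (F : Fin d → MvPolynomial (Fin K) ℝ) (x : Fin K → ℝ) (q : ℕ) :
    (ENNReal.ofReal ((malMatrix F x).det) ^ q)⁻¹ ≤ ((gc d ^ 2)⁻¹) ^ q * (∫⁻ u, ek F x u) ^ (2 * q) := by
  rw [pow_mul]
  exact inv_le_aux (pow_ne_zero _ (gc_ne_zero d)) (ENNReal.pow_ne_top (gc_ne_top d)) (det_mal F x) q

lemma neg_mom (d q : ℕ) (hq : 1 ≤ q) : ∃ L : ℕ, ∀ C0 : ℝ, 0 ≤ C0 → ∃ C' : ℝ, 0 < C' ∧ ∀ (K : ℕ) (F : Fin d → MvPolynomial (Fin K) ℝ),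
    (∀ u, phi F u * (∑ i, u i^2)^L ≤ C0) →
    ∫⁻ x, (ENNReal.ofReal ((malMatrix F x).det) ^ q)⁻¹ ∂gaussPi (Fin K) ≤ ENNReal.ofReal C' := by
  obtain ⟨W, hW, H⟩ := holder_w d (2*q) (by omega)
  refine ⟨(d+1)*(2*q+1), fun C0 hC0 => ?_⟩
  set L := (d+1)*(2*q+1) with hL
  set T : ENNReal := ((gc d ^ 2)⁻¹) ^ q * (W * (ENNReal.ofReal (4^L * (1 + C0)) * ∫⁻ u, (wA d u)⁻¹)) with hT
  have hTt : T ≠ ⊤ := by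
    refine ENNReal.mul_ne_top (ENNReal.pow_ne_top (ENNReal.inv_ne_top.2 (pow_ne_zero _ (gc_ne_zero d)))) ?_
    exact ENNReal.mul_ne_top hW (ENNReal.mul_ne_top ENNReal.ofReal_ne_top (wA_inv_int d))
  refine ⟨T.toReal + 1, by positivity, fun K F hF => ?_⟩
  have hfin : T ≤ ENNReal.ofReal (T.toReal + 1) := by
    rw [← ENNReal.ofReal_toReal hTt]
    refine ENNReal.ofReal_le_ofReal ?_
    rw [ENNReal.toReal_ofReal ENNReal.toReal_nonneg]; linarith
  refine le_trans ?_ hfin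
  have h1 : ∀ x, (ENNReal.ofReal ((malMatrix F x).det) ^ q)⁻¹ ≤ ((gc d ^ 2)⁻¹) ^ q * (W * ∫⁻ u, wA d u ^ (2*q) * ek F x u) := by
    intro x
    refine (det_ek F x q).trans (mul_le_mul_right ?_ _)
    exact H (fun u => ek F x u) (ek_meas_r F x) (fun u => ek_le_one F x u)
  refine (lintegral_mono h1).trans ?_
  have hmz : Measurable (fun z : (Fin K → ℝ) × (Fin d → ℝ) => wA d z.2 ^ (2*q) * ek F z.1 z.2) :=
    (((wA_meas d).comp measurable_snd).pow_const _).mul (ek_meas F)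
  have hmi : Measurable (fun x => ∫⁻ u, wA d u ^ (2*q) * ek F x u) := Measurable.lintegral_prod_right' hmz
  rw [lintegral_const_mul _ (hmi.const_mul W), lintegral_const_mul _ hmi]
  refine mul_le_mul_right (mul_le_mul_right ?_ _) _
  rw [lintegral_lintegral_swap hmz.aemeasurable, ← lintegral_const_mul _ (f := fun u => (wA d u)⁻¹) (wA_meas d).inv]
  refine lintegral_mono fun u => ?_
  rw [lintegral_const_mul _ (ek_meas_l F u), ek_int]
  have h0 : wA d u ≠ 0 := (lt_of_lt_of_le one_pos (one_le_wA d u)).ne'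
  have ht : wA d u ≠ ⊤ := ENNReal.ofReal_ne_top
  rw [← div_eq_mul_inv, ENNReal.le_div_iff_mul_le (Or.inl h0) (Or.inl ht)]
  have e : wA d u ^ (2*q) * ENNReal.ofReal (phi F u) * wA d u = ENNReal.ofReal ((1+‖u‖)^L * phi F u) := by
    unfold wA
    have hn : 0 ≤ 1 + ‖u‖ := by positivity
    rw [← ENNReal.ofReal_pow (by positivity), ← ENNReal.ofReal_mul (by positivity), ← ENNReal.ofReal_mul (mul_nonneg (by positivity) (phi_nonneg F u))]
    congr 1
    have eL : (1 + ‖u‖) ^ L = ((1 + ‖u‖) ^ (d+1)) ^ (2*q+1) := by rw [hL, pow_mul]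
    rw [eL]
    generalize (1 + ‖u‖) ^ (d+1) = t
    rw [pow_succ]
    ring
  rw [e]
  refine ENNReal.ofReal_le_ofReal ?_
  have hphi := phi_nonneg F u
  calc (1+‖u‖)^L * phi F u ≤ 4 ^ L * (1 + (∑ i, u i^2) ^ L) * phi F u := mul_le_mul_of_nonneg_right (poly_wt d L u) hphi
    _ = 4^L * (phi F u + phi F u * (∑ i, u i^2)^L) := by ring
    _ ≤ 4^L * (1 + C0) := mul_le_mul_of_nonneg_left (add_le_add (phi_le_one F u) (hF u)) (by positivity)

end part14

/-- Vector version on sums of chaoses: if the vector of projections on the top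
chaoses is asymptotically standard Gaussian and the sequence is bounded in `L²`, then all negative
moments of the determinant of the Malliavin matrix are eventually bounded. -/
theorem negative_moments_sum_of_chaoses_vector (d : ℕ) (m : Fin d → ℕ) (K : ℕ → ℕ)
    (P Q R : (n : ℕ) → Fin d → MvPolynomial (Fin (K n)) ℝ)
    (hdeg : ∀ n i, (P n i).totalDegree ≤ m i)
    (hdecomp : ∀ n i, P n i = Q n i + R n i)
    (hQ : ∀ n i, Q n i ∈ chaos (K n) (m i))
    (hR : ∀ n i, (R n i).totalDegree ≤ m i - 1)
    (hlaw : TendstoInLaw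
      (fun n => Measure.map (fun x i => eval x (Q n i)) (gaussPi (Fin (K n))))
      (gaussPi (Fin d)))
    (hL2 : ∃ B : ℝ, ∀ n,
      ∫⁻ x, ENNReal.ofReal (∑ i, (eval x (P n i)) ^ 2) ∂gaussPi (Fin (K n))
        ≤ ENNReal.ofReal B) :
    ∀ q : ℕ, 1 ≤ q → ∃ (N : ℕ) (C : ℝ), 0 < C ∧ ∀ n ≥ N,
      ∫⁻ x, (ENNReal.ofReal ((malMatrix (P n) x).det) ^ q)⁻¹ ∂gaussPi (Fin (K n))
        ≤ ENNReal.ofReal C := by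
  intro q hq
  obtain ⟨B, hB⟩ := hL2
  set B' : ℝ := max B 0 + 1 with hB'
  have hB'0 : 0 < B' := by have := le_max_right B 0; linarith
  have hPsum : ∀ n, gE (∑ i, P n i ^ 2) ≤ B' := by
    intro n
    have h := hB n
    have e : (fun x => ENNReal.ofReal (∑ i, (eval x (P n i)) ^ 2)) = fun x => ENNReal.ofReal (eval x (∑ i, P n i ^ 2)) := by
      funext x; simp only [map_sum, map_pow]
    rw [e, ← ofReal_integral_eq_lintegral_ofReal (integrable_poly _)
      (ae_of_all _ fun x => by simp only [map_sum, map_pow, Pi.zero_apply]; exact Finset.sum_nonneg fun _ _ => sq_nonneg _)] at h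
    have h2 : ENNReal.ofReal (gE (∑ i, P n i ^ 2)) ≤ ENNReal.ofReal B' :=
      h.trans (ENNReal.ofReal_le_ofReal (by have := le_max_left B 0; linarith))
    exact (ENNReal.ofReal_le_ofReal_iff hB'0.le).1 h2
  have hP2 : ∀ n i, gE (P n i ^ 2) ≤ B' := by
    intro n i
    refine le_trans ?_ (hPsum n)
    rw [gE_sum]
    exact Finset.single_le_sum (f := fun i => gE (P n i ^ 2)) (fun _ _ => gE_sq_nonneg _) (Finset.mem_univ i)
  have hRQ : ∀ n i, P n i - Q n i = R n i := fun n i => by rw [hdecomp]; ring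
  have htdQ : ∀ n i, (Q n i).totalDegree ≤ m i := by
    intro n i
    have : Q n i = P n i - R n i := by rw [hdecomp]; ring
    rw [this]
    exact td_sub (hdeg n i) ((hR n i).trans (Nat.sub_le _ _))
  have hm : ∀ i, 1 ≤ m i := by
    intro i
    by_contra h
    have h0 : m i = 0 := by omega
    exact m_pos Q hlaw i fun n => by have := htdQ n i; omega
  have heig : ∀ n i, Lop (Q n i) = -(C (m i : ℝ) * Q n i) := fun n i => chaos_eig (hQ n i)
  have hQ2 : ∀ n i, gE (Q n i ^ 2) ≤ B' := by
    intro n i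
    refine le_trans ?_ (hP2 n i)
    have e : P n i ^ 2 = Q n i ^ 2 + (C 2 * (Q n i * R n i) + R n i ^ 2) := by
      rw [hdecomp, (map_ofNat C 2)]; ring
    rw [e, gE_add, gE_add, gE_smul, orth_lower (heig n i) (hm i) (hR n i)]
    have := gE_sq_nonneg (R n i)
    linarith
  obtain ⟨L, hL⟩ := neg_mom d q hq
  obtain ⟨τ, hτ, C0, hC0, hmain⟩ := mainProp (∑ i, m i) (Fin d) m (fun i j => if i = j then (m i : ℝ) else 0) B' L hm
    (fun i => Finset.single_le_sum (f := m) (fun _ _ => Nat.zero_le _) (Finset.mem_univ i))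
    (fun i => by have := hm i; simp; omega) (fun i j h => if_neg h) hB'0
  obtain ⟨C', hC', hfin⟩ := hL C0 hC0
  obtain ⟨N, hN⟩ := gam_conv Q hlaw B' heig htdQ hQ2 τ hτ
  refine ⟨N, C', hC', fun n hn => hfin (K n) (P n) (hmain (Fin (K n)) (P n) (Q n) ?_)⟩
  exact { eig := heig n, tdF := hdeg n, tdQ := htdQ n, tdR := fun i => by rw [hRQ]; exact hR n i, l2 := hP2 n, gm := hN n hn }
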